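/- Let K be a convex body in R^n with diameter D whose boundary ∂K has curvature bounded from above by C. Then the conductance φ of the stochastic billiard Markov chain on ∂K, defined as φ = inf over measurable A ⊆ ∂K with 0 < π(A) < 1/2 of (∫_A P_u(∂K∖A) dπ(u)) / π(A), where π is the uniform distribution on ∂K and P_u the one-step distribution from u, satisfies φ ≥ c/(C n D) for some universal constant c > 0. -/

import Mathlib

/-!
Write `r = 1 / C`. Up to normalisation, the one-step distribution from `u ∈ ∂K` is `bQ K ν o u`: a
direction `θ` is drawn with density proportional to `⟪ν u, θ⟫⁺` and the chain moves to the other end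
of the chord in that direction (`Body.sig_kernel_dm`). Surface measure is, up to a constant factor,
the measure `sig K ν o` (`Body.surf_eq`), for which integration along families of parallel or
concurrent lines is a plain change of variables in `ℝⁿ`.

*Overlap.* If `‖u - v‖ ≤ r / (4096 n)`, the kernel densities from `u` and `v` are within a factor
`12` of each other at all targets, except for directions of small total weight; so the one-step
distributions from `u` and `v` share a fixed proportion of their mass (`Body.overlap`). Given a
partition of `∂K` into `X` and `Y`, let `S ⊆ X` and `T ⊆ Y` be the points from which crossing to the
other part has probability below a fixed threshold. Then `S` and `T` are at distance at least
`δ = r / (4096 n)`.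

*Isoperimetry.* Let `F` be a smooth function with values in `[0, 1]`, equal to `1` on `S` and to `0`
on `T`, with gradient `O(1 / δ)`. For a fixed direction `θ`, pulling `F` back along the lines parallel
to `θ` gives a function on the convex cylinder over the shadow of `K`. The infinitesimal form of the
Brunn–Minkowski inequality (`poincare`) bounds the product of the shadows of `S` and `T` by a gradient
integral over the rest of the boundary (`Body.poin_dir`). In this way the exit points and the entry
points of the chords are treated separately. They are compared through the chords themselves: the
shadows of `T` in the directions `θ` and `-θ` differ by at most the flux of chords joining `T` to its
complement (`Body.shad_neg_le`). Averaging over `θ`, and using that any two unit normals share a fixed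
proportion of their projections (`dm_min`), one obtains `Body.isoperimetry`: the product of the areas
of `S` and `T` is controlled by `diam K / δ` times the area of the rest, plus the flux out of `T`.

*Conclusion.* By Markov's inequality the points of `X \ S` and `Y \ T` have area at most a constant
times the flux from `X` to `Y`, so that isoperimetry bounds the area of the smaller part by a
constant times `n * diam K / r` times that flux (`Body.flow`).
-/

open MeasureTheory Metric Filter
open scoped ENNReal NNReal InnerProductSpace Topology

noncomputable section

abbrev Euc (n : ℕ) := EuclideanSpace ℝ (Fin n)

def IsConvexBody {n : ℕ} (K : Set (Euc n)) : Prop :=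
  Convex ℝ K ∧ IsCompact K ∧ (interior K).Nonempty

/-- The curvature of `∂K` is bounded above by `C`: at every boundary point there is a
ball of radius `1/C` inside `K` touching the boundary at that point (so the tangent
planes of the ball and of `K` coincide there). -/
def CurvatureBoundedBy {n : ℕ} (K : Set (Euc n)) (C : ℝ) : Prop :=
  ∀ x ∈ frontier K, ∃ z, closedBall z (1 / C) ⊆ K ∧ dist x z = 1 / C

/-- `ν` is an inward unit normal field for `K` on `∂K`. -/
def IsInwardNormal {n : ℕ} (K : Set (Euc n)) (ν : Euc n → Euc n) : Prop :=
  ∀ x ∈ frontier K, ‖ν x‖ = 1 ∧ ∀ y ∈ K, 0 ≤ ⟪ν x, y - x⟫_ℝ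

/-- Surface measure on `∂K`: the `(n-1)`-dimensional Hausdorff measure restricted to `∂K`. -/
def surf {n : ℕ} (K : Set (Euc n)) : Measure (Euc n) :=
  (μH[(n - 1 : ℝ)]).restrict (frontier K)

/-- Uniform probability distribution on `∂K`. -/
def unifBoundary {n : ℕ} (K : Set (Euc n)) : Measure (Euc n) :=
  (surf K Set.univ)⁻¹ • surf K

/-- `cos φ_{xy}`: cosine of the (acute) angle between `y - x` and the inward normal at `x`. -/
def cosAngle {n : ℕ} (ν : Euc n → Euc n) (x y : Euc n) : ℝ :=
  ⟪ν x, y - x⟫_ℝ / ‖y - x‖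

/-- `P` is the one-step transition kernel of the stochastic billiard chain on `∂K`:
`P_u(A) = (π^{(n-1)/2} / (vol(∂K) Γ((n+1)/2))) ∫_A cos(φ_{uv}) cos(φ_{vu}) / ‖u-v‖^{n-1} dv`. -/
def IsBilliardKernel {n : ℕ} (K : Set (Euc n)) (ν : Euc n → Euc n)
    (P : Euc n → Measure (Euc n)) : Prop :=
  ∀ u ∈ frontier K, IsProbabilityMeasure (P u) ∧
    ∀ A : Set (Euc n), MeasurableSet A →
      P u A = ∫⁻ v in A, ENNReal.ofReal
        (Real.pi ^ (((n : ℝ) - 1) / 2) /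
            (Real.Gamma (((n : ℝ) + 1) / 2) * (surf K Set.univ).toReal) *
          (cosAngle ν u v * cosAngle ν v u / ‖u - v‖ ^ (n - 1))) ∂(surf K)

/-- Total variation distance between two measures: `sup_A |μ₁(A) - μ₂(A)|`. -/
def tvDist {n : ℕ} (μ₁ μ₂ : Measure (Euc n)) : ℝ :=
  ⨆ A : Set (Euc n), |(μ₁ A).toReal - (μ₂ A).toReal|

/-! ### The Brunn–Minkowski inequality -/

/-- One-dimensional Brunn–Minkowski: the translates `A + min B` and `max A + B` lie in the sumset and
have at most one point in common. -/
lemma bm_one_compact {A B : Set ℝ} (hA : IsCompact A) (hB : IsCompact B) (hA0 : A.Nonempty)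
    (hB0 : B.Nonempty) {S : Set ℝ} (hS : ∀ a ∈ A, ∀ b ∈ B, a + b ∈ S) :
    volume A + volume B ≤ volume S := by
  obtain ⟨m, hm, hm'⟩ := hA.exists_isGreatest hA0
  obtain ⟨k, hk, hk'⟩ := hB.exists_isLeast hB0
  have h1 : volume ((fun x => x + k) '' A) = volume A := by
    rw [Set.image_add_right, measure_preimage_add_right]
  have h2 : volume ((fun x => m + x) '' B) = volume B := by
    rw [Set.image_add_left, measure_preimage_add]
  have hInt : ((fun x => x + k) '' A) ∩ ((fun x => m + x) '' B) ⊆ {m + k} := by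
    rintro _ ⟨⟨a, ha, rfl⟩, ⟨b, hb, hab⟩⟩
    have := hm' ha
    have := hk' hb
    simp only [Set.mem_singleton_iff] at *
    linarith
  have hz : volume (((fun x => x + k) '' A) ∩ ((fun x => m + x) '' B)) = 0 :=
    measure_mono_null hInt (by simp)
  have hmeas : MeasurableSet ((fun x => m + x) '' B) :=
    (hB.image (by fun_prop)).measurableSet
  have := measure_union_add_inter (μ := volume) ((fun x => x + k) '' A) hmeas
  rw [hz, h1, h2, add_zero] at this
  rw [← this]
  apply measure_mono
  rintro _ (⟨a, ha, rfl⟩ | ⟨b, hb, rfl⟩)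
  · exact hS a ha k hk
  · exact hS m hm b hb

/-- One-dimensional Brunn–Minkowski for measurable sets, by inner regularity. -/
lemma bm_one {A B : Set ℝ} (hA : MeasurableSet A) (hB : MeasurableSet B) (hA0 : A.Nonempty)
    (hB0 : B.Nonempty) {S : Set ℝ} (hS : ∀ a ∈ A, ∀ b ∈ B, a + b ∈ S) :
    volume A + volume B ≤ volume S := by
  obtain ⟨a, ha⟩ := hA0
  obtain ⟨b, hb⟩ := hB0
  rw [hA.measure_eq_iSup_isCompact, hB.measure_eq_iSup_isCompact]
  simp only [iSup_and']
  refine ENNReal.biSup_add_biSup_le' ⟨∅, by simp⟩ ⟨∅, by simp⟩ ?_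
  rintro K₁ ⟨h1, h1'⟩ K₂ ⟨h2, h2'⟩
  refine le_trans (add_le_add (measure_mono (Set.subset_insert a K₁))
    (measure_mono (Set.subset_insert b K₂))) ?_
  refine bm_one_compact (h1'.insert a) (h2'.insert b) (Set.insert_nonempty _ _)
    (Set.insert_nonempty _ _) fun x hx y hy => hS x ?_ y ?_
  · exact Set.insert_subset ha h1 hx
  · exact Set.insert_subset hb h2 hy

open scoped Pointwise in
lemma bm_one_smul {A B : Set ℝ} (hA : MeasurableSet A) (hB : MeasurableSet B) (hA0 : A.Nonempty)
    (hB0 : B.Nonempty) {s : ℝ} (hs : 0 < s) (hs1 : s < 1) {S : Set ℝ}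
    (hS : ∀ a ∈ A, ∀ b ∈ B, (1 - s) * a + s * b ∈ S) :
    ENNReal.ofReal (1 - s) * volume A + ENNReal.ofReal s * volume B ≤ volume S := by
  have h1 : volume ((1 - s) • A) = ENNReal.ofReal (1 - s) * volume A := by
    rw [Measure.addHaar_smul]; simp [abs_of_pos (sub_pos.2 hs1)]
  have h2 : volume (s • B) = ENNReal.ofReal s * volume B := by
    rw [Measure.addHaar_smul]; simp [abs_of_pos hs]
  rw [← h1, ← h2]
  refine bm_one (hA.const_smul₀ _) (hB.const_smul₀ _) (hA0.smul_set) (hB0.smul_set) ?_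
  rintro _ ⟨a, ha, rfl⟩ _ ⟨b, hb, rfl⟩
  exact hS a ha b hb

/-- Additive form of Prékopa–Leindler on the line for functions with supremum `1`: integrate the
one-dimensional Brunn–Minkowski inequality over the superlevel sets. -/
lemma pl_normalised {f g h : ℝ → ℝ} (mf : Measurable f) (mg : Measurable g) (mh : Measurable h)
    (f0 : ∀ x, 0 ≤ f x) (g0 : ∀ x, 0 ≤ g x) (h0 : ∀ x, 0 ≤ h x)
    (f1 : ∀ x, f x ≤ 1) (g1 : ∀ x, g x ≤ 1) (f2 : ∀ l < 1, ∃ x, l < f x)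
    (g2 : ∀ l < 1, ∃ x, l < g x) {s : ℝ} (hs : 0 < s) (hs1 : s < 1)
    (H : ∀ x y l, 0 < l → l < f x → l < g y → l < h ((1 - s) * x + s * y)) :
    ENNReal.ofReal (1 - s) * (∫⁻ x, ENNReal.ofReal (f x)) +
      ENNReal.ofReal s * (∫⁻ x, ENNReal.ofReal (g x)) ≤ ∫⁻ x, ENNReal.ofReal (h x) := by
  rw [lintegral_eq_lintegral_meas_lt volume (ae_of_all _ f0) mf.aemeasurable,
    lintegral_eq_lintegral_meas_lt volume (ae_of_all _ g0) mg.aemeasurable,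
    lintegral_eq_lintegral_meas_lt volume (ae_of_all _ h0) mh.aemeasurable,
    ← lintegral_const_mul' _ _ ENNReal.ofReal_ne_top,
    ← lintegral_const_mul' _ _ ENNReal.ofReal_ne_top, ← lintegral_add_left']
  swap
  · refine (Antitone.measurable ?_).aemeasurable.const_mul _
    intro a b hab
    exact measure_mono fun x (hx : b < f x) => lt_of_le_of_lt hab hx
  refine setLIntegral_mono' measurableSet_Ioi fun l (hl : 0 < l) => ?_
  rcases lt_or_ge l 1 with h1 | h1
  · obtain ⟨x, hx⟩ := f2 l h1
    obtain ⟨y, hy⟩ := g2 l h1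
    exact bm_one_smul (measurableSet_lt measurable_const mf) (measurableSet_lt measurable_const mg)
      ⟨x, hx⟩ ⟨y, hy⟩ hs hs1 fun a ha b hb => H a b l hl ha hb
  · have e1 : {a | l < f a} = ∅ := by
      ext a; simpa using (f1 a).trans h1
    have e2 : {a | l < g a} = ∅ := by
      ext a; simpa using (g1 a).trans h1
    simp [e1, e2]

lemma ennreal_amgm (a b : ℝ≥0∞) {s : ℝ} (hs : 0 < s) (hs1 : s < 1) :
    a ^ (1 - s) * b ^ s ≤ ENNReal.ofReal (1 - s) * a + ENNReal.ofReal s * b := by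
  rcases eq_or_ne a ⊤ with rfl | ha
  · rw [ENNReal.mul_top (by simpa using hs1)]; simp
  rcases eq_or_ne b ⊤ with rfl | hb
  · rw [ENNReal.mul_top (by simpa using hs)]; simp
  lift a to ℝ≥0 using ha
  lift b to ℝ≥0 using hb
  rw [← ENNReal.ofReal_coe_nnreal (p := a), ← ENNReal.ofReal_coe_nnreal (p := b),
    ENNReal.ofReal_rpow_of_nonneg a.coe_nonneg (by linarith), ENNReal.ofReal_rpow_of_nonneg b.coe_nonneg hs.le,
    ← ENNReal.ofReal_mul (by positivity), ← ENNReal.ofReal_mul (by linarith),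
    ← ENNReal.ofReal_mul hs.le, ← ENNReal.ofReal_add (mul_nonneg (by linarith) a.coe_nonneg) (by positivity)]
  exact ENNReal.ofReal_le_ofReal
    (Real.geom_mean_le_arith_mean2_weighted (by linarith) hs.le a.coe_nonneg b.coe_nonneg (by ring))

/-- The Prékopa–Leindler inequality on the line for bounded functions. -/
lemma pl_one {f g h : ℝ → ℝ} (mf : Measurable f) (mg : Measurable g) (mh : Measurable h)
    (f0 : ∀ x, 0 ≤ f x) (g0 : ∀ x, 0 ≤ g x) (h0 : ∀ x, 0 ≤ h x)
    {R : ℝ} (f1 : ∀ x, f x ≤ R) (g1 : ∀ x, g x ≤ R) {s : ℝ} (hs : 0 < s) (hs1 : s < 1)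
    (H : ∀ x y, (f x) ^ (1 - s) * (g y) ^ s ≤ h ((1 - s) * x + s * y)) :
    (∫⁻ x, ENNReal.ofReal (f x)) ^ (1 - s) * (∫⁻ x, ENNReal.ofReal (g x)) ^ s ≤
      ∫⁻ x, ENNReal.ofReal (h x) := by
  set F := ⨆ x, f x
  set G := ⨆ x, g x
  have bf : BddAbove (Set.range f) := ⟨R, by rintro _ ⟨x, rfl⟩; exact f1 x⟩
  have bg : BddAbove (Set.range g) := ⟨R, by rintro _ ⟨x, rfl⟩; exact g1 x⟩
  have hfF : ∀ x, f x ≤ F := le_ciSup bf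
  have hgG : ∀ x, g x ≤ G := le_ciSup bg
  rcases (f0 0).trans (hfF 0) |>.eq_or_lt with hF | hF
  · have : ∀ x, f x = 0 := fun x => le_antisymm (hF ▸ hfF x) (f0 x)
    simp [this, ENNReal.zero_rpow_of_pos (sub_pos.2 hs1)]
  rcases (g0 0).trans (hgG 0) |>.eq_or_lt with hG | hG
  · have : ∀ x, g x = 0 := fun x => le_antisymm (hG ▸ hgG x) (g0 x)
    simp [this, ENNReal.zero_rpow_of_pos hs]
  have hs1' := sub_pos.2 hs1
  set c := F ^ (1 - s) * G ^ s
  have hc : 0 < c := by positivity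
  have key := pl_normalised (f := fun x => f x / F) (g := fun x => g x / G) (h := fun x => h x / c)
    (mf.div_const _) (mg.div_const _) (mh.div_const _) (fun x => div_nonneg (f0 x) hF.le)
    (fun x => div_nonneg (g0 x) hG.le) (fun x => div_nonneg (h0 x) hc.le)
    (fun x => (div_le_one hF).2 (hfF x)) (fun x => (div_le_one hG).2 (hgG x))
    (fun l hl => by
      obtain ⟨x, hx⟩ := exists_lt_of_lt_ciSup (show l * F < F by nlinarith)
      exact ⟨x, by rwa [lt_div_iff₀ hF]⟩)
    (fun l hl => by
      obtain ⟨x, hx⟩ := exists_lt_of_lt_ciSup (show l * G < G by nlinarith)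
      exact ⟨x, by rwa [lt_div_iff₀ hG]⟩) hs hs1
    (fun x y l hl hx hy => by
      have h1 : (l * F) ^ (1 - s) * (l * G) ^ s < (f x) ^ (1 - s) * (g y) ^ s := by
        rw [lt_div_iff₀ hF] at hx
        rw [lt_div_iff₀ hG] at hy
        exact mul_lt_mul'' (Real.rpow_lt_rpow (by positivity) hx hs1')
          (Real.rpow_lt_rpow (by positivity) hy hs) (by positivity) (by positivity)
      have h2 : (l * F) ^ (1 - s) * (l * G) ^ s = l * c := by
        rw [Real.mul_rpow hl.le hF.le, Real.mul_rpow hl.le hG.le]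
        have : l ^ (1 - s) * l ^ s = l := by
          rw [← Real.rpow_add hl]; simp
        calc _ = (l ^ (1 - s) * l ^ s) * c := by simp only [c]; ring
          _ = _ := by rw [this]
      rw [lt_div_iff₀ hc, ← h2]
      exact h1.trans_le (H x y))
  have key2 := (ennreal_amgm _ _ hs hs1).trans key
  have e : ∀ (φ : ℝ → ℝ) (a : ℝ), 0 < a → ∫⁻ x, ENNReal.ofReal (φ x) =
      ENNReal.ofReal a * ∫⁻ x, ENNReal.ofReal (φ x / a) := by
    intro φ a ha
    rw [← lintegral_const_mul' _ _ ENNReal.ofReal_ne_top]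
    congr 1; ext x
    rw [← ENNReal.ofReal_mul ha.le]; congr 1; field_simp
  rw [e f F hF, e g G hG, e h c hc, ENNReal.mul_rpow_of_nonneg _ _ hs1'.le,
    ENNReal.mul_rpow_of_nonneg _ _ hs.le]
  calc _ = (ENNReal.ofReal F ^ (1 - s) * ENNReal.ofReal G ^ s) *
      ((∫⁻ x, ENNReal.ofReal (f x / F)) ^ (1 - s) * (∫⁻ x, ENNReal.ofReal (g x / G)) ^ s) := by ring
    _ = ENNReal.ofReal c * _ := by
      rw [ENNReal.ofReal_rpow_of_nonneg hF.le hs1'.le, ENNReal.ofReal_rpow_of_nonneg hG.le hs.le,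
        ← ENNReal.ofReal_mul (by positivity)]
    _ ≤ _ := by gcongr

/-- Multiplicative Brunn–Minkowski, by induction on the dimension: `pl_one` is applied to the volumes
of the slices. -/
lemma bm_pi (n : ℕ) {A B S : Set (Fin n → ℝ)} (hA : MeasurableSet A) (hB : MeasurableSet B)
    (hS : MeasurableSet S) {R : ℝ} (bA : ∀ x ∈ A, ∀ i, |x i| ≤ R) (bB : ∀ x ∈ B, ∀ i, |x i| ≤ R)
    (bS : ∀ x ∈ S, ∀ i, |x i| ≤ R) {s : ℝ} (hs : 0 < s) (hs1 : s < 1)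
    (H : ∀ a ∈ A, ∀ b ∈ B, (1 - s) • a + s • b ∈ S) :
    volume A ^ (1 - s) * volume B ^ s ≤ volume S := by
  induction n with
  | zero =>
    have hs1' := sub_pos.2 hs1
    rcases A.eq_empty_or_nonempty with rfl | ⟨a, ha⟩
    · simp [hs1']
    rcases B.eq_empty_or_nonempty with rfl | ⟨b, hb⟩
    · simp [hs]
    have e : ∀ T : Set (Fin 0 → ℝ), ∀ x ∈ T, volume T = 1 := by
      intro T x hx
      have : T = Set.univ := by ext y; simp [Subsingleton.elim y x, hx]
      rw [this]; simp [volume_pi]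
    rw [e A a ha, e B b hb, e S _ (H a ha b hb)]; simp
  | succ n ih =>
    let e := MeasurableEquiv.piFinSuccAbove (fun _ : Fin (n + 1) => ℝ) 0
    have he : MeasurePreserving e.symm (volume.prod volume) volume :=
      (volume_preserving_piFinSuccAbove (fun _ : Fin (n + 1) => ℝ) 0).symm
    let sl : Set (Fin (n + 1) → ℝ) → ℝ → Set (Fin n → ℝ) := fun T t => {y | Fin.cons t y ∈ T}
    have hsl : ∀ T t, sl T t = Prod.mk t ⁻¹' (e.symm ⁻¹' T) := by
      intro T t; ext y
      simp [sl, e, Fin.insertNthEquiv]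
    have vol : ∀ T, MeasurableSet T → volume T = ∫⁻ t, volume (sl T t) := by
      intro T hT
      rw [← he.measure_preimage hT.nullMeasurableSet, Measure.prod_apply (e.symm.measurable hT)]
      simp only [hsl]
    have msl : ∀ T, MeasurableSet T → ∀ t, MeasurableSet (sl T t) := by
      intro T hT t
      rw [hsl]
      exact measurable_prodMk_left (e.symm.measurable hT)
    have mvol : ∀ T, MeasurableSet T → Measurable fun t => volume (sl T t) := by
      intro T hT
      simp only [hsl]
      exact measurable_measure_prodMk_left (e.symm.measurable hT)
    have hbox : volume (Set.Icc (fun _ : Fin n => -R) (fun _ => R)) < ⊤ := isCompact_Icc.measure_lt_top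
    have bsl : ∀ T : Set (Fin (n + 1) → ℝ), (∀ x ∈ T, ∀ i, |x i| ≤ R) → ∀ t, ∀ y ∈ sl T t, ∀ i, |y i| ≤ R := by
      intro T hT t y hy i
      simpa using hT _ hy i.succ
    have vsl : ∀ T : Set (Fin (n + 1) → ℝ), (∀ x ∈ T, ∀ i, |x i| ≤ R) → ∀ t,
        volume (sl T t) ≤ volume (Set.Icc (fun _ : Fin n => -R) (fun _ => R)) := by
      intro T hT t
      refine measure_mono fun y hy => ?_
      have := bsl T hT t y hy
      exact ⟨fun i => (abs_le.1 (this i)).1, fun i => (abs_le.1 (this i)).2⟩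
    have vol' : ∀ T, MeasurableSet T → (∀ x ∈ T, ∀ i, |x i| ≤ R) →
        volume T = ∫⁻ t, ENNReal.ofReal (volume (sl T t)).toReal := by
      intro T hT hb
      rw [vol T hT]
      congr 1; ext t
      rw [ENNReal.ofReal_toReal ((vsl T hb t).trans_lt hbox).ne]
    rw [vol' A hA bA, vol' B hB bB, vol' S hS bS]
    refine pl_one (mvol A hA).ennreal_toReal (mvol B hB).ennreal_toReal (mvol S hS).ennreal_toReal
      (fun _ => ENNReal.toReal_nonneg) (fun _ => ENNReal.toReal_nonneg)
      (fun _ => ENNReal.toReal_nonneg)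
      (R := (volume (Set.Icc (fun _ : Fin n => -R) (fun _ => R))).toReal)
      (fun t => ENNReal.toReal_mono hbox.ne (vsl A bA t))
      (fun t => ENNReal.toReal_mono hbox.ne (vsl B bB t)) hs hs1 fun x y => ?_
    have := ih (msl A hA x) (msl B hB y) (msl S hS ((1 - s) * x + s * y)) (bsl A bA x) (bsl B bB y)
      (bsl S bS _) (fun a ha b hb => by
        have h := H _ ha _ hb
        show Fin.cons _ _ ∈ S
        convert h using 1
        ext i
        refine Fin.cases ?_ (fun j => ?_) i <;> simp)
    rw [ENNReal.toReal_rpow, ENNReal.toReal_rpow, ← ENNReal.toReal_mul]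
    exact ENNReal.toReal_mono ((vsl S bS _).trans_lt hbox).ne this

/-- The multiplicative Brunn–Minkowski inequality. -/
lemma bm_euc {n : ℕ} {A B S : Set (EuclideanSpace ℝ (Fin n))} (hA : MeasurableSet A) (hB : MeasurableSet B)
    (hS : MeasurableSet S) (bA : Bornology.IsBounded A) (bB : Bornology.IsBounded B)
    (bS : Bornology.IsBounded S) {s : ℝ} (hs : 0 < s) (hs1 : s < 1)
    (H : ∀ a ∈ A, ∀ b ∈ B, (1 - s) • a + s • b ∈ S) :
    volume A ^ (1 - s) * volume B ^ s ≤ volume S := by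
  obtain ⟨R1, h1⟩ := bA.exists_norm_le
  obtain ⟨R2, h2⟩ := bB.exists_norm_le
  obtain ⟨R3, h3⟩ := bS.exists_norm_le
  let R := max R1 (max R2 R3)
  let e := (MeasurableEquiv.toLp 2 (Fin n → ℝ))
  have he : MeasurePreserving e volume volume := PiLp.volume_preserving_toLp (Fin n)
  have bd : ∀ (T : Set (EuclideanSpace ℝ (Fin n))) (r : ℝ), r ≤ R → (∀ x ∈ T, ‖x‖ ≤ r) →
      ∀ x ∈ e ⁻¹' T, ∀ i, |x i| ≤ R := by
    intro T r hr hT x hx i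
    have := hT _ hx
    have h4 := PiLp.norm_apply_le (p := 2) (e x) i
    exact (h4.trans this).trans hr
  rw [← he.measure_preimage hA.nullMeasurableSet, ← he.measure_preimage hB.nullMeasurableSet,
    ← he.measure_preimage hS.nullMeasurableSet]
  refine bm_pi n (e.measurable hA) (e.measurable hB) (e.measurable hS) (R := R)
    (bd A R1 (le_max_left _ _) h1) (bd B R2 ((le_max_left _ _).trans (le_max_right _ _)) h2)
    (bd S R3 ((le_max_right _ _).trans (le_max_right _ _)) h3) hs hs1 ?_
  intro a ha b hb
  exact H _ ha _ hb

/-! ### A Poincaré inequality on convex sets -/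

/-- The gain in Brunn–Minkowski, to first order in `s`, when a set of volume `u` is averaged with a set
of volume `V` containing it. -/
lemma rpow_gain {u V α β s : ℝ} (hα : 0 ≤ α) (hβ : 0 ≤ β) (hαu : α ≤ u) (hβu : β ≤ V - u)
    (hV : 0 < V) (hs : 0 < s) :
    u + s * (α * β / V) ≤ u ^ (1 - s) * V ^ s := by
  rcases (hα.trans hαu).eq_or_lt with h | h
  · have : α = 0 := le_antisymm (h ▸ hαu) hα
    subst h; subst this
    simp; positivity
  have h1 : u ^ (1 - s) * V ^ s = u * (V / u) ^ s := by
    rw [Real.rpow_sub h, Real.div_rpow hV.le h.le, Real.rpow_one]; ring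
  have h2 : 1 + s * (1 - u / V) ≤ (V / u) ^ s := by
    rw [Real.rpow_def_of_pos (by positivity)]
    have h3 := Real.add_one_le_exp (Real.log (V / u) * s)
    have h4 := Real.one_sub_inv_le_log_of_pos (show 0 < V / u by positivity)
    rw [inv_div] at h4
    nlinarith
  rw [h1]
  have h5 : α * β / V ≤ u * (V - u) / V := by gcongr
  calc _ ≤ u + s * (u * (V - u) / V) := by gcongr
    _ = u * (1 + s * (1 - u / V)) := by field_simp
    _ ≤ _ := by gcongr

/-- A Poincaré-type inequality on a bounded open convex set, in which the gradient only enters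
through its radial part `f'(z)(z - k)`, `k ∈ N`; it is the infinitesimal form of Brunn–Minkowski
applied to the superlevel sets of `f`. -/
lemma poincare {n : ℕ} {N : Set (Euc n)} (hN : IsOpen N) (hNc : Convex ℝ N)
    (hNb : Bornology.IsBounded N) {f : Euc n → ℝ} {L : ℝ} (hL : 0 ≤ L)
    (hf : ∀ x ∈ N, ∀ y ∈ N, |f x - f y| ≤ L * ‖x - y‖)
    (f0 : ∀ x ∈ N, 0 ≤ f x) (f1 : ∀ x ∈ N, f x ≤ 1) {f' : Euc n → Euc n →L[ℝ] ℝ}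
    (hf' : ∀ z ∈ N, HasFDerivAt f (f' z) z) {G : Euc n → ℝ}
    (hG : ∀ z ∈ N, ∀ k ∈ N, f' z (z - k) ≤ G z) :
    volume {z ∈ N | f z = 1} * volume {z ∈ N | f z = 0} ≤
      volume N * ∫⁻ z in N, ENNReal.ofReal (G z) := by
  set α := volume {z ∈ N | f z = 1} with hα
  set β := volume {z ∈ N | f z = 0} with hβ
  set V := volume N with hV
  have hVtop : V ≠ ⊤ := hNb.measure_lt_top.ne
  have hαV : α ≤ V := measure_mono fun z hz => hz.1
  have hβV : β ≤ V := measure_mono fun z hz => hz.1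
  have hαtop : α ≠ ⊤ := ne_top_of_le_ne_top hVtop hαV
  have hβtop : β ≠ ⊤ := ne_top_of_le_ne_top hVtop hβV
  rcases eq_or_ne V 0 with hV0 | hV0
  · rw [hV0] at hαV; simp [le_antisymm hαV bot_le]
  have hcont : ContinuousOn f N := fun z hz => (hf' z hz).continuousAt.continuousWithinAt
  obtain ⟨d, hd0, hd⟩ : ∃ d, 0 ≤ d ∧ ∀ x ∈ N, ∀ y ∈ N, ‖x - y‖ ≤ d :=
    ⟨diam N, diam_nonneg, fun x hx y hy => by rw [← dist_eq_norm]; exact dist_le_diam_of_mem hNb hx hy⟩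
  -- the region under the graph of `f`
  let Γ : Set (ℝ × Euc n) := {p | p.2 ∈ N ∧ p.1 < f p.2}
  have hΓ : IsOpen Γ := by
    have h1 : ContinuousOn (fun p : ℝ × Euc n => f p.2 - p.1) (Prod.snd ⁻¹' N) :=
      (hcont.comp continuousOn_snd (fun p hp => hp)).sub continuousOn_fst
    have := h1.isOpen_inter_preimage (hN.preimage continuous_snd) isOpen_Ioi (t := Set.Ioi 0)
    convert this using 1
    ext p; simp [Γ]
  -- the level `l` of `Ω s` is the average `(1 - s) {f > l} + s N`
  let Ω : ℝ → Set (ℝ × Euc n) := fun s =>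
    ⋃ k ∈ N, (fun p : ℝ × Euc n => (p.1, (1 - s)⁻¹ • (p.2 - s • k))) ⁻¹' Γ
  have hΩ : ∀ s, IsOpen (Ω s) := fun s =>
    isOpen_biUnion fun k _ => hΓ.preimage (by fun_prop)
  have hΩN : ∀ s, 0 < s → s < 1 → ∀ p ∈ Ω s, p.2 ∈ N := by
    intro s hs hs1 p hp
    simp only [Ω, Set.mem_iUnion] at hp
    obtain ⟨k, hk, hp⟩ := hp
    have := hNc hp.1 hk (sub_pos.2 hs1).le hs.le (by ring)
    have h0 : (1 - s) ≠ 0 := (sub_pos.2 hs1).ne'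
    simpa [smul_smul, h0] using this
  let a : ℝ → Euc n → ℝ≥0∞ := fun s z => (volume.restrict (Set.Ioo (0:ℝ) 1)) {l | (l, z) ∈ Ω s}
  let b : ℝ → ℝ → ℝ≥0∞ := fun s l => volume {z | (l, z) ∈ Ω s}
  have ham : ∀ s, Measurable (a s) := fun s => measurable_measure_prodMk_right (hΩ s).measurableSet
  have tonelli : ∀ s, 0 < s → s < 1 → ∫⁻ l in Set.Ioo (0:ℝ) 1, b s l = ∫⁻ z in N, a s z := by
    intro s hs hs1
    have h1 := Measure.prod_apply (μ := volume.restrict (Set.Ioo (0:ℝ) 1)) (ν := (volume : Measure (Euc n)))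
      (hΩ s).measurableSet
    have h2 := Measure.prod_apply_symm (μ := volume.restrict (Set.Ioo (0:ℝ) 1)) (ν := (volume : Measure (Euc n)))
      (hΩ s).measurableSet
    rw [h1] at h2
    refine h2.trans ?_
    rw [← lintegral_indicator hN.measurableSet]
    congr 1; ext z
    by_cases hz : z ∈ N
    · simp [hz, a]; rfl
    · rw [Set.indicator_of_notMem hz]
      have : (fun x => (x, z)) ⁻¹' Ω s = ∅ := by
        ext l; simp only [Set.mem_preimage, Set.mem_empty_iff_false, iff_false]
        exact fun h => hz (hΩN s hs hs1 _ h)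
      simp [this]
  let φ : Euc n → ℝ := N.indicator f
  have φm : Measurable φ := by
    classical
    have := (hcont.measurable_piecewise (continuousOn_const (c := (0:ℝ))) hN.measurableSet (s := N) (g := fun _ => 0))
    rwa [show (fun _ : Euc n => (0:ℝ)) = 0 from rfl, Set.piecewise_eq_indicator] at this
  let U : ℝ → ℝ≥0∞ := fun l => volume {z ∈ N | l < f z}
  have hU : ∫⁻ z in N, ENNReal.ofReal (φ z) = ∫⁻ l in Set.Ioo (0:ℝ) 1, U l := by
    have φ0 : ∀ z, 0 ≤ φ z := fun z => Set.indicator_nonneg (fun z hz => f0 z hz) z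
    rw [lintegral_eq_lintegral_meas_lt _ (ae_of_all _ φ0) φm.aemeasurable,
      ← lintegral_indicator measurableSet_Ioi, ← lintegral_indicator measurableSet_Ioo]
    refine lintegral_congr_ae ?_
    filter_upwards [measure_eq_zero_iff_ae_notMem.1 (Real.volume_singleton (a := 1))] with l hl1
    by_cases hl : 0 < l
    · have e : volume.restrict N {z | l < φ z} = U l := by
        rw [Measure.restrict_apply (measurableSet_lt measurable_const φm)]
        congr 1; ext z
        simp only [φ, Set.mem_inter_iff, Set.mem_ofPred_eq]
        constructor
        · rintro ⟨h, h'⟩; exact ⟨h', by simpa [h'] using h⟩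
        · rintro ⟨h, h'⟩; exact ⟨by simpa [h] using h', h⟩
      rw [Set.indicator_of_mem (Set.mem_Ioi.2 hl), e]
      by_cases h1 : l < 1
      · rw [Set.indicator_of_mem (Set.mem_Ioo.2 ⟨hl, h1⟩)]
      · rw [Set.indicator_of_notMem (fun h => h1 h.2)]
        have : {z ∈ N | l < f z} = ∅ := by
          ext z; simp only [Set.mem_ofPred_eq, Set.mem_empty_iff_false, iff_false]
          rintro ⟨hz, h⟩; have := f1 z hz; linarith
        simp [U, this]
    · rw [Set.indicator_of_notMem (s := Set.Ioi (0:ℝ)) (fun h => hl h), Set.indicator_of_notMem (fun h => hl h.1)]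
  have hUV : ∀ l, U l ≤ V := fun l => measure_mono fun z hz => hz.1
  have hgain : ∀ s, 0 < s → s < 1 → ∀ l ∈ Set.Ioo (0:ℝ) 1,
      U l + ENNReal.ofReal s * (α * β / V) ≤ b s l := by
    intro s hs hs1 l hl
    have hUm : MeasurableSet {z ∈ N | l < f z} := by
      have := hcont.isOpen_inter_preimage hN isOpen_Ioi (t := Set.Ioi l)
      exact this.measurableSet
    have hbm : MeasurableSet {z | (l, z) ∈ Ω s} :=
      (measurable_prodMk_left (x := l)) (hΩ s).measurableSet
    have key := bm_euc hUm hN.measurableSet hbm (hNb.subset fun z hz => hz.1) hNb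
      (hNb.subset fun z hz => hΩN s hs hs1 _ hz) hs hs1 (by
        intro x hx k hk
        simp only [Ω, Set.mem_iUnion, Set.mem_ofPred_eq]
        refine ⟨k, hk, ?_⟩
        have h0 : (1 - s) ≠ 0 := (sub_pos.2 hs1).ne'
        simpa [Γ, smul_smul, h0] using hx)
    refine le_trans ?_ key
    have hαU : α ≤ U l := measure_mono fun z hz => ⟨hz.1, by rw [hz.2]; exact hl.2⟩
    have hβU : U l + β ≤ V := by
      have hb : MeasurableSet {z ∈ N | f z = 0} := by
        have : {z ∈ N | f z = 0} = N ∩ φ ⁻¹' {0} := by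
          ext z; constructor
          · rintro ⟨h, h'⟩; exact ⟨h, by simp [φ, h, h']⟩
          · rintro ⟨h, h'⟩; exact ⟨h, by simpa [φ, h] using h'⟩
        rw [this]
        exact hN.measurableSet.inter (φm (measurableSet_singleton _))
      rw [hβ, ← measure_union _ hb]
      · exact measure_mono (Set.union_subset (fun z hz => hz.1) fun z hz => hz.1)
      · rw [Set.disjoint_left]; rintro z ⟨_, h1⟩ ⟨_, h2⟩; rw [h2] at h1; linarith [hl.1]
    change U l + _ ≤ U l ^ (1 - s) * V ^ s
    have hUtop : U l ≠ ⊤ := ne_top_of_le_ne_top hVtop (hUV l)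
    generalize U l = u at *
    rw [← ENNReal.ofReal_toReal hUtop, ← ENNReal.ofReal_toReal hVtop, ← ENNReal.ofReal_toReal hαtop,
      ← ENNReal.ofReal_toReal hβtop]
    have hVpos : 0 < V.toReal := ENNReal.toReal_pos hV0 hVtop
    rw [ENNReal.ofReal_rpow_of_nonneg ENNReal.toReal_nonneg (by linarith),
      ENNReal.ofReal_rpow_of_nonneg ENNReal.toReal_nonneg hs.le,
      ← ENNReal.ofReal_mul (by positivity), ← ENNReal.ofReal_mul (by positivity),
      ← ENNReal.ofReal_div_of_pos hVpos, ← ENNReal.ofReal_mul hs.le,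
      ← ENNReal.ofReal_add (by positivity) (by positivity)]
    refine ENNReal.ofReal_le_ofReal (rpow_gain (by positivity) (by positivity)
      (ENNReal.toReal_mono hUtop hαU) ?_ hVpos hs)
    have := ENNReal.toReal_mono hVtop hβU
    rw [ENNReal.toReal_add hUtop hβtop] at this
    linarith
  let e : ℝ → Euc n → ℝ≥0∞ := fun s z => (a s z - ENNReal.ofReal (φ z)) / ENNReal.ofReal s
  have hem : ∀ s, Measurable (e s) := fun s => ((ham s).sub φm.ennreal_ofReal).div_const _
  have hUtop : ∫⁻ l in Set.Ioo (0:ℝ) 1, U l ≠ ⊤ := by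
    refine ne_top_of_le_ne_top (b := ∫⁻ l in Set.Ioo (0:ℝ) 1, V) ?_ (lintegral_mono hUV)
    simp [hVtop]
  have hlow : ∀ s, 0 < s → s < 1 → α * β / V ≤ ∫⁻ z in N, e s z := by
    intro s hs hs1
    have hs0 : ENNReal.ofReal s ≠ 0 := by simpa using hs
    have h1 : (∫⁻ l in Set.Ioo (0:ℝ) 1, U l) + ENNReal.ofReal s * (α * β / V) ≤
        (∫⁻ l in Set.Ioo (0:ℝ) 1, U l) + ENNReal.ofReal s * ∫⁻ z in N, e s z := by
      calc _ = ∫⁻ l in Set.Ioo (0:ℝ) 1, (U l + ENNReal.ofReal s * (α * β / V)) := by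
            rw [lintegral_add_right _ measurable_const]; simp
        _ ≤ ∫⁻ l in Set.Ioo (0:ℝ) 1, b s l := setLIntegral_mono' measurableSet_Ioo (hgain s hs hs1)
        _ = ∫⁻ z in N, a s z := tonelli s hs hs1
        _ ≤ ∫⁻ z in N, (ENNReal.ofReal (φ z) + ENNReal.ofReal s * e s z) := by
            refine lintegral_mono fun z => ?_
            simp only [e]
            rw [ENNReal.mul_div_cancel hs0 ENNReal.ofReal_ne_top]
            exact le_add_tsub
        _ = _ := by
            rw [lintegral_add_left φm.ennreal_ofReal, hU, lintegral_const_mul _ (hem s)]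
    have h2 := (ENNReal.add_le_add_iff_left hUtop).1 h1
    exact (ENNReal.mul_le_mul_iff_right hs0 ENNReal.ofReal_ne_top).1 h2
  -- a bound for `e s z` from a bound for the increments of `f`
  have hebound : ∀ s, 0 < s → s < 1 → ∀ z ∈ N, ∀ m : ℝ, 0 ≤ m →
      (∀ k ∈ N, (1 - s)⁻¹ • (z - s • k) ∈ N → f ((1 - s)⁻¹ • (z - s • k)) ≤ f z + s * m) →
      e s z ≤ ENNReal.ofReal m := by
    intro s hs hs1 z hz m hm h
    have hs0 : ENNReal.ofReal s ≠ 0 := by simpa using hs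
    refine ENNReal.div_le_of_le_mul ?_
    rw [tsub_le_iff_left, mul_comm, ← ENNReal.ofReal_mul hs.le]
    have hφ : φ z = f z := Set.indicator_of_mem hz f
    rw [hφ, ← ENNReal.ofReal_add (f0 z hz) (by positivity)]
    calc a s z ≤ volume (Set.Ioo 0 (f z + s * m)) := by
          simp only [a]
          rw [Measure.restrict_apply' measurableSet_Ioo]
          refine measure_mono ?_
          rintro l ⟨hl, hl0, hl1⟩
          simp only [Ω, Set.mem_iUnion, Set.mem_ofPred_eq] at hl
          obtain ⟨k, hk, hp1, hp2⟩ := hl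
          exact ⟨hl0, hp2.trans_le (h k hk hp1)⟩
      _ = _ := by simp
  have hxz : ∀ s : ℝ, s < 1 → ∀ z k : Euc n,
      (1 - s)⁻¹ • (z - s • k) - z = (s / (1 - s)) • (z - k) := by
    intro s hs1 z k
    have h0 : (1 - s) ≠ 0 := (sub_pos.2 hs1).ne'
    have : z = (1 - s)⁻¹ • ((1 - s) • z) := by simp [smul_smul, h0]
    nth_rewrite 2 [this]
    rw [← smul_sub, div_eq_inv_mul, mul_smul]
    congr 1; module
  let sq : ℕ → ℝ := fun j => 1 / ((j : ℝ) + 2)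
  have hsq0 : ∀ j, 0 < sq j := fun j => by positivity
  have hsq1 : ∀ j, sq j ≤ 1 / 2 := fun j => by
    simp only [sq]; gcongr; linarith [Nat.cast_nonneg (α := ℝ) j]
  have hsq1' : ∀ j, sq j < 1 := fun j => (hsq1 j).trans_lt (by norm_num)
  have hsqlim : Tendsto sq atTop (𝓝 0) := by
    have := tendsto_one_div_add_atTop_nhds_zero_nat (𝕜 := ℝ)
    have h2 := (tendsto_add_atTop_iff_nat (f := fun n : ℕ => 1 / ((n : ℝ) + 1)) 1).2 this
    refine h2.congr fun j => ?_
    simp only [sq]; push_cast; ring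
  have hdiv : ∀ j, sq j / (1 - sq j) ≤ 2 * sq j := fun j => by
    have := hsq1 j
    rw [div_le_iff₀ (by linarith)]; nlinarith [hsq0 j]
  have hlim : ∀ z ∈ N, limsup (fun j => e (sq j) z) atTop ≤ ENNReal.ofReal (G z) := by
    intro z hz
    have hGz : 0 ≤ G z := by simpa using hG z hz z hz
    refine ENNReal.le_of_forall_pos_le_add fun ε hε _ => ?_
    rw [← ENNReal.ofReal_coe_nnreal, ← ENNReal.ofReal_add hGz ε.coe_nonneg]
    refine limsup_le_of_le (by isBoundedDefault) ?_
    have hε' : (0:ℝ) < ε / (2 * (d + 1)) := by positivity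
    have hder := (hf' z hz).isLittleO.def hε'
    rw [Metric.eventually_nhds_iff_ball] at hder
    obtain ⟨ρ, hρ, hder⟩ := hder
    have h1 : ∀ᶠ j in atTop, 2 * sq j * (d + 1) < ρ := by
      have : Tendsto (fun j => 2 * sq j * (d + 1)) atTop (𝓝 0) := by
        simpa using (hsqlim.const_mul 2).mul_const (d + 1)
      exact this.eventually (gt_mem_nhds hρ)
    have h2 : ∀ᶠ j in atTop, (G z + ε / 2) / (1 - sq j) < G z + ε := by
      have : Tendsto (fun j => (G z + ε / 2) / (1 - sq j)) atTop (𝓝 ((G z + ε / 2) / (1 - 0))) :=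
        tendsto_const_nhds.div (tendsto_const_nhds.sub hsqlim) (by norm_num)
      refine this.eventually (gt_mem_nhds ?_)
      have : (0:ℝ) < ε := hε
      simp; linarith
    filter_upwards [h1, h2] with j hj1 hj2
    refine hebound _ (hsq0 j) (hsq1' j) z hz _ (by positivity) fun k hk hx => ?_
    set x := (1 - sq j)⁻¹ • (z - sq j • k) with hxdef
    have hxz' := hxz (sq j) (hsq1' j) z k
    have hpos : 0 < 1 - sq j := sub_pos.2 (hsq1' j)
    have hnorm : ‖x - z‖ ≤ sq j / (1 - sq j) * d := by
      rw [hxz', norm_smul, Real.norm_of_nonneg (by have := hsq0 j; positivity)]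
      gcongr
      exact hd z hz k hk
    have hball : x ∈ ball z ρ := by
      rw [mem_ball, dist_eq_norm]
      refine lt_of_le_of_lt (hnorm.trans ?_) hj1
      have := hdiv j
      have := hsq0 j
      nlinarith
    have h3 := (abs_le.1 (hder x hball)).2
    rw [hxz', map_smul, ← hxz'] at h3
    have h4 := hG z hz k hk
    have h5 : f x - f z ≤ sq j / (1 - sq j) * G z + ε / (2 * (d + 1)) * (sq j / (1 - sq j) * d) := by
      have h6 : ε / (2 * (d + 1)) * ‖x - z‖ ≤ ε / (2 * (d + 1)) * (sq j / (1 - sq j) * d) := by gcongr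
      have h7 : sq j / (1 - sq j) * (f' z) (z - k) ≤ sq j / (1 - sq j) * G z :=
        mul_le_mul_of_nonneg_left h4 (div_nonneg (hsq0 j).le hpos.le)
      simp only [smul_eq_mul] at h3
      linarith
    have h8 : ε / (2 * (d + 1)) * (sq j / (1 - sq j) * d) ≤ sq j / (1 - sq j) * (ε / 2) := by
      have : ε / (2 * (d + 1)) * d ≤ ε / 2 := by
        rw [div_mul_eq_mul_div, div_le_div_iff₀ (by positivity) (by positivity)]
        have : (0:ℝ) < ε := hε
        nlinarith
      calc _ = sq j / (1 - sq j) * (ε / (2 * (d + 1)) * d) := by ring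
        _ ≤ _ := mul_le_mul_of_nonneg_left this (div_nonneg (hsq0 j).le hpos.le)
    have h9 : sq j / (1 - sq j) * (G z + ε / 2) ≤ sq j * (G z + ε) := by
      rw [div_mul_eq_mul_div, mul_div_assoc]
      exact mul_le_mul_of_nonneg_left hj2.le (hsq0 j).le
    linarith
  have hfinal : α * β / V ≤ ∫⁻ z in N, ENNReal.ofReal (G z) := by
    have h1 : α * β / V ≤ limsup (fun j => ∫⁻ z in N, e (sq j) z) atTop := by
      rw [← limsup_const (f := atTop (α := ℕ)) (α * β / V)]
      exact limsup_le_limsup (Eventually.of_forall fun j => hlow _ (hsq0 j) (hsq1' j))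
    refine h1.trans ((limsup_lintegral_le (fun _ => ENNReal.ofReal (2 * L * d))
      (fun j => hem _) (fun j => ?_) ?_).trans ?_)
    · refine (ae_restrict_iff' hN.measurableSet).2 (ae_of_all _ fun z hz => ?_)
      refine hebound _ (hsq0 j) (hsq1' j) z hz _ (by positivity) fun k hk hx => ?_
      have h3 := (abs_le.1 (hf _ hx z hz)).2
      rw [hxz _ (hsq1' j), norm_smul, Real.norm_of_nonneg (div_nonneg (hsq0 j).le (sub_pos.2 (hsq1' j)).le)] at h3
      have h4 : sq j / (1 - sq j) * ‖z - k‖ ≤ (2 * sq j) * d :=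
        mul_le_mul (hdiv j) (hd z hz k hk) (norm_nonneg _) (by have := hsq0 j; positivity)
      nlinarith [mul_le_mul_of_nonneg_left h4 hL]
    · simp [ENNReal.mul_eq_top, hVtop, hV.symm]
    · exact setLIntegral_mono' hN.measurableSet hlim
  rwa [ENNReal.div_le_iff' hV0 hVtop] at hfinal

/-! ### Convex bodies with inner tangent balls and the exit map -/

/-- A convex body with an inward unit normal field and a touching inner ball of radius `r` centred
at `x + r ν(x)` for every boundary point `x`. -/
structure Body {n : ℕ} (K : Set (Euc n)) (ν : Euc n → Euc n) (r : ℝ) : Prop where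
  cvx : Convex ℝ K
  cpt : IsCompact K
  int_ne : (interior K).Nonempty
  rpos : 0 < r
  norm_normal : ∀ x ∈ frontier K, ‖ν x‖ = 1
  supp : ∀ x ∈ frontier K, ∀ y ∈ K, 0 ≤ ⟪ν x, y - x⟫_ℝ
  ball_sub : ∀ x ∈ frontier K, closedBall (x + r • ν x) r ⊆ K

lemma Body.of_hyp {n : ℕ} {K : Set (Euc n)} {ν : Euc n → Euc n} {C : ℝ} (hK : IsConvexBody K)
    (hC : 0 < C) (hcurv : CurvatureBoundedBy K C) (hν : IsInwardNormal K ν) : Body K ν (1 / C) := by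
  refine ⟨hK.1, hK.2.1, hK.2.2, by positivity, fun x hx => (hν x hx).1, fun x hx => (hν x hx).2,
    fun x hx => ?_⟩
  obtain ⟨z, hz, hd⟩ := hcurv x hx
  obtain ⟨h1, h2⟩ := hν x hx
  set r := 1 / C
  have hr : 0 < r := by positivity
  have hmem : z - r • ν x ∈ closedBall z r := by
    simp [norm_smul, h1, abs_of_pos hr]
  have h3 := h2 _ (hz hmem)
  have e : z - r • ν x - x = (z - x) - r • ν x := by abel
  rw [e, inner_sub_right, inner_smul_right, real_inner_self_eq_norm_sq, h1] at h3
  have h4 : ‖z - x‖ = r := by rw [← hd, dist_eq_norm, norm_sub_rev]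
  have h5 : ‖(z - x) - r • ν x‖ ^ 2 ≤ 0 := by
    rw [norm_sub_sq_real, norm_smul, h1, h4, inner_smul_right, real_inner_comm, Real.norm_of_nonneg hr.le]
    nlinarith
  have h6 : (z - x) - r • ν x = 0 := by
    rw [← norm_eq_zero]; exact pow_eq_zero_iff two_ne_zero |>.1 (le_antisymm h5 (by positivity))
  have : z = x + r • ν x := by rw [sub_eq_zero] at h6; rw [← h6]; abel
  rwa [← this]

/-- A quadratic error bound gives differentiability. -/
lemma hasFDerivAt_of_quadratic {E F : Type*} [NormedAddCommGroup E] [NormedSpace ℝ E]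
    [NormedAddCommGroup F] [NormedSpace ℝ F] {f : E → F} {T : E →L[ℝ] F} {z : E} (c : ℝ)
    (h : ∀ᶠ y in 𝓝 z, ‖f y - f z - T (y - z)‖ ≤ c * ‖y - z‖ ^ 2) : HasFDerivAt f T z := by
  rw [hasFDerivAt_iff_isLittleO]
  have h1 : (fun y => f y - f z - T (y - z)) =O[𝓝 z] fun y => ‖y - z‖ ^ 2 :=
    Asymptotics.IsBigO.of_bound c (h.mono fun y hy => by simpa using hy)
  have h2 : (fun y => ‖y - z‖ ^ 2) =o[𝓝 z] fun y => y - z := by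
    have h3 := (Asymptotics.isLittleO_norm_pow_id (E' := E) one_lt_two)
    exact h3.comp_tendsto (by simpa using (continuous_id.sub continuous_const).tendsto z (f := fun y => y - z))
  exact h1.trans_isLittleO h2

/-- The last point of `K` on the line `z + ℝ θ`. -/
def ext {n : ℕ} (K : Set (Euc n)) (θ z : Euc n) : Euc n :=
  z + (sSup {s : ℝ | z + s • θ ∈ K}) • θ

namespace Body
variable {n : ℕ} {K : Set (Euc n)} {ν : Euc n → Euc n} {r : ℝ}

lemma frontier_sub (B : Body K ν r) : frontier K ⊆ K := B.cpt.isClosed.frontier_subset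

/-- The centre of a ball of radius `ρ` in `K` lies at height at least `ρ` above every tangent plane. -/
lemma clear (B : Body K ν r) {x p : Euc n} {ρ : ℝ} (hx : x ∈ frontier K) (hρ : 0 ≤ ρ)
    (h : closedBall p ρ ⊆ K) : ρ ≤ ⟪ν x, p - x⟫_ℝ := by
  have hmem : p - ρ • ν x ∈ closedBall p ρ := by
    simp [norm_smul, B.norm_normal x hx, abs_of_nonneg hρ]
  have h3 := B.supp x hx _ (h hmem)
  have e : p - ρ • ν x - x = (p - x) - ρ • ν x := by abel
  rw [e, inner_sub_right, inner_smul_right, real_inner_self_eq_norm_sq, B.norm_normal x hx] at h3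
  linarith

lemma inner_pos (B : Body K ν r) {x p : Euc n} (hx : x ∈ frontier K) (hp : p ∈ interior K) :
    0 < ⟪ν x, p - x⟫_ℝ := by
  obtain ⟨ρ, hρ, h⟩ := Metric.isOpen_iff.1 isOpen_interior p hp
  have := B.clear hx (half_pos hρ).le ((closedBall_subset_ball (half_lt_self hρ)).trans (h.trans interior_subset))
  linarith

lemma ball_int (B : Body K ν r) {x : Euc n} (hx : x ∈ frontier K) :
    ball (x + r • ν x) r ⊆ interior K :=
  interior_maximal (ball_subset_closedBall.trans (B.ball_sub x hx)) isOpen_ball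

/-- Points outside the interior of `K` lie outside the inner ball at `x`. -/
lemma sq_bound (B : Body K ν r) {x y : Euc n} (hx : x ∈ frontier K) (hy : y ∉ interior K) :
    2 * r * ⟪ν x, y - x⟫_ℝ ≤ ‖y - x‖ ^ 2 := by
  have h1 : y ∉ ball (x + r • ν x) r := fun h => hy (B.ball_int hx h)
  rw [mem_ball, dist_eq_norm, not_lt] at h1
  have e : y - (x + r • ν x) = (y - x) - r • ν x := by abel
  have hr := B.rpos
  have h2 : r ^ 2 ≤ ‖(y - x) - r • ν x‖ ^ 2 := by rw [e] at h1; gcongr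
  rw [norm_sub_sq_real, norm_smul, B.norm_normal x hx, inner_smul_right, real_inner_comm,
    Real.norm_of_nonneg hr.le] at h2
  nlinarith

/-- The inner ball at `y` lies above the tangent plane at `x`. -/
lemma normal_defect (B : Body K ν r) {x y : Euc n} (hx : x ∈ frontier K) (hy : y ∈ frontier K) :
    r * (1 - ⟪ν x, ν y⟫_ℝ) ≤ ⟪ν x, y - x⟫_ℝ := by
  have h := B.clear hx B.rpos.le (B.ball_sub y hy)
  have e : y + r • ν y - x = (y - x) + r • ν y := by abel
  rw [e, inner_add_right, inner_smul_right] at h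
  linarith

/-- The inner ball condition makes the normal `1 / r`-Lipschitz. -/
lemma normal_lip (B : Body K ν r) {x y : Euc n} (hx : x ∈ frontier K) (hy : y ∈ frontier K) :
    ‖ν x - ν y‖ ≤ ‖x - y‖ / r := by
  have h1 := B.normal_defect hx hy
  have h2 := B.sq_bound hx hy.2
  have hr := B.rpos
  rw [norm_sub_rev y x] at h2
  refine abs_le_of_sq_le_sq' ?_ (by positivity) |>.2
  rw [norm_sub_sq_real, B.norm_normal x hx, B.norm_normal y hy, div_pow, le_div_iff₀ (by positivity)]
  nlinarith

lemma enter (B : Body K ν r) {x d : Euc n} {ε : ℝ} (hx : x ∈ frontier K) (hε : 0 < ε)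
    (h : ε * ‖d‖ ^ 2 < 2 * r * ⟪ν x, d⟫_ℝ) : x + ε • d ∈ interior K := by
  by_contra hc
  have h1 := B.sq_bound hx hc
  simp only [add_sub_cancel_left, inner_smul_right, norm_smul, Real.norm_of_nonneg hε.le] at h1
  nlinarith

lemma exists_enter (B : Body K ν r) {x d : Euc n} (hx : x ∈ frontier K) (h : 0 < ⟪ν x, d⟫_ℝ) :
    ∃ ε : ℝ, 0 < ε ∧ x + ε • d ∈ interior K := by
  have hr := B.rpos
  refine ⟨r * ⟪ν x, d⟫_ℝ / (‖d‖ ^ 2 + 1), by positivity, B.enter hx (by positivity) ?_⟩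
  have hp : 0 < r * ⟪ν x, d⟫_ℝ := by positivity
  rw [div_mul_eq_mul_div, div_lt_iff₀ (by positivity)]
  nlinarith [sq_nonneg ‖d‖]

lemma ext_spec (B : Body K ν r) {θ z : Euc n} (hθ : θ ≠ 0) (h : ∃ s : ℝ, z + s • θ ∈ K) :
    z + (sSup {s : ℝ | z + s • θ ∈ K}) • θ ∈ K ∧
      ∀ s : ℝ, z + s • θ ∈ K → s ≤ sSup {s : ℝ | z + s • θ ∈ K} := by
  have hcl : IsClosed {s : ℝ | z + s • θ ∈ K} :=
    B.cpt.isClosed.preimage (f := fun s : ℝ => z + s • θ) (by fun_prop)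
  obtain ⟨R, hR⟩ := B.cpt.isBounded.exists_norm_le
  have hθ' : 0 < ‖θ‖ := norm_pos_iff.2 hθ
  have hbd : BddAbove {s : ℝ | z + s • θ ∈ K} := by
    refine ⟨(R + ‖z‖) / ‖θ‖, fun s hs => ?_⟩
    rw [le_div_iff₀ hθ']
    have h1 := hR _ hs
    have h2 : ‖s • θ‖ ≤ ‖z + s • θ‖ + ‖z‖ := by
      have := norm_sub_le (z + s • θ) z
      simpa using this
    rw [norm_smul] at h2
    nlinarith [le_abs_self s, Real.norm_eq_abs s]
  exact ⟨hcl.csSup_mem h hbd, fun s hs => le_csSup hbd hs⟩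

lemma ext_unique (B : Body K ν r) {θ z : Euc n} {s : ℝ} (hθ : θ ≠ 0) (h : z + s • θ ∈ K)
    (h' : ∀ s', s < s' → z + s' • θ ∉ K) : ext K θ z = z + s • θ := by
  obtain ⟨h1, h2⟩ := B.ext_spec hθ ⟨s, h⟩
  have : sSup {s : ℝ | z + s • θ ∈ K} = s :=
    le_antisymm (not_lt.1 fun hl => h' _ hl h1) (h2 s h)
  rw [ext, this]

lemma ext_eq (B : Body K ν r) {θ z w : Euc n} {s : ℝ} (hw : w ∈ frontier K) (h : ⟪ν w, θ⟫_ℝ < 0)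
    (hws : w = z + s • θ) : ext K θ z = w := by
  have hθ : θ ≠ 0 := by rintro rfl; simp at h
  rw [B.ext_unique hθ (hws ▸ B.frontier_sub hw), hws]
  intro s' hs' hmem
  have h1 := B.supp w hw _ hmem
  have e : z + s' • θ - w = (s' - s) • θ := by rw [hws]; module
  rw [e, inner_smul_right] at h1
  nlinarith

lemma ext_mem (B : Body K ν r) {θ z : Euc n} (hθ : θ ≠ 0) (h : ∃ s : ℝ, z + s • θ ∈ K) :
    ext K θ z ∈ frontier K := by
  obtain ⟨h1, h2⟩ := B.ext_spec hθ h
  refine ⟨subset_closure h1, fun hInt => ?_⟩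
  have hc : Tendsto (fun s : ℝ => z + s • θ) (𝓝 (sSup {s : ℝ | z + s • θ ∈ K})) (𝓝 (ext K θ z)) :=
    (by fun_prop : Continuous fun s : ℝ => z + s • θ).tendsto _
  have h3 := hc.eventually (isOpen_interior.mem_nhds hInt)
  obtain ⟨δ, hδ, h4⟩ := Metric.eventually_nhds_iff_ball.1 h3
  set S := sSup {s : ℝ | z + s • θ ∈ K}
  have := h2 (S + δ / 2) (interior_subset (h4 _ (by simp [abs_of_pos hδ, hδ])))
  linarith

/-- On lines meeting the interior the exit is transversal. -/
lemma ext_int (B : Body K ν r) {θ z : Euc n} {s : ℝ} (hθ : θ ≠ 0) (h : z + s • θ ∈ interior K) :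
    ∃ H : ℝ, s < H ∧ ext K θ z = z + H • θ ∧ ext K θ z ∈ frontier K ∧
      ⟪ν (ext K θ z), θ⟫_ℝ < 0 := by
  have hK : ∃ s : ℝ, z + s • θ ∈ K := ⟨s, interior_subset h⟩
  have h1 := B.ext_mem hθ hK
  obtain ⟨h2, h3⟩ := B.ext_spec hθ hK
  have h4 := h3 s (interior_subset h)
  have h5 := B.inner_pos h1 h
  have e : z + s • θ - ext K θ z = (s - sSup {s : ℝ | z + s • θ ∈ K}) • θ := by
    rw [ext]; module
  rw [e, inner_smul_right] at h5
  have h6 : s < sSup {s : ℝ | z + s • θ ∈ K} := by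
    rcases h4.eq_or_lt with h | h
    · rw [← h] at h5; simp at h5
    · exact h
  exact ⟨_, h6, rfl, h1, by nlinarith⟩

lemma ext_bdry (B : Body K ν r) {u d : Euc n} (hu : u ∈ frontier K) (h : 0 < ⟪ν u, d⟫_ℝ) :
    ∃ H : ℝ, 0 < H ∧ ext K d u = u + H • d ∧ ext K d u ∈ frontier K ∧
      ⟪ν (ext K d u), d⟫_ℝ < 0 := by
  obtain ⟨ε, hε, h1⟩ := B.exists_enter hu h
  have hd : d ≠ 0 := by rintro rfl; simp at h
  obtain ⟨H, h2, h3⟩ := B.ext_int hd h1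
  exact ⟨H, hε.trans h2, h3⟩

lemma dist_le (B : Body K ν r) {x y : Euc n} (hx : x ∈ K) (hy : y ∈ K) : ‖x - y‖ ≤ diam K := by
  rw [← dist_eq_norm]; exact dist_le_diam_of_mem B.cpt.isBounded hx hy

lemma cvx_int (B : Body K ν r) : Convex ℝ (interior K) := B.cvx.interior

end Body

/-- The points of the slab `0 < ⟪θ, z⟫ < ‖θ‖²` whose line in direction `θ` meets `O`. -/
def cyl {n : ℕ} (O : Set (Euc n)) (θ : Euc n) : Set (Euc n) :=
  {z | (0 < ⟪θ, z⟫_ℝ ∧ ⟪θ, z⟫_ℝ < ‖θ‖ ^ 2) ∧ ∃ s : ℝ, z + s • θ ∈ O}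

/-- The centres of closed balls contained in `K` of some radius larger than `ρ`. -/
def core {n : ℕ} (K : Set (Euc n)) (ρ : ℝ) : Set (Euc n) :=
  {p | ∃ ρ' > ρ, closedBall p ρ' ⊆ K}

section Cyl
variable {n : ℕ} {K : Set (Euc n)} {ν : Euc n → Euc n} {r : ℝ}

lemma cyl_open {O : Set (Euc n)} (hO : IsOpen O) (θ : Euc n) : IsOpen (cyl O θ) := by
  have h1 : IsOpen {z : Euc n | 0 < ⟪θ, z⟫_ℝ ∧ ⟪θ, z⟫_ℝ < ‖θ‖ ^ 2} :=
    IsOpen.and (isOpen_lt (by fun_prop) (by fun_prop)) (isOpen_lt (by fun_prop) (by fun_prop))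
  have h2 : IsOpen {z : Euc n | ∃ s : ℝ, z + s • θ ∈ O} := by
    have : {z : Euc n | ∃ s : ℝ, z + s • θ ∈ O} = ⋃ s : ℝ, (fun z => z + s • θ) ⁻¹' O := by
      ext z; simp
    rw [this]
    exact isOpen_iUnion fun s => hO.preimage (by fun_prop)
  exact h1.inter h2

lemma cyl_convex {O : Set (Euc n)} (hO : Convex ℝ O) (θ : Euc n) : Convex ℝ (cyl O θ) := by
  rintro x ⟨⟨hx1, hx2⟩, s, hs⟩ y ⟨⟨hy1, hy2⟩, t, ht⟩ a b ha hb hab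
  refine ⟨?_, a * s + b * t, ?_⟩
  · rw [inner_add_right, inner_smul_right, inner_smul_right]
    obtain rfl : b = 1 - a := by linarith
    rcases ha.eq_or_lt with rfl | ha'
    · simp; exact ⟨hy1, hy2⟩
    · constructor <;> nlinarith
  · have := hO hs ht ha hb hab
    convert this using 1
    module

lemma cyl_bounded {O : Set (Euc n)} (hO : Bornology.IsBounded O) {θ : Euc n} (hθ : θ ≠ 0) :
    Bornology.IsBounded (cyl O θ) := by
  obtain ⟨R, hR⟩ := hO.exists_norm_le
  have hθ' : 0 < ‖θ‖ := norm_pos_iff.2 hθ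
  refine isBounded_iff_forall_norm_le.2 ⟨R + (‖θ‖ + R), fun z ⟨⟨h1, h2⟩, s, hs⟩ => ?_⟩
  have h3 := hR _ hs
  have h4 : |s| * ‖θ‖ ≤ ‖θ‖ + R := by
    have h5 : ⟪θ, z + s • θ⟫_ℝ = ⟪θ, z⟫_ℝ + s * ‖θ‖ ^ 2 := by
      rw [inner_add_right, inner_smul_right, real_inner_self_eq_norm_sq]
    have h6 : |⟪θ, z + s • θ⟫_ℝ| ≤ ‖θ‖ * R :=
      (abs_real_inner_le_norm _ _).trans (by gcongr)
    have h7 : |s| * ‖θ‖ ^ 2 ≤ ‖θ‖ ^ 2 + ‖θ‖ * R := by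
      rw [← abs_of_nonneg (sq_nonneg ‖θ‖), ← abs_mul, abs_of_nonneg (sq_nonneg ‖θ‖)]
      have : s * ‖θ‖ ^ 2 = ⟪θ, z + s • θ⟫_ℝ - ⟪θ, z⟫_ℝ := by linarith
      rw [this]
      refine (abs_sub _ _).trans ?_
      rw [abs_of_pos h1]; linarith
    by_contra hc
    push Not at hc
    nlinarith
  calc ‖z‖ = ‖(z + s • θ) - s • θ‖ := by congr 1; abel
    _ ≤ ‖z + s • θ‖ + ‖s • θ‖ := norm_sub_le _ _
    _ ≤ _ := by rw [norm_smul, Real.norm_eq_abs]; linarith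

lemma core_open (ρ : ℝ) : IsOpen (core K ρ) := by
  rw [Metric.isOpen_iff]
  rintro p ⟨ρ', h1, h2⟩
  refine ⟨(ρ' - ρ) / 2, by linarith, fun q hq => ⟨ρ' - (ρ' - ρ) / 2, by linarith, ?_⟩⟩
  refine (closedBall_subset_closedBall' ?_).trans h2
  rw [mem_ball] at hq; linarith

lemma core_convex (hK : Convex ℝ K) (ρ : ℝ) : Convex ℝ (core K ρ) := by
  have key : ∀ ρ' : ℝ, Convex ℝ {p | closedBall p ρ' ⊆ K} := by
    intro ρ' x hx y hy a b ha hb hab q hq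
    have e : q = a • (x + (q - (a • x + b • y))) + b • (y + (q - (a • x + b • y))) := by
      have : q - (a • x + b • y) = (a + b) • (q - (a • x + b • y)) := by rw [hab, one_smul]
      have h2 : a • (x + (q - (a • x + b • y))) + b • (y + (q - (a • x + b • y))) =
        (a • x + b • y) + (a + b) • (q - (a • x + b • y)) := by module
      rw [h2, hab, one_smul]; abel
    rw [e]
    rw [mem_closedBall, dist_eq_norm] at hq
    exact hK (hx (by simpa using hq)) (hy (by simpa using hq)) ha hb hab
  rintro x ⟨ρ1, h1, h1'⟩ y ⟨ρ2, h2, h2'⟩ a b ha hb hab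
  refine ⟨min ρ1 ρ2, lt_min h1 h2, key _ ?_ ?_ ha hb hab⟩
  · exact (closedBall_subset_closedBall (min_le_left _ _)).trans h1'
  · exact (closedBall_subset_closedBall (min_le_right _ _)).trans h2'

lemma core_sub_int {ρ : ℝ} (hρ : 0 ≤ ρ) : core K ρ ⊆ interior K := by
  rintro p ⟨ρ', h1, h2⟩
  exact interior_maximal (ball_subset_closedBall.trans h2) isOpen_ball (mem_ball_self (hρ.trans_lt h1))

lemma core_anti {ρ ρ' : ℝ} (h : ρ ≤ ρ') : core K ρ' ⊆ core K ρ :=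
  fun _ ⟨t, h1, h2⟩ => ⟨t, h.trans_lt h1, h2⟩

lemma mem_core_of_int {p : Euc n} (hp : p ∈ interior K) : ∃ ρ > 0, p ∈ core K ρ := by
  obtain ⟨ρ, hρ, h⟩ := Metric.isOpen_iff.1 isOpen_interior p hp
  refine ⟨ρ / 4, by linarith, ρ / 2, by linarith, ?_⟩
  exact (closedBall_subset_ball (half_lt_self hρ)).trans (h.trans interior_subset)

lemma cyl_mono {O O' : Set (Euc n)} (h : O ⊆ O') (θ : Euc n) : cyl O θ ⊆ cyl O' θ :=
  fun _ ⟨h1, s, hs⟩ => ⟨h1, s, h hs⟩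

end Cyl

namespace Body
variable {n : ℕ} {K : Set (Euc n)} {ν : Euc n → Euc n} {r : ℝ}

lemma diam_pos (B : Body K ν r) {θ : Euc n} (hθ : θ ≠ 0) : 0 < diam K := by
  obtain ⟨p, hp⟩ := B.int_ne
  have hp' : p + (0:ℝ) • θ ∈ interior K := by simpa using hp
  obtain ⟨H, h1, h2, h3, h4⟩ := B.ext_int hθ hp'
  have := B.dist_le (B.frontier_sub h3) (interior_subset hp)
  rw [h2, add_sub_cancel_left, norm_smul] at this
  have : 0 < ‖H‖ * ‖θ‖ := mul_pos (norm_pos_iff.2 h1.ne') (norm_pos_iff.2 hθ)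
  linarith

/-- Uniform transversality over the core. -/
lemma ext_core (B : Body K ν r) {θ z : Euc n} {s ρ : ℝ} (hρ : 0 ≤ ρ) (hθ : θ ≠ 0)
    (h : z + s • θ ∈ core K ρ) : ρ * ‖θ‖ ≤ diam K * (-⟪ν (ext K θ z), θ⟫_ℝ) := by
  obtain ⟨H, h1, h2, h3, h4⟩ := B.ext_int hθ (core_sub_int hρ h)
  obtain ⟨ρ', hρ', hb⟩ := h
  have h5 := B.clear h3 (hρ.trans hρ'.le) hb
  have e : z + s • θ - ext K θ z = (s - H) • θ := by rw [h2]; module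
  rw [e, inner_smul_right] at h5
  have h6 := B.dist_le (B.frontier_sub h3) (hb (mem_closedBall_self (hρ.trans hρ'.le)))
  have e' : ext K θ z - (z + s • θ) = (H - s) • θ := by rw [h2]; module
  rw [e', norm_smul, Real.norm_of_nonneg (by linarith)] at h6
  have hθ' : 0 < ‖θ‖ := norm_pos_iff.2 hθ
  have h7 : ρ * ‖θ‖ ≤ ((H - s) * ‖θ‖) * (-⟪ν (ext K θ z), θ⟫_ℝ) := by nlinarith
  nlinarith

/-- Since lines through the core leave `K` transversally, the exit map is Lipschitz over it. -/
lemma ext_lip (B : Body K ν r) {θ z z' : Euc n} {s s' ρ : ℝ} (hρ : 0 < ρ) (hθ : θ ≠ 0)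
    (h : z + s • θ ∈ core K ρ) (h' : z' + s' • θ ∈ core K ρ) :
    ‖ext K θ z' - ext K θ z‖ ≤ (1 + diam K / ρ) * ‖z' - z‖ := by
  have key : ∀ {z z' : Euc n} {s s' : ℝ} (h : z + s • θ ∈ core K ρ) (h' : z' + s' • θ ∈ core K ρ)
      {H H' : ℝ} (hH : ext K θ z = z + H • θ) (hH' : ext K θ z' = z' + H' • θ),
      (H' - H) * ‖θ‖ ≤ diam K / ρ * ‖z' - z‖ := by
    intro z z' s s' h h' H H' hH hH'
    obtain ⟨-, -, -, h3, h4⟩ := B.ext_int hθ (core_sub_int hρ.le h)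
    obtain ⟨-, -, -, h3', -⟩ := B.ext_int hθ (core_sub_int hρ.le h')
    have h5 := B.supp _ h3 _ (B.frontier_sub h3')
    have e : ext K θ z' - ext K θ z = (z' - z) + (H' - H) • θ := by rw [hH, hH']; module
    rw [e, inner_add_right, inner_smul_right] at h5
    have h6 := B.ext_core hρ.le hθ h
    have h7 : ⟪ν (ext K θ z), z' - z⟫_ℝ ≤ ‖z' - z‖ := by
      refine (real_inner_le_norm _ _).trans ?_
      rw [B.norm_normal _ h3, one_mul]
    set c := -⟪ν (ext K θ z), θ⟫_ℝ
    have hc : 0 < c := by simp only [c]; linarith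
    have h8 : (H' - H) * c ≤ ‖z' - z‖ := by simp only [c]; linarith
    rw [div_mul_eq_mul_div, le_div_iff₀ hρ]
    rcases le_or_gt (H' - H) 0 with hs | hs
    · have : (H' - H) * ‖θ‖ * ρ ≤ 0 := by
        have : 0 ≤ ‖θ‖ * ρ := by positivity
        nlinarith
      have : 0 ≤ diam K * ‖z' - z‖ := mul_nonneg diam_nonneg (norm_nonneg _)
      linarith
    · have h9 : (H' - H) * (ρ * ‖θ‖) ≤ (H' - H) * (diam K * c) := by gcongr
      have h10 : diam K * ((H' - H) * c) ≤ diam K * ‖z' - z‖ :=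
        mul_le_mul_of_nonneg_left h8 diam_nonneg
      nlinarith
  obtain ⟨H, -, hH, -, -⟩ := B.ext_int hθ (core_sub_int hρ.le h)
  obtain ⟨H', -, hH', -, -⟩ := B.ext_int hθ (core_sub_int hρ.le h')
  have k1 := key h h' hH hH'
  have k2 := key h' h hH' hH
  rw [norm_sub_rev] at k2
  have e : ext K θ z' - ext K θ z = (z' - z) + (H' - H) • θ := by rw [hH, hH']; module
  rw [e]
  refine (norm_add_le _ _).trans ?_
  rw [norm_smul, Real.norm_eq_abs]
  have : |H' - H| * ‖θ‖ ≤ diam K / ρ * ‖z' - z‖ := by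
    rcases abs_cases (H' - H) with ⟨h, -⟩ | ⟨h, -⟩ <;> rw [h] <;> linarith
  linarith

/-- The derivative of the exit map: the projection along `θ` to the tangent plane. -/
def extD (ν : Euc n → Euc n) (θ w : Euc n) : Euc n →L[ℝ] Euc n :=
  ContinuousLinearMap.id ℝ (Euc n) - ((⟪ν w, θ⟫_ℝ)⁻¹ • innerSL ℝ (ν w)).smulRight θ

lemma extD_apply (θ w v : Euc n) : extD ν θ w v = v - (⟪ν w, v⟫_ℝ / ⟪ν w, θ⟫_ℝ) • θ := by
  simp [extD, div_eq_inv_mul]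

lemma ext_hasFDerivAt (B : Body K ν r) {θ z : Euc n} {s : ℝ} (hθ : θ ≠ 0)
    (h : z + s • θ ∈ interior K) : HasFDerivAt (ext K θ) (extD ν θ (ext K θ z)) z := by
  obtain ⟨ρ, hρ, hz⟩ := mem_core_of_int h
  obtain ⟨H, -, hH, h3, h4⟩ := B.ext_int hθ h
  have hr := B.rpos
  set L := 1 + diam K / ρ
  have hnear : ∀ᶠ z' in 𝓝 z, z' + s • θ ∈ core K ρ :=
    ((by fun_prop : Continuous fun z' : Euc n => z' + s • θ).tendsto z).eventually
      ((core_open ρ).mem_nhds hz)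
  set c := -⟪ν (ext K θ z), θ⟫_ℝ with hc
  have hcpos : 0 < c := by linarith
  refine hasFDerivAt_of_quadratic (L ^ 2 / (2 * r) / c * ‖θ‖) (hnear.mono fun z' hz' => ?_)
  obtain ⟨H', -, hH', h3', -⟩ := B.ext_int hθ (core_sub_int hρ.le hz')
  have e : ext K θ z' - ext K θ z = (z' - z) + (H' - H) • θ := by rw [hH, hH']; module
  have l := B.ext_lip hρ hθ hz hz'
  have s1 := B.supp _ h3 _ (B.frontier_sub h3')
  have s2 := B.sq_bound h3 h3'.2
  have s3 : ‖ext K θ z' - ext K θ z‖ ^ 2 ≤ L ^ 2 * ‖z' - z‖ ^ 2 := by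
    rw [← mul_pow]; gcongr
  have s4 : ⟪ν (ext K θ z), ext K θ z' - ext K θ z⟫_ℝ ≤ L ^ 2 / (2 * r) * ‖z' - z‖ ^ 2 := by
    rw [div_mul_eq_mul_div, le_div_iff₀ (by positivity)]; linarith
  rw [extD_apply]
  set E := ⟪ν (ext K θ z), ext K θ z' - ext K θ z⟫_ℝ with hE
  have e2 : ext K θ z' - ext K θ z - (z' - z - (⟪ν (ext K θ z), z' - z⟫_ℝ / ⟪ν (ext K θ z), θ⟫_ℝ) • θ)
      = (-(E / c)) • θ := by
    rw [hE, e, inner_add_right, inner_smul_right]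
    have : ⟪ν (ext K θ z), θ⟫_ℝ = -c := by rw [hc]; ring
    rw [this]
    have e3 : -((⟪ν (ext K θ z), z' - z⟫_ℝ + (H' - H) * -c) / c) = (H' - H) - ⟪ν (ext K θ z), z' - z⟫_ℝ / c := by
      field_simp; ring
    rw [e3, div_neg]; module
  rw [e2, norm_smul, norm_neg, Real.norm_of_nonneg (by positivity)]
  calc E / c * ‖θ‖ ≤ (L ^ 2 / (2 * r) * ‖z' - z‖ ^ 2) / c * ‖θ‖ := by gcongr
    _ = _ := by ring

end Body

/-! ### The gauge and central projection to the boundary -/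

/-- The gauge of `K` seen from the point `o`. -/
def gau {n : ℕ} (K : Set (Euc n)) (o : Euc n) : Euc n → ℝ := gauge ((fun y => o + y) ⁻¹' K)

/-- Central projection from `o` to the boundary: `o + y ↦` boundary point on the ray. -/
def bpt {n : ℕ} (K : Set (Euc n)) (o y : Euc n) : Euc n := o + (gau K o y)⁻¹ • y

namespace Body
variable {n : ℕ} {K : Set (Euc n)} {ν : Euc n → Euc n} {r : ℝ} {o : Euc n}

lemma indicator (B : Body K ν r) : Body K ((frontier K).indicator ν) r := by
  refine ⟨B.cvx, B.cpt, B.int_ne, B.rpos, fun x hx => ?_, fun x hx => ?_, fun x hx => ?_⟩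
  all_goals rw [Set.indicator_of_mem hx]
  · exact B.norm_normal x hx
  · exact B.supp x hx
  · exact B.ball_sub x hx

lemma continuousOn_normal (B : Body K ν r) : ContinuousOn ν (frontier K) := by
  have : LipschitzOnWith (1 / r).toNNReal ν (frontier K) := by
    refine LipschitzOnWith.of_dist_le_mul fun x hx y hy => ?_
    rw [dist_eq_norm, dist_eq_norm, Real.coe_toNNReal _ (by have := B.rpos; positivity)]
    have := B.normal_lip hx hy
    rwa [div_mul_eq_mul_div, one_mul]
  exact this.continuousOn

lemma measurable_indicator (B : Body K ν r) : Measurable ((frontier K).indicator ν) := by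
  classical
  have := B.continuousOn_normal.measurable_piecewise (continuousOn_const (c := (0 : Euc n)))
    isClosed_frontier.measurableSet (g := fun _ => 0)
  rwa [show (fun _ : Euc n => (0 : Euc n)) = 0 from rfl, Set.piecewise_eq_indicator] at this

lemma gau_cvx (B : Body K ν r) : Convex ℝ ((fun y => o + y) ⁻¹' K) := B.cvx.translate_preimage_right o

lemma gau_nhds (ho : o ∈ interior K) : ((fun y => o + y) ⁻¹' K) ∈ 𝓝 (0 : Euc n) := by
  have : Tendsto (fun y : Euc n => o + y) (𝓝 0) (𝓝 o) := by
    simpa using (by fun_prop : Continuous fun y : Euc n => o + y).tendsto 0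
  exact this (mem_interior_iff_mem_nhds.1 ho)

lemma gau_bdd (B : Body K ν r) : Bornology.IsBounded ((fun y => o + y) ⁻¹' K) := by
  obtain ⟨R, hR⟩ := B.cpt.isBounded.exists_norm_le
  refine isBounded_iff_forall_norm_le.2 ⟨R + ‖o‖, fun y hy => ?_⟩
  have := norm_sub_le (o + y) o
  rw [add_sub_cancel_left] at this
  have := hR _ hy
  linarith

lemma gau_cont (B : Body K ν r) (ho : o ∈ interior K) : Continuous (gau K o) :=
  continuous_gauge B.gau_cvx (gau_nhds ho)

lemma gau_pos (B : Body K ν r) (ho : o ∈ interior K) {y : Euc n} (hy : y ≠ 0) : 0 < gau K o y :=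
  (gauge_pos (absorbent_nhds_zero (gau_nhds ho))
    ((NormedSpace.isVonNBounded_iff ℝ).2 B.gau_bdd)).2 hy

lemma gau_smul {c : ℝ} (hc : 0 ≤ c) (y : Euc n) : gau K o (c • y) = c * gau K o y := by
  rw [gau, gauge_smul_of_nonneg hc]; rfl

lemma gau_zero : gau K o 0 = 0 := gauge_zero

lemma gau_eq_one (B : Body K ν r) (ho : o ∈ interior K) {y : Euc n} :
    gau K o y = 1 ↔ o + y ∈ frontier K := by
  rw [gau, gauge_eq_one_iff_mem_frontier B.gau_cvx (gau_nhds ho)]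
  have := (Homeomorph.addLeft o).preimage_frontier K
  have h2 : (fun y => o + y) ⁻¹' (frontier K) = frontier ((fun y => o + y) ⁻¹' K) := this
  rw [← h2]; rfl

lemma bpt_mem (B : Body K ν r) (ho : o ∈ interior K) {y : Euc n} (hy : y ≠ 0) :
    bpt K o y ∈ frontier K := by
  rw [bpt, ← B.gau_eq_one ho, gau_smul (inv_nonneg.2 (B.gau_pos ho hy).le),
    inv_mul_cancel₀ (B.gau_pos ho hy).ne']

lemma bpt_smul {c : ℝ} (hc : 0 < c) (y : Euc n) : bpt K o (c • y) = bpt K o y := by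
  rw [bpt, bpt, gau_smul hc.le, smul_smul, mul_inv, mul_comm c⁻¹, mul_assoc, inv_mul_cancel₀ hc.ne', mul_one]

lemma gau_sub (B : Body K ν r) (ho : o ∈ interior K) {w : Euc n} (hw : w ∈ frontier K) :
    gau K o (w - o) = 1 := by rw [B.gau_eq_one ho]; simpa using hw

lemma bpt_sub (B : Body K ν r) (ho : o ∈ interior K) {w : Euc n} (hw : w ∈ frontier K) :
    bpt K o (w - o) = w := by rw [bpt, B.gau_sub ho hw]; simp

lemma gau_smul_bpt (B : Body K ν r) (ho : o ∈ interior K) {y : Euc n} (hy : y ≠ 0) :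
    gau K o y • (bpt K o y - o) = y := by
  rw [bpt, add_sub_cancel_left, smul_smul, mul_inv_cancel₀ (B.gau_pos ho hy).ne', one_smul]

lemma bpt_meas (B : Body K ν r) (ho : o ∈ interior K) : Measurable (bpt K o) := by
  have := (B.gau_cont ho).measurable
  unfold bpt; fun_prop

lemma ne_of_frontier (ho : o ∈ interior K) {w : Euc n} (hw : w ∈ frontier K) : w - o ≠ 0 := by
  intro h; rw [sub_eq_zero] at h; exact hw.2 (h ▸ ho)

/-- The derivative of the gauge. -/
def gauD (ν : Euc n → Euc n) (o w : Euc n) : Euc n →L[ℝ] ℝ :=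
  (-(⟪ν w, o - w⟫_ℝ)⁻¹) • innerSL ℝ (ν w)

lemma gauD_apply (o w v : Euc n) : gauD ν o w v = - (⟪ν w, v⟫_ℝ / ⟪ν w, o - w⟫_ℝ) := by
  simp [gauD, div_eq_inv_mul]

lemma gau_hasFDerivAt (B : Body K ν r) (ho : o ∈ interior K) {y : Euc n} (hy : y ≠ 0) :
    HasFDerivAt (gau K o) (gauD ν o (bpt K o y)) y := by
  set w := bpt K o y with hw
  have hwf := B.bpt_mem ho hy
  set q := ⟪ν w, o - w⟫_ℝ with hq
  have hqpos : 0 < q := B.inner_pos hwf ho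
  have hγ := B.gau_pos ho hy
  have hr := B.rpos
  obtain ⟨L, hL⟩ := B.gau_cvx.lipschitz_gauge (gau_nhds ho)
  set γ := gau K o y with hγdef
  -- local Lipschitz bound for the central projection
  have hn1 : ∀ᶠ y' in 𝓝 y, γ / 2 < gau K o y' ∧ gau K o y' < 2 * γ := by
    have := (B.gau_cont ho).tendsto y
    exact (this.eventually (lt_mem_nhds (by linarith))).and (this.eventually (gt_mem_nhds (by linarith)))
  set A := 2 / γ + 2 * L * ‖y‖ / γ ^ 2
  refine hasFDerivAt_of_quadratic (2 * γ * (A ^ 2 / (2 * r)) / q) ?_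
  filter_upwards [hn1, isOpen_ne.mem_nhds hy] with y' ⟨h1, h2⟩ hy'
  set γ' := gau K o y'
  set w' := bpt K o y'
  have hwf' := B.bpt_mem ho hy'
  have hγ' : 0 < γ' := by linarith
  have hlip : |γ' - γ| ≤ L * ‖y' - y‖ := by
    have := hL.dist_le_mul y' y
    rwa [Real.dist_eq, dist_eq_norm] at this
  have hA : ‖w' - w‖ ≤ A * ‖y' - y‖ := by
    have e : w' - w = γ'⁻¹ • (y' - y) + (γ'⁻¹ - γ⁻¹) • y := by
      simp only [w', hw, bpt]; module
    rw [e]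
    refine (norm_add_le _ _).trans ?_
    rw [norm_smul, norm_smul, Real.norm_of_nonneg (inv_nonneg.2 hγ'.le), Real.norm_eq_abs]
    have b1 : γ'⁻¹ ≤ 2 / γ := by
      rw [inv_le_comm₀ hγ' (by positivity), inv_div]; exact h1.le
    have b2 : |γ'⁻¹ - γ⁻¹| ≤ 2 * L * ‖y' - y‖ / γ ^ 2 := by
      have e2 : γ'⁻¹ - γ⁻¹ = -((γ' - γ) * γ'⁻¹ / γ) := by field_simp; ring
      rw [e2, abs_neg, abs_div, abs_mul, abs_of_pos hγ, abs_of_pos (inv_pos.2 hγ')]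
      calc |γ' - γ| * γ'⁻¹ / γ ≤ (L * ‖y' - y‖) * (2 / γ) / γ := by gcongr
        _ = _ := by ring
    calc _ ≤ 2 / γ * ‖y' - y‖ + 2 * L * ‖y' - y‖ / γ ^ 2 * ‖y‖ := by gcongr
      _ = _ := by simp only [A]; ring
  have s1 := B.supp _ hwf _ (B.frontier_sub hwf')
  have s2 := B.sq_bound hwf hwf'.2
  have s3 : ‖w' - w‖ ^ 2 ≤ A ^ 2 * ‖y' - y‖ ^ 2 := by rw [← mul_pow]; gcongr
  set e := ⟪ν w, w' - w⟫_ℝ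
  have s4 : e ≤ A ^ 2 / (2 * r) * ‖y' - y‖ ^ 2 := by
    rw [div_mul_eq_mul_div, le_div_iff₀ (by positivity)]; linarith
  have t1 : ⟪ν w, y'⟫_ℝ = γ' * (e - q) := by
    rw [← B.gau_smul_bpt ho hy', inner_smul_right]
    congr 1
    rw [← inner_sub_right]; congr 1; simp only [w']; abel
  have t2 : ⟪ν w, y⟫_ℝ = γ * (-q) := by
    nth_rewrite 1 [← B.gau_smul_bpt ho hy]
    rw [inner_smul_right, hq, ← inner_neg_right, neg_sub]
  rw [gauD_apply, inner_sub_right, t1, t2]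
  have e3 : γ' - γ - -((γ' * (e - q) - γ * -q) / q) = γ' * e / q := by
    field_simp; ring
  rw [e3, Real.norm_of_nonneg (by positivity)]
  calc γ' * e / q ≤ (2 * γ) * (A ^ 2 / (2 * r) * ‖y' - y‖ ^ 2) / q := by gcongr
    _ = _ := by ring

end Body

lemma det_id_add_smulRight {n : ℕ} (α : Euc n →L[ℝ] ℝ) (a : Euc n) :
    (ContinuousLinearMap.id ℝ (Euc n) + α.smulRight a).det = 1 + α a := by
  have := LinearMap.transvection.det (α : Euc n →ₗ[ℝ] ℝ) a
  rw [ContinuousLinearMap.det]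
  have e : ((ContinuousLinearMap.id ℝ (Euc n) + α.smulRight a : Euc n →L[ℝ] Euc n) :
      Euc n →ₗ[ℝ] Euc n) = LinearMap.transvection (α : Euc n →ₗ[ℝ] ℝ) a := by
    ext v; simp [LinearMap.transvection]
  rw [e, this]; rfl

/-- The determinant of a rank-two perturbation `id + a ⊗ α - θ ⊗ β` with `α θ = β θ = 1`. -/
lemma det_rank_two {n : ℕ} (α β : Euc n →L[ℝ] ℝ) (a θ : Euc n) (hα : α θ = 1) (hβ : β θ = 1) :
    (ContinuousLinearMap.id ℝ (Euc n) + α.smulRight a - β.smulRight θ).det = β a := by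
  have e : ContinuousLinearMap.id ℝ (Euc n) + α.smulRight a - β.smulRight θ =
      (ContinuousLinearMap.id ℝ (Euc n) + β.smulRight (a - θ)).comp
        (ContinuousLinearMap.id ℝ (Euc n) + (α - β).smulRight θ) := by
    ext1 v
    simp [hβ, smul_sub, sub_smul]
    module
  have hm : ∀ S T : Euc n →L[ℝ] Euc n, (S.comp T).det = S.det * T.det := fun S T => by
    simp [ContinuousLinearMap.det, LinearMap.det_comp]
  rw [e, hm, det_id_add_smulRight, det_id_add_smulRight]
  simp [hα, hβ]

/-! ### The reference surface measure -/

/-- The shell `1 < N < e` of a homogeneous function. -/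
def shell {n : ℕ} (N : Euc n → ℝ) : Set (Euc n) := {y | 1 < N y ∧ N y < Real.exp 1}

lemma shell_meas {n : ℕ} {N : Euc n → ℝ} (hN : Measurable N) : MeasurableSet (shell N) :=
  (measurableSet_lt measurable_const hN).inter (measurableSet_lt hN measurable_const)

lemma lintegral_smul {n : ℕ} (F : Euc n → ℝ≥0∞) (hF : Measurable F) {c : ℝ} (hc : 0 < c) :
    ∫⁻ y, F y = ENNReal.ofReal (c ^ n) * ∫⁻ y, F (c • y) := by
  have h1 := Measure.map_addHaar_smul (volume : Measure (Euc n)) hc.ne'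
  have h2 : ∫⁻ y, F (c • y) = ∫⁻ y, F y ∂(Measure.map (c • ·) (volume : Measure (Euc n))) :=
    (lintegral_map hF (measurable_const_smul c)).symm
  rw [h2, h1, lintegral_smul_measure, smul_eq_mul, ← mul_assoc, finrank_euclideanSpace_fin,
    abs_of_pos (by positivity), ← ENNReal.ofReal_mul (by positivity),
    mul_inv_cancel₀ (by positivity), ENNReal.ofReal_one, one_mul]

/-- The shell of `N₂` has logarithmic length `1` on each ray on which `N₂` is positive, so a
logarithmic integral along the rays may be inserted. -/
lemma shell_aux {n : ℕ} {φ : Euc n → ℝ≥0∞} {N₁ N₂ : Euc n → ℝ}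
    (h1 : Measurable N₁) (h2 : Measurable N₂)
    (hom2 : ∀ c > 0, ∀ y, N₂ (c • y) = c * N₂ y) (pos2 : ∀ y, φ y ≠ 0 → 0 < N₂ y) :
    ∫⁻ y in shell N₁, φ y = ∫⁻ y, ∫⁻ t : ℝ, (shell N₁).indicator 1 y *
      (shell N₂).indicator 1 (Real.exp t • y) * φ y := by
  have m1 := shell_meas h1
  have m2 := shell_meas h2
  rw [← lintegral_indicator m1]
  congr 1; ext y
  have e : ∀ t : ℝ, (shell N₁).indicator 1 y * (shell N₂).indicator 1 (Real.exp t • y) * φ y =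
      ((shell N₁).indicator 1 y * φ y) * (shell N₂).indicator 1 (Real.exp t • y) := fun t => by ring
  simp only [e]
  have mm : Measurable fun t : ℝ => (shell N₂).indicator (1 : Euc n → ℝ≥0∞) (Real.exp t • y) :=
    (measurable_one.indicator m2).comp (by fun_prop)
  rw [lintegral_const_mul _ mm]
  by_cases hy : φ y = 0
  · by_cases hs : y ∈ shell N₁ <;> simp [hy, hs]
  have hp := pos2 y hy
  have : ∫⁻ t : ℝ, (shell N₂).indicator (1 : Euc n → ℝ≥0∞) (Real.exp t • y) = 1 := by
    have e2 : (fun t : ℝ => (shell N₂).indicator (1 : Euc n → ℝ≥0∞) (Real.exp t • y)) =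
        (Set.Ioo (-Real.log (N₂ y)) (1 - Real.log (N₂ y))).indicator 1 := by
      ext t
      have : Real.exp t • y ∈ shell N₂ ↔ t ∈ Set.Ioo (-Real.log (N₂ y)) (1 - Real.log (N₂ y)) := by
        simp only [shell, Set.mem_ofPred_eq, Set.mem_Ioo]
        rw [hom2 _ (Real.exp_pos t)]
        have e3 : Real.exp t * N₂ y = Real.exp (t + Real.log (N₂ y)) := by
          rw [Real.exp_add, Real.exp_log hp]
        rw [e3, Real.one_lt_exp_iff, Real.exp_lt_exp]
        constructor <;> rintro ⟨a, b⟩ <;> constructor <;> linarith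
      by_cases h : Real.exp t • y ∈ shell N₂
      · rw [Set.indicator_of_mem h, Set.indicator_of_mem (this.1 h)]; rfl
      · rw [Set.indicator_of_notMem h, Set.indicator_of_notMem (fun h' => h (this.2 h'))]
    rw [e2, lintegral_indicator measurableSet_Ioo]
    simp
  rw [this, mul_one]
  by_cases hs : y ∈ shell N₁ <;> simp [hs]

/-- The integral of a `(-n)`-homogeneous function over the shell of a positive homogeneous function
does not depend on the latter. -/
lemma shell_indep {n : ℕ} {φ : Euc n → ℝ≥0∞} (hφ : Measurable φ) {N₁ N₂ : Euc n → ℝ}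
    (h1 : Measurable N₁) (h2 : Measurable N₂) (hom1 : ∀ c > 0, ∀ y, N₁ (c • y) = c * N₁ y)
    (hom2 : ∀ c > 0, ∀ y, N₂ (c • y) = c * N₂ y) (pos1 : ∀ y, φ y ≠ 0 → 0 < N₁ y)
    (pos2 : ∀ y, φ y ≠ 0 → 0 < N₂ y)
    (hom : ∀ c > 0, ∀ y, ENNReal.ofReal (c ^ n) * φ (c • y) = φ y) :
    ∫⁻ y in shell N₁, φ y = ∫⁻ y in shell N₂, φ y := by
  have m1 := shell_meas h1
  have m2 := shell_meas h2
  have i1 : Measurable ((shell N₁).indicator (1 : Euc n → ℝ≥0∞)) := measurable_one.indicator m1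
  have i2 : Measurable ((shell N₂).indicator (1 : Euc n → ℝ≥0∞)) := measurable_one.indicator m2
  have me : Measurable fun p : Euc n × ℝ => Real.exp p.2 • p.1 :=
    (Real.measurable_exp.comp measurable_snd).smul measurable_fst
  have s1 := lintegral_lintegral_swap (μ := (volume : Measure (Euc n))) (ν := (volume : Measure ℝ))
    (f := fun y t => (shell N₁).indicator 1 y * (shell N₂).indicator 1 (Real.exp t • y) * φ y)
    ((((i1.comp measurable_fst).mul (i2.comp me)).mul (hφ.comp measurable_fst))).aemeasurable
  have s2 := lintegral_lintegral_swap (μ := (volume : Measure (Euc n))) (ν := (volume : Measure ℝ))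
    (f := fun y t => (shell N₂).indicator 1 y * (shell N₁).indicator 1 (Real.exp t • y) * φ y)
    ((((i2.comp measurable_fst).mul (i1.comp me)).mul (hφ.comp measurable_fst))).aemeasurable
  rw [shell_aux h1 h2 hom2 pos2, shell_aux h2 h1 hom1 pos1, s1, s2,
    ← lintegral_neg_eq_self (μ := (volume : Measure ℝ))]
  congr 1; ext t
  have mt : Measurable fun y : Euc n => (shell N₁).indicator 1 y *
      (shell N₂).indicator 1 (Real.exp (-t) • y) * φ y :=
    (i1.mul (i2.comp (by fun_prop))).mul hφ
  rw [lintegral_smul _ mt (Real.exp_pos t)]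
  refine (lintegral_const_mul _ (mt.comp (measurable_const_smul (Real.exp t)))).symm.trans ?_
  congr 1; ext y
  simp only [Function.comp_apply]
  rw [smul_smul, ← Real.exp_add, neg_add_cancel, Real.exp_zero, one_smul,
    ← hom _ (Real.exp_pos t) y]
  ring

/-- The reference surface measure on `∂K`: Lebesgue measure on a shell around `o`, weighted with the
`(-n)`-th power of the gauge and projected centrally to `∂K`, which gives the cone measure, and then
divided by the distance from `o` to the tangent plane. It is the `(n - 1)`-dimensional area
(`Body.euclHausdorff_eq_sig`), in a form suited to changes of variables. -/
def sig {n : ℕ} (K : Set (Euc n)) (ν : Euc n → Euc n) (o : Euc n) : Measure (Euc n) :=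
  ((volume.restrict (shell (gau K o))).withDensity fun y =>
    ENNReal.ofReal (((gau K o y) ^ n)⁻¹ / ⟪ν (bpt K o y), o - bpt K o y⟫_ℝ)).map (bpt K o)

/-- The billiard kernel density, without normalisation. -/
def bker {n : ℕ} (ν : Euc n → Euc n) (u w : Euc n) : ℝ :=
  ⟪ν u, w - u⟫_ℝ * ⟪ν w, u - w⟫_ℝ / ‖u - w‖ ^ (n + 1)

namespace Body
variable {n : ℕ} {K : Set (Euc n)} {ν : Euc n → Euc n} {r : ℝ} {o : Euc n}

lemma lintegral_sig (B : Body K ν r) (hm : Measurable ν) (ho : o ∈ interior K) {f : Euc n → ℝ≥0∞}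
    (hf : Measurable f) : ∫⁻ w, f w ∂(sig K ν o) = ∫⁻ y in shell (gau K o),
      ENNReal.ofReal (((gau K o y) ^ n)⁻¹ / ⟪ν (bpt K o y), o - bpt K o y⟫_ℝ) * f (bpt K o y) := by
  have hb := B.bpt_meas ho
  have hg := (B.gau_cont ho).measurable
  rw [sig, lintegral_map hf hb, lintegral_withDensity_eq_lintegral_mul]
  · rfl
  · have : Measurable fun y => ν (bpt K o y) := hm.comp hb
    fun_prop
  · exact hf.comp hb

lemma shell_ne {y : Euc n} (hy : y ∈ shell (gau K o)) : y ≠ 0 := by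
  rintro rfl
  have := hy.1
  rw [gau_zero] at this; linarith

lemma sig_compl (B : Body K ν r) (hm : Measurable ν) (ho : o ∈ interior K) :
    sig K ν o (frontier K)ᶜ = 0 := by
  have hms : MeasurableSet (frontier K)ᶜ := isClosed_frontier.measurableSet.compl
  rw [← lintegral_indicator_one hms, B.lintegral_sig hm ho (measurable_one.indicator hms)]
  rw [← lintegral_zero (μ := volume.restrict (shell (gau K o)))]
  refine setLIntegral_congr_fun (shell_meas (B.gau_cont ho).measurable) fun y hy => ?_
  simp [B.bpt_mem ho (shell_ne hy)]

/-- Integration over the cylinder in direction `θ` is integration over the part of the boundary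
visible in direction `θ`, weighted with the obliqueness. -/
lemma sig_cyl (B : Body K ν r) (hm : Measurable ν) (ho : o ∈ interior K) {θ : Euc n} (hθ : θ ≠ 0)
    {f : Euc n → ℝ≥0∞} (hf : Measurable f) :
    ∫⁻ z in cyl (interior K) θ, f (ext K θ z) =
      ∫⁻ w, ENNReal.ofReal (-⟪ν w, θ⟫_ℝ) * f w ∂(sig K ν o) := by
  have hb := B.bpt_meas ho
  have hg := (B.gau_cont ho).measurable
  have hθ2 : 0 < ‖θ‖ ^ 2 := by have := norm_pos_iff.2 hθ; positivity
  rw [B.lintegral_sig hm ho (by fun_prop)]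
  set g : Euc n → ℝ≥0∞ := fun y =>
    ENNReal.ofReal (((gau K o y) ^ n)⁻¹ / ⟪ν (bpt K o y), o - bpt K o y⟫_ℝ) *
      (ENNReal.ofReal (-⟪ν (bpt K o y), θ⟫_ℝ) * f (bpt K o y)) with hgdef
  let τ : Euc n → ℝ := fun z => ⟪θ, z⟫_ℝ / ‖θ‖ ^ 2
  -- `Λ` maps the cylinder onto the part of the shell visible along `θ`: the position of `z` on its
  -- line becomes the logarithm of the gauge, and the line itself determines the boundary point.
  let Λ : Euc n → Euc n := fun z => Real.exp (τ z) • (ext K θ z - o)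
  let α : Euc n →L[ℝ] ℝ := (‖θ‖ ^ 2)⁻¹ • innerSL ℝ θ
  let β : Euc n → Euc n →L[ℝ] ℝ := fun w => (⟪ν w, θ⟫_ℝ)⁻¹ • innerSL ℝ (ν w)
  let Λ' : Euc n → Euc n →L[ℝ] Euc n := fun z => Real.exp (τ z) •
    (ContinuousLinearMap.id ℝ (Euc n) + α.smulRight (ext K θ z - o) - (β (ext K θ z)).smulRight θ)
  have hM : MeasurableSet (cyl (interior K) θ) := (cyl_open isOpen_interior θ).measurableSet
  have hder : ∀ z ∈ cyl (interior K) θ, HasFDerivWithinAt Λ (Λ' z) (cyl (interior K) θ) z := by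
    rintro z ⟨-, s, hs⟩
    have h1 := B.ext_hasFDerivAt hθ hs
    have h2 : HasFDerivAt τ α z := by
      have : τ = fun z => α z := by ext z; simp [τ, α, div_eq_inv_mul]
      rw [this]; exact α.hasFDerivAt
    have h3 := h2.exp.smul (h1.sub_const o)
    refine (h3.congr_fderiv ?_).hasFDerivWithinAt
    ext1 v
    simp [Λ', extD, β, α]
    module
  have hspec : ∀ z ∈ cyl (interior K) θ, ext K θ z ∈ frontier K ∧ ⟪ν (ext K θ z), θ⟫_ℝ < 0 ∧
      gau K o (Λ z) = Real.exp (τ z) ∧ bpt K o (Λ z) = ext K θ z ∧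
      ∃ H : ℝ, ext K θ z = z + H • θ := by
    rintro z ⟨-, s, hs⟩
    obtain ⟨H, -, h2, h3, h4⟩ := B.ext_int hθ hs
    refine ⟨h3, h4, ?_, ?_, H, h2⟩
    · rw [gau_smul (Real.exp_pos _).le, B.gau_sub ho h3, mul_one]
    · rw [bpt_smul (Real.exp_pos _), B.bpt_sub ho h3]
  have hinj : Set.InjOn Λ (cyl (interior K) θ) := by
    intro z hz z' hz' h
    obtain ⟨-, -, a1, a2, H, a3⟩ := hspec z hz
    obtain ⟨-, -, b1, b2, H', b3⟩ := hspec z' hz'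
    rw [h, b1, Real.exp_eq_exp] at a1
    rw [h, b2, b3, a3] at a2
    have hτ : ⟪θ, z⟫_ℝ = ⟪θ, z'⟫_ℝ := by
      simp only [τ] at a1
      field_simp at a1
      exact a1.symm
    have h5 : ⟪θ, z' + H' • θ⟫_ℝ = ⟪θ, z + H • θ⟫_ℝ := by rw [a2]
    rw [inner_add_right, inner_add_right, inner_smul_right, inner_smul_right, hτ,
      real_inner_self_eq_norm_sq] at h5
    have : H' = H := by nlinarith
    rw [this] at a2
    exact (add_right_cancel a2).symm
  have himg : Λ '' cyl (interior K) θ = shell (gau K o) ∩ {y | ⟪ν (bpt K o y), θ⟫_ℝ < 0} := by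
    ext y; constructor
    · rintro ⟨z, hz, rfl⟩
      obtain ⟨-, a0, a1, a2, -⟩ := hspec z hz
      refine ⟨⟨?_, ?_⟩, by simpa [a2] using a0⟩
      · rw [a1, Real.one_lt_exp_iff]; exact div_pos hz.1.1 hθ2
      · rw [a1, Real.exp_lt_exp, div_lt_one hθ2]; exact hz.1.2
    · rintro ⟨⟨h1, h2⟩, h3⟩
      have hy : y ≠ 0 := shell_ne (o := o) ⟨h1, h2⟩
      set w := bpt K o y with hw
      have hwf := B.bpt_mem ho hy
      have hγ := B.gau_pos ho hy
      let z := w + (Real.log (gau K o y) - ⟪θ, w⟫_ℝ / ‖θ‖ ^ 2) • θ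
      have hτ : τ z = Real.log (gau K o y) := by
        simp only [τ, z, inner_add_right, inner_smul_right, real_inner_self_eq_norm_sq]
        field_simp; ring
      have hθz : ⟪θ, z⟫_ℝ = Real.log (gau K o y) * ‖θ‖ ^ 2 := by
        rw [← hτ]; simp only [τ]; field_simp
      have hext : ext K θ z = w := B.ext_eq hwf h3
        (s := -(Real.log (gau K o y) - ⟪θ, w⟫_ℝ / ‖θ‖ ^ 2)) (by simp only [z]; module)
      refine ⟨z, ⟨⟨?_, ?_⟩, ?_⟩, ?_⟩
      · rw [hθz]; exact mul_pos (Real.log_pos h1) hθ2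
      · rw [hθz]
        have : Real.log (gau K o y) < 1 := by rwa [Real.log_lt_iff_lt_exp hγ]
        nlinarith
      · obtain ⟨ε, -, hε⟩ := B.exists_enter hwf (d := -θ) (by rw [inner_neg_right]; linarith [show ⟪ν w, θ⟫_ℝ < 0 from h3])
        refine ⟨-ε - (Real.log (gau K o y) - ⟪θ, w⟫_ℝ / ‖θ‖ ^ 2), ?_⟩
        convert hε using 1
        simp only [z]; module
      · simp only [Λ]
        rw [hτ, hext, Real.exp_log hγ, B.gau_smul_bpt ho hy]
  have hcv := lintegral_image_eq_lintegral_abs_det_fderiv_mul volume hM hder hinj g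
  have hR : ∫⁻ y in shell (gau K o), g y = ∫⁻ y in Λ '' cyl (interior K) θ, g y := by
    have mneg : MeasurableSet {y | ⟪ν (bpt K o y), θ⟫_ℝ < 0} := by
      have : Measurable fun y => ν (bpt K o y) := hm.comp hb
      exact measurableSet_lt (by fun_prop) measurable_const
    rw [himg, Set.inter_comm, ← Measure.restrict_restrict mneg, ← lintegral_indicator mneg]
    congr 1; ext y
    by_cases h : ⟪ν (bpt K o y), θ⟫_ℝ < 0
    · rw [Set.indicator_of_mem (by exact h)]
    · rw [Set.indicator_of_notMem (by exact h)]
      simp only [hgdef]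
      rw [ENNReal.ofReal_of_nonpos (p := -⟪ν (bpt K o y), θ⟫_ℝ) (by linarith)]
      simp
  rw [hR, hcv]
  refine setLIntegral_congr_fun hM fun z hz => ?_
  obtain ⟨h1, h2, a1, a2, -⟩ := hspec z hz
  simp only [hgdef]
  rw [a1, a2]
  have hdet : (Λ' z).det = Real.exp (τ z) ^ n * (⟪ν (ext K θ z), ext K θ z - o⟫_ℝ / ⟪ν (ext K θ z), θ⟫_ℝ) := by
    have := det_rank_two α (β (ext K θ z)) (ext K θ z - o) θ (by simp [α, hθ2.ne']) (by simp [β, h2.ne])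
    simp only [Λ', ContinuousLinearMap.det] at this ⊢
    rw [ContinuousLinearMap.toLinearMap_smul, LinearMap.det_smul, this, finrank_euclideanSpace_fin]
    simp [β, div_eq_inv_mul]
  have hq := B.inner_pos h1 ho
  rw [hdet, ← neg_sub o, inner_neg_right]
  set q := ⟪ν (ext K θ z), o - ext K θ z⟫_ℝ
  set p := ⟪ν (ext K θ z), θ⟫_ℝ
  have : |Real.exp (τ z) ^ n * (-q / p)| = Real.exp (τ z) ^ n * (q / (-p)) := by
    rw [abs_of_pos]
    · rw [div_neg, neg_div]
    · have : 0 < -q / p := div_pos_of_neg_of_neg (by linarith) h2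
      positivity
  have hpp : 0 < -p := by linarith
  rw [this, ← mul_assoc, ← mul_assoc, ← ENNReal.ofReal_mul (by positivity),
    ← ENNReal.ofReal_mul (by positivity)]
  have : Real.exp (τ z) ^ n * (q / -p) * ((Real.exp (τ z) ^ n)⁻¹ / q) * -p = 1 := by
    have := (Real.exp_pos (τ z)).ne'
    have := h2.ne
    field_simp
  rw [this]; simp

end Body

/-! ### The billiard kernel in terms of chord directions -/

namespace Body
variable {n : ℕ} {K : Set (Euc n)} {ν : Euc n → Euc n} {r : ℝ} {o : Euc n}

/-- The exit point is a jointly measurable function of a starting point in `K` and a direction. -/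
lemma ext_measurable (B : Body K ν r) : ∃ g : Euc n × Euc n → Euc n, Measurable g ∧
    ∀ u ∈ K, ∀ d, g (u, d) = ext K d u := by
  classical
  let H : Euc n × Euc n → ℝ := fun p =>
    if p.1 ∈ K ∧ p.2 ≠ 0 then sSup {s : ℝ | p.1 + s • p.2 ∈ K} else 0
  have h0 : ∀ p, 0 ≤ H p := by
    intro p
    simp only [H]
    split_ifs with h
    · exact (B.ext_spec h.2 ⟨0, by simpa using h.1⟩).2 0 (by simpa using h.1)
    · exact le_rfl
  have hH : Measurable H := by
    refine measurable_of_Ici fun c => ?_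
    rcases le_or_gt c 0 with hc | hc
    · convert MeasurableSet.univ
      ext p; simpa using hc.trans (h0 p)
    · have : H ⁻¹' Set.Ici c = {p | p.1 ∈ K} ∩ {p | p.2 = 0}ᶜ ∩ {p | p.1 + c • p.2 ∈ K} := by
        ext p
        simp only [Set.mem_preimage, Set.mem_Ici, Set.mem_inter_iff, Set.mem_compl_iff,
          Set.mem_ofPred_eq, H]
        constructor
        · intro h
          split_ifs at h with h1
          · refine ⟨h1, ?_⟩
            obtain ⟨a, b⟩ := B.ext_spec h1.2 ⟨0, by simpa using h1.1⟩
            set S := sSup {s : ℝ | p.1 + s • p.2 ∈ K}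
            have hS : 0 < S := hc.trans_le h
            have := B.cvx h1.1 a (a := 1 - c / S) (b := c / S)
              (by rw [sub_nonneg, div_le_one hS]; exact h) (by positivity) (by ring)
            convert this using 1
            rw [smul_add, smul_smul, div_mul_cancel₀ _ hS.ne']
            module
          · linarith
        · rintro ⟨h1, h2⟩
          rw [if_pos h1]
          exact (B.ext_spec h1.2 ⟨0, by simpa using h1.1⟩).2 c h2
      rw [this]
      have hK := B.cpt.isClosed.measurableSet
      refine ((hK.preimage measurable_fst).inter
        ((measurableSet_singleton (0 : Euc n)).preimage measurable_snd).compl).inter ?_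
      exact hK.preimage (f := fun p : Euc n × Euc n => p.1 + c • p.2) (by fun_prop)
  refine ⟨fun p => p.1 + H p • p.2, by fun_prop, fun u hu d => ?_⟩
  by_cases hd : d = 0
  · simp [ext, hd]
  · simp [ext, H, hd, hu]

lemma ext_meas_right (B : Body K ν r) {u : Euc n} (hu : u ∈ K) : Measurable fun d => ext K d u := by
  obtain ⟨g, hg, h⟩ := B.ext_measurable
  have : (fun d => ext K d u) = fun d => g (u, d) := by ext1 d; exact (h u hu d).symm
  rw [this]; fun_prop

/-- Integration of the billiard kernel against the reference measure, in terms of the direction of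
flight. -/
lemma sig_kernel (B : Body K ν r) (hm : Measurable ν) (ho : o ∈ interior K) {u : Euc n}
    (hu : u ∈ frontier K) {f : Euc n → ℝ≥0∞} (hf : Measurable f) :
    ∫⁻ w, ENNReal.ofReal (bker ν u w) * f w ∂(sig K ν o) =
      ∫⁻ d in shell norm, ENNReal.ofReal (⟪ν u, d⟫_ℝ * (‖d‖ ^ (n + 1))⁻¹) * f (ext K d u) := by
  classical
  have hb := B.bpt_meas ho
  have hνb : Measurable fun y => ν (bpt K o y) := hm.comp hb
  have hg := (B.gau_cont ho).measurable
  have huK := B.frontier_sub hu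
  have hext := B.ext_meas_right huK
  let N : Euc n → ℝ := fun d => if 0 < ⟪ν u, d⟫_ℝ then ‖d‖ / ‖ext K d u - u‖ else 0
  have mpos : MeasurableSet {d : Euc n | 0 < ⟪ν u, d⟫_ℝ} :=
    measurableSet_lt measurable_const (by fun_prop)
  have hN : Measurable N := Measurable.ite mpos (by fun_prop) measurable_const
  have hextc : ∀ c : ℝ, 0 < c → ∀ d, 0 < ⟪ν u, d⟫_ℝ → ext K (c • d) u = ext K d u := by
    intro c hc d hd
    obtain ⟨H, h1, h2, h3, h4⟩ := B.ext_bdry hu hd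
    refine B.ext_eq h3 (s := H * c⁻¹) ?_ ?_
    · rw [inner_smul_right]; nlinarith
    · rw [smul_smul, mul_assoc, inv_mul_cancel₀ hc.ne', mul_one, h2]
  have hposc : ∀ c : ℝ, 0 < c → ∀ d, 0 < ⟪ν u, c • d⟫_ℝ ↔ 0 < ⟪ν u, d⟫_ℝ := by
    intro c hc d; rw [inner_smul_right, mul_pos_iff_of_pos_left hc]
  have hNhom : ∀ c : ℝ, c > 0 → ∀ d, N (c • d) = c * N d := by
    intro c hc d
    simp only [N, hposc c hc]
    split_ifs with h
    · rw [hextc c hc d h, norm_smul, Real.norm_of_nonneg hc.le, mul_div_assoc]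
    · simp
  let φ : Euc n → ℝ≥0∞ := fun d => ENNReal.ofReal (⟪ν u, d⟫_ℝ * (‖d‖ ^ (n + 1))⁻¹) * f (ext K d u)
  have hφ : Measurable φ := by
    have := hf.comp hext
    simp only [Function.comp_def] at this
    fun_prop
  have hφ0 : ∀ d, ¬ 0 < ⟪ν u, d⟫_ℝ → φ d = 0 := by
    intro d hd
    simp only [φ]
    rw [ENNReal.ofReal_of_nonpos, zero_mul]
    exact mul_nonpos_of_nonpos_of_nonneg (not_lt.1 hd) (by positivity)
  have hφpos : ∀ d, φ d ≠ 0 → 0 < ⟪ν u, d⟫_ℝ := fun d h => by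
    by_contra hc; exact h (hφ0 d hc)
  have hNpos : ∀ d, 0 < ⟪ν u, d⟫_ℝ → 0 < N d := by
    intro d hd
    obtain ⟨H, h1, h2, h3, h4⟩ := B.ext_bdry hu hd
    have hd0 : d ≠ 0 := by rintro rfl; simp at hd
    simp only [N, if_pos hd, h2, add_sub_cancel_left, norm_smul, Real.norm_of_nonneg h1.le]
    have := norm_pos_iff.2 hd0
    positivity
  have hind := shell_indep hφ hN (N₂ := norm) measurable_norm hNhom
    (fun c hc d => by rw [norm_smul, Real.norm_of_nonneg hc.le])
    (fun d h => hNpos d (hφpos d h))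
    (fun d h => norm_pos_iff.2 (by rintro rfl; have := hφpos _ h; simp at this))
    (fun c hc d => by
      by_cases h : 0 < ⟪ν u, d⟫_ℝ
      · simp only [φ]
        rw [hextc c hc d h, ← mul_assoc, ← ENNReal.ofReal_mul (by positivity)]
        congr 2
        rw [inner_smul_right, norm_smul, Real.norm_of_nonneg hc.le]
        have hd0 : d ≠ 0 := by rintro rfl; simp at h
        have := norm_pos_iff.2 hd0
        field_simp
        ring
      · rw [hφ0 _ h, hφ0 _ ((hposc c hc d).not.2 h), mul_zero])
  change _ = ∫⁻ d in shell norm, φ d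
  rw [← hind, B.lintegral_sig hm ho (by unfold bker; fun_prop)]
  have mC : MeasurableSet {y | 0 < ⟪ν u, bpt K o y - u⟫_ℝ ∧
      0 < ⟪ν (bpt K o y), u - bpt K o y⟫_ℝ} := by
    have h1 : Measurable fun y => ⟪ν u, bpt K o y - u⟫_ℝ := by fun_prop
    have h2 : Measurable fun y => ⟪ν (bpt K o y), u - bpt K o y⟫_ℝ := by fun_prop
    exact (measurableSet_lt measurable_const h1).inter (measurableSet_lt measurable_const h2)
  let Y : Set (Euc n) := shell (gau K o) ∩
    {y | 0 < ⟪ν u, bpt K o y - u⟫_ℝ ∧ 0 < ⟪ν (bpt K o y), u - bpt K o y⟫_ℝ}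
  have hYm : MeasurableSet Y := (shell_meas hg).inter mC
  let Ψ : Euc n → Euc n := fun y => y + gau K o y • (o - u)
  have hΨ : ∀ y ≠ 0, Ψ y = gau K o y • (bpt K o y - u) := by
    intro y hy
    have := B.gau_smul_bpt ho hy
    simp only [Ψ]
    nth_rw 1 [← this]
    module
  have hder : ∀ y ∈ Y, HasFDerivWithinAt Ψ (ContinuousLinearMap.id ℝ (Euc n) +
      (gauD ν o (bpt K o y)).smulRight (o - u)) Y y := by
    intro y hy
    exact ((hasFDerivAt_id y).add ((B.gau_hasFDerivAt ho (shell_ne hy.1)).smul_const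
      (o - u))).hasFDerivWithinAt
  have hspec : ∀ y ∈ Y, 0 < gau K o y ∧ bpt K o y ∈ frontier K ∧ 0 < ⟪ν u, Ψ y⟫_ℝ ∧
      ext K (Ψ y) u = bpt K o y ∧ N (Ψ y) = gau K o y := by
    intro y hy
    have hy0 := shell_ne hy.1
    have hγ := B.gau_pos ho hy0
    have hwf := B.bpt_mem ho hy0
    have hp : 0 < ⟪ν u, Ψ y⟫_ℝ := by
      rw [hΨ y hy0, inner_smul_right]; exact mul_pos hγ hy.2.1
    have he : ext K (Ψ y) u = bpt K o y := by
      refine B.ext_eq hwf (s := (gau K o y)⁻¹) ?_ ?_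
      · rw [hΨ y hy0, inner_smul_right, ← neg_sub u, inner_neg_right]
        have := mul_pos hγ hy.2.2
        linarith
      · rw [hΨ y hy0, smul_smul, inv_mul_cancel₀ hγ.ne', one_smul]; abel
    refine ⟨hγ, hwf, hp, he, ?_⟩
    have hne : bpt K o y - u ≠ 0 := by
      intro h; have := hy.2.1; rw [h] at this; simp at this
    have := norm_pos_iff.2 hne
    simp only [N, if_pos hp, he]
    rw [hΨ y hy0, norm_smul, Real.norm_of_nonneg hγ.le, mul_div_assoc, div_self this.ne', mul_one]
  have hinj : Set.InjOn Ψ Y := by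
    intro y hy y' hy' h
    obtain ⟨-, -, -, a1, a2⟩ := hspec y hy
    obtain ⟨-, -, -, b1, b2⟩ := hspec y' hy'
    rw [← B.gau_smul_bpt ho (shell_ne hy.1), ← B.gau_smul_bpt ho (shell_ne hy'.1),
      ← a1, ← b1, ← a2, ← b2, h]
  have himg : Ψ '' Y = shell N ∩ {d | 0 < ⟪ν u, d⟫_ℝ} := by
    ext d; constructor
    · rintro ⟨y, hy, rfl⟩
      obtain ⟨-, -, a0, a1, a2⟩ := hspec y hy
      exact ⟨⟨by rw [a2]; exact hy.1.1, by rw [a2]; exact hy.1.2⟩, a0⟩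
    · rintro ⟨⟨h1, h2⟩, h3⟩
      have h3 : 0 < ⟪ν u, d⟫_ℝ := h3
      obtain ⟨H, a1, a2, a3, a4⟩ := B.ext_bdry hu h3
      have hd0 : d ≠ 0 := by rintro rfl; simp at h3
      have hN' : N d = H⁻¹ := by
        have := norm_pos_iff.2 hd0
        simp only [N, if_pos h3, a2, add_sub_cancel_left, norm_smul, Real.norm_of_nonneg a1.le]
        field_simp
      rw [hN'] at h1 h2
      have hH : 0 < H⁻¹ := inv_pos.2 a1
      have g1 : gau K o (H⁻¹ • (ext K d u - o)) = H⁻¹ := by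
        rw [gau_smul hH.le, B.gau_sub ho a3, mul_one]
      have g2 : bpt K o (H⁻¹ • (ext K d u - o)) = ext K d u := by
        rw [bpt_smul hH, B.bpt_sub ho a3]
      have e1 : ext K d u - u = H • d := by rw [a2]; abel
      have hy : H⁻¹ • (ext K d u - o) ∈ shell (gau K o) := ⟨by rw [g1]; exact h1, by rw [g1]; exact h2⟩
      refine ⟨H⁻¹ • (ext K d u - o), ⟨hy, ?_, ?_⟩, ?_⟩
      · rw [g2, e1, inner_smul_right]; positivity
      · rw [g2, ← neg_sub, e1, inner_neg_right, inner_smul_right]; nlinarith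
      · rw [hΨ _ (shell_ne hy), g1, g2, e1, smul_smul, inv_mul_cancel₀ a1.ne', one_smul]
  have hR : ∫⁻ d in shell N, φ d = ∫⁻ d in Ψ '' Y, φ d := by
    rw [himg, Set.inter_comm, ← Measure.restrict_restrict mpos, ← lintegral_indicator mpos]
    congr 1; ext d
    by_cases h : 0 < ⟪ν u, d⟫_ℝ
    · rw [Set.indicator_of_mem (by exact h)]
    · rw [Set.indicator_of_notMem (by exact h), hφ0 _ h]
  rw [hR, lintegral_image_eq_lintegral_abs_det_fderiv_mul volume hYm hder hinj]
  have hL : ∀ g : Euc n → ℝ≥0∞, (∀ y ∈ shell (gau K o), y ∉ Y → g y = 0) →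
      ∫⁻ y in shell (gau K o), g y = ∫⁻ y in Y, g y := by
    intro g hg0
    have : Y = {y | 0 < ⟪ν u, bpt K o y - u⟫_ℝ ∧
      0 < ⟪ν (bpt K o y), u - bpt K o y⟫_ℝ} ∩ shell (gau K o) := Set.inter_comm _ _
    rw [this, ← Measure.restrict_restrict mC, ← lintegral_indicator mC]
    refine setLIntegral_congr_fun (shell_meas hg) fun y hy => ?_
    by_cases h : y ∈ Y
    · rw [Set.indicator_of_mem h.2]
    · rw [Set.indicator_of_notMem (fun h' => h ⟨hy, h'⟩), hg0 y hy h]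
  rw [hL]
  · refine setLIntegral_congr_fun hYm fun y hy => ?_
    obtain ⟨hγ, hwf, hp, he, -⟩ := hspec y hy
    have hy0 := shell_ne hy.1
    simp only [φ]
    rw [he, det_id_add_smulRight, gauD_apply, hΨ y hy0, inner_smul_right, norm_smul,
      Real.norm_of_nonneg hγ.le, bker]
    have hq := B.inner_pos hwf ho
    set w := bpt K o y
    have c1 : 0 < ⟪ν u, w - u⟫_ℝ := hy.2.1
    have c2 : 0 < ⟪ν w, u - w⟫_ℝ := hy.2.2
    have hne : 0 < ‖w - u‖ := by
      rw [norm_pos_iff]; intro h; rw [h] at c1; simp at c1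
    have e1 : ⟪ν w, o - u⟫_ℝ = ⟪ν w, o - w⟫_ℝ - ⟪ν w, u - w⟫_ℝ := by
      rw [← inner_sub_right]; congr 1; abel
    rw [e1, norm_sub_rev u w]
    have e2 : 1 + -((⟪ν w, o - w⟫_ℝ - ⟪ν w, u - w⟫_ℝ) / ⟪ν w, o - w⟫_ℝ) =
      ⟪ν w, u - w⟫_ℝ / ⟪ν w, o - w⟫_ℝ := by field_simp; ring
    rw [e2, abs_of_pos (by positivity), ← mul_assoc, ← mul_assoc,
      ← ENNReal.ofReal_mul (by positivity), ← ENNReal.ofReal_mul (by positivity)]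
    congr 2
    field_simp
    ring
  · intro y hy hyY
    have hy0 := shell_ne hy
    have hwf := B.bpt_mem ho hy0
    have s1 := B.supp u hu _ (B.frontier_sub hwf)
    have s2 := B.supp _ hwf u huK
    have : bker ν u (bpt K o y) = 0 := by
      rw [bker]
      rcases s1.eq_or_lt with h | h
      · rw [← h]; simp
      rcases s2.eq_or_lt with h' | h'
      · rw [← h']; simp
      exact absurd ⟨hy, h, h'⟩ hyY
    rw [this]; simp

end Body

/-! ### Hausdorff measure and the reference measure -/

/-- The unit-height cylinder over a set in a hyperplane has volume the area of its base. -/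
lemma cyl_vol {m : ℕ} {θ : Euc (m + 1)} (hθ : ‖θ‖ = 1) (Q : Set (ℝ ∙ θ)ᗮ) :
    volume {z : Euc (m + 1) | (0 < ⟪θ, z⟫_ℝ ∧ ⟪θ, z⟫_ℝ < 1) ∧
      (ℝ ∙ θ)ᗮ.orthogonalProjectionOnto z ∈ Q} = μHE[m] Q := by
  have hθ0 : θ ≠ 0 := by rintro rfl; simp at hθ
  have hmp := Submodule.measurePreserving_measurableEquivProd (ℝ ∙ θ) (0 : Euc (m + 1))
  rw [InnerProductSpace.euclideanHausdorffMeasure_eq_volume] at hmp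
  let I : Set (ℝ ∙ θ) := {t | 0 < ⟪θ, (t : Euc (m + 1))⟫_ℝ ∧ ⟪θ, (t : Euc (m + 1))⟫_ℝ < 1}
  have e1 : {z : Euc (m + 1) | (0 < ⟪θ, z⟫_ℝ ∧ ⟪θ, z⟫_ℝ < 1) ∧
      (ℝ ∙ θ)ᗮ.orthogonalProjectionOnto z ∈ Q} =
      (Submodule.measurableEquivProd (ℝ ∙ θ) (0 : Euc (m + 1))) ⁻¹' (I ×ˢ Q) := by
    ext z
    have : ⟪θ, (((ℝ ∙ θ).orthogonalProjectionOnto z : ℝ ∙ θ) : Euc (m + 1))⟫_ℝ = ⟪θ, z⟫_ℝ := by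
      rw [Submodule.coe_orthogonalProjectionOnto_apply,
        Submodule.starProjection_unit_singleton ℝ hθ, inner_smul_right,
        real_inner_self_eq_norm_sq, hθ]
      ring
    rw [Submodule.coe_orthogonalProjectionOnto_apply] at this
    simp [I, this]
  rw [e1, hmp.measure_preimage_equiv, Measure.volume_eq_prod, Measure.prod_prod]
  have e2 : volume I = 1 := by
    have hi := (LinearIsometryEquiv.toSpanUnitSingleton (𝕜 := ℝ) θ hθ).measurePreserving
    have := hi.measure_preimage_equiv
      (f := (LinearIsometryEquiv.toSpanUnitSingleton (𝕜 := ℝ) θ hθ).toMeasurableEquiv) I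
    have h3 : ((LinearIsometryEquiv.toSpanUnitSingleton (𝕜 := ℝ) θ hθ).toMeasurableEquiv) ⁻¹' I =
        Set.Ioo 0 1 := by
      ext t
      simp [I, inner_smul_right, hθ]
    rw [← this, h3]; simp
  rw [e2, one_mul]
  have e3 : Module.finrank ℝ (ℝ ∙ θ)ᗮ = m := by
    have : Fact (Module.finrank ℝ (Euc (m + 1)) = m + 1) := ⟨by simp⟩
    exact Submodule.finrank_orthogonal_span_singleton hθ0
  have e4 := InnerProductSpace.euclideanHausdorffMeasure_eq_volume (V := (ℝ ∙ θ)ᗮ)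
  rw [e3] at e4
  rw [e4]

namespace Body

/-- On a small piece of the boundary, surface measure and the reference measure nearly agree: both
are close to the area of the projection to a tangent hyperplane. -/
lemma local_compare {m : ℕ} {K : Set (Euc (m + 1))} {ν : Euc (m + 1) → Euc (m + 1)} {r : ℝ}
    {o : Euc (m + 1)} (B : Body K ν r) (hm : Measurable ν) (ho : o ∈ interior K)
    {T : Set (Euc (m + 1))} (hT : T ⊆ frontier K) (hTm : MeasurableSet T) {ε : ℝ} (h0 : 0 < ε)
    (h1 : ε < 1) (hd : ∀ x ∈ T, ∀ y ∈ T, ‖x - y‖ ≤ ε * r / 2) :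
    ENNReal.ofReal (1 - ε) * sig K ν o T ≤ μHE[m] T ∧
      ENNReal.ofReal ((1 - ε) ^ m) * μHE[m] T ≤ sig K ν o T := by
  rcases T.eq_empty_or_nonempty with rfl | ⟨x₀, hx₀⟩
  · simp
  have hr := B.rpos
  have hν0 := B.norm_normal x₀ (hT hx₀)
  set θ := -ν x₀ with hθd
  have hθ : ‖θ‖ = 1 := by rw [hθd, norm_neg, hν0]
  have hθ0 : θ ≠ 0 := by intro h; rw [h] at hθ; simp at hθ
  set π := (ℝ ∙ θ)ᗮ.orthogonalProjectionOnto with hπ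
  have hnl : ∀ x ∈ T, ‖ν x - ν x₀‖ ≤ ε / 2 := by
    intro x hx
    refine (B.normal_lip (hT hx) (hT hx₀)).trans ?_
    rw [div_le_iff₀ hr]
    have := hd x hx x₀ hx₀
    linarith
  have hnn : ∀ x ∈ T, 1 - ε ≤ ⟪ν x, ν x₀⟫_ℝ ∧ ⟪ν x, ν x₀⟫_ℝ ≤ 1 := by
    intro x hx
    have e := norm_sub_sq_real (ν x) (ν x₀)
    rw [hν0, B.norm_normal x (hT hx)] at e
    have := hnl x hx
    have h3 := norm_nonneg (ν x - ν x₀)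
    constructor <;> nlinarith
  have hanti : ∀ x ∈ T, ∀ y ∈ T, (1 - ε) * ‖x - y‖ ≤ ‖π x - π y‖ := by
    intro x hx y hy
    have a1 : |⟪θ, x - y⟫_ℝ| ≤ ε * ‖x - y‖ := by
      have b1 := B.sq_bound (hT hy) (hT hx).2
      have b2 := B.supp y (hT hy) x (B.frontier_sub (hT hx))
      have b3 := abs_real_inner_le_norm (ν y - ν x₀) (x - y)
      have b4 := hnl y hy
      have b5 := hd x hx y hy
      have e : ⟪θ, x - y⟫_ℝ = ⟪ν y - ν x₀, x - y⟫_ℝ - ⟪ν y, x - y⟫_ℝ := by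
        rw [hθd, inner_sub_left, inner_neg_left]; ring
      have b6 : ⟪ν y, x - y⟫_ℝ ≤ ε / 2 * ‖x - y‖ := by
        have : ‖x - y‖ * ‖x - y‖ ≤ ε * r / 2 * ‖x - y‖ := by gcongr
        have h5 : r * (2 * ⟪ν y, x - y⟫_ℝ) ≤ r * (ε / 2 * ‖x - y‖) := by nlinarith
        have := le_of_mul_le_mul_left h5 hr
        linarith
      have b7 : ‖ν y - ν x₀‖ * ‖x - y‖ ≤ ε / 2 * ‖x - y‖ := by gcongr
      have := abs_le.1 (b3.trans b7)
      rw [e, abs_le]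
      constructor <;> linarith
    have a2 : ‖x - y‖ ^ 2 = ⟪θ, x - y⟫_ℝ ^ 2 + ‖π x - π y‖ ^ 2 := by
      have h := Submodule.norm_sq_eq_add_norm_sq_projection (x - y) (ℝ ∙ θ)
      have h2 : ‖(ℝ ∙ θ).orthogonalProjectionOnto (x - y)‖ = |⟪θ, x - y⟫_ℝ| := by
        rw [← Submodule.norm_coe, Submodule.coe_orthogonalProjectionOnto_apply,
          Submodule.starProjection_unit_singleton ℝ hθ, norm_smul, hθ, mul_one, Real.norm_eq_abs]
      rw [h2, sq_abs] at h
      rw [h, hπ, ← map_sub]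
    have a3 : ⟪θ, x - y⟫_ℝ ^ 2 ≤ (ε * ‖x - y‖) ^ 2 := sq_le_sq' (abs_le.1 a1).1 (abs_le.1 a1).2
    refine abs_le_of_sq_le_sq' ?_ (norm_nonneg _) |>.2
    have : 0 ≤ ‖x - y‖ ^ 2 := by positivity
    nlinarith
  -- the measure of the projection
  have hset : {z | z ∈ cyl (interior K) θ ∧ ext K θ z ∈ T} =
      {z : Euc (m + 1) | (0 < ⟪θ, z⟫_ℝ ∧ ⟪θ, z⟫_ℝ < 1) ∧ π z ∈ π '' T} := by
    have hker : ∀ s : ℝ, π (s • θ) = 0 := by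
      intro s
      rw [hπ, Submodule.orthogonalProjectionOnto_eq_zero_iff]
      rw [Submodule.orthogonal_orthogonal]
      exact Submodule.smul_mem _ _ (Submodule.mem_span_singleton_self θ)
    ext z
    constructor
    · rintro ⟨⟨hz, s, hs⟩, hzT⟩
      rw [hθ, one_pow] at hz
      refine ⟨hz, _, hzT, ?_⟩
      rw [ext, map_add, hker, add_zero]
    · rintro ⟨hz, x, hx, hxz⟩
      have h5 : z - x ∈ (ℝ ∙ θ) := by
        rw [← Submodule.orthogonal_orthogonal (ℝ ∙ θ),
          ← Submodule.orthogonalProjectionOnto_eq_zero_iff, map_sub, sub_eq_zero]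
        exact hxz.symm
      obtain ⟨t, ht⟩ := Submodule.mem_span_singleton.1 h5
      have hneg : ⟪ν x, θ⟫_ℝ < 0 := by
        rw [hθd, inner_neg_right]; linarith [(hnn x hx).1]
      have he : ext K θ z = x := B.ext_eq (hT hx) hneg (s := -t) (by
        rw [neg_smul, ht]; abel)
      refine ⟨⟨by rw [hθ, one_pow]; exact hz, ?_⟩, by rw [he]; exact hx⟩
      obtain ⟨e, -, he⟩ := B.exists_enter (hT hx) (d := -θ) (by rw [inner_neg_right]; linarith)
      refine ⟨-t - e, ?_⟩
      convert he using 1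
      rw [sub_smul, neg_smul, ht]; module
  have hcont : ContinuousOn (ext K θ) (cyl (interior K) θ) := by
    rintro z ⟨-, s, hs⟩
    exact (B.ext_hasFDerivAt hθ0 hs).continuousAt.continuousWithinAt
  have hO : MeasurableSet (cyl (interior K) θ) := (cyl_open isOpen_interior θ).measurableSet
  have hmeas : MeasurableSet {z | z ∈ cyl (interior K) θ ∧ ext K θ z ∈ T} := by
    have h := (hcont.domRestrict.measurable hTm)
    have h2 := hO.subtype_image h
    convert h2 using 1
    ext z; simp [and_comm]
  have hproj : μHE[m] (π '' T) = ∫⁻ w in T, ENNReal.ofReal (-⟪ν w, θ⟫_ℝ) ∂(sig K ν o) := by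
    rw [← cyl_vol hθ, ← hset, ← lintegral_indicator_one hmeas]
    have h := B.sig_cyl hm ho hθ0 (f := T.indicator 1) (measurable_one.indicator hTm)
    rw [← lintegral_indicator hTm, ← lintegral_indicator hO] at *
    convert h using 2
    · ext z
      by_cases hz : z ∈ cyl (interior K) θ <;> by_cases hz2 : ext K θ z ∈ T <;>
        simp [Set.indicator, hz, hz2]
    · ext w
      by_cases hw : w ∈ T <;> simp [hw]
  have hle1 : μHE[m] (π '' T) ≤ μHE[m] T := by
    simp only [Measure.euclideanHausdorffMeasure_def, Measure.smul_apply]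
    gcongr
    exact hausdorffMeasure_orthogonalProjectionOnto_le _ _ _ (by positivity)
  have hle2 : ENNReal.ofReal ((1 - ε) ^ m) * μHE[m] T ≤ μHE[m] (π '' T) := by
    have hε : 0 < 1 - ε := by linarith
    have hinj : Set.InjOn π T := by
      intro x hx y hy h
      have := hanti x hx y hy
      rw [h, sub_self, norm_zero] at this
      have h3 : ‖x - y‖ ≤ 0 := by nlinarith [norm_nonneg (x - y)]
      exact sub_eq_zero.1 (norm_le_zero_iff.1 h3)
    let g := Function.invFunOn π T
    have hg : ∀ x ∈ T, g (π x) = x := fun x hx => hinj.leftInvOn_invFunOn hx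
    have him : g '' (π '' T) = T := by
      rw [Set.image_image]
      ext y; constructor
      · rintro ⟨x, hx, rfl⟩; simpa only [hg x hx] using hx
      · intro hy; exact ⟨y, hy, hg y hy⟩
    have hlip : LipschitzOnWith (1 - ε)⁻¹.toNNReal g (π '' T) := by
      refine LipschitzOnWith.of_dist_le_mul ?_
      rintro _ ⟨x, hx, rfl⟩ _ ⟨y, hy, rfl⟩
      rw [hg x hx, hg y hy, Real.coe_toNNReal _ (by positivity), dist_eq_norm, dist_eq_norm,
        inv_mul_eq_div, le_div_iff₀ hε, mul_comm]
      exact hanti x hx y hy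
    have h := hlip.hausdorffMeasure_image_le (d := m) (by positivity)
    rw [him] at h
    have h2 : μHE[m] T ≤ ENNReal.ofReal (((1 - ε)⁻¹) ^ m) * μHE[m] (π '' T) := by
      simp only [Measure.euclideanHausdorffMeasure_def, Measure.smul_apply]
      rw [mul_smul_comm]
      gcongr
      refine h.trans (le_of_eq ?_)
      congr 1
      rw [ENNReal.rpow_natCast, ENNReal.ofReal_pow (by positivity)]
      rfl
    calc ENNReal.ofReal ((1 - ε) ^ m) * μHE[m] T
        ≤ ENNReal.ofReal ((1 - ε) ^ m) * (ENNReal.ofReal (((1 - ε)⁻¹) ^ m) * μHE[m] (π '' T)) := by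
          gcongr
      _ = μHE[m] (π '' T) := by
          rw [← mul_assoc, ← ENNReal.ofReal_mul (by positivity), ← mul_pow, mul_inv_cancel₀ hε.ne']
          simp
  constructor
  · refine le_trans ?_ hle1
    rw [hproj, ← setLIntegral_const]
    refine setLIntegral_mono' hTm fun w hw => ENNReal.ofReal_le_ofReal ?_
    rw [hθd, inner_neg_right, neg_neg]; exact (hnn w hw).1
  · refine hle2.trans ?_
    rw [hproj]
    calc ∫⁻ w in T, ENNReal.ofReal (-⟪ν w, θ⟫_ℝ) ∂(sig K ν o) ≤ ∫⁻ w in T, 1 ∂(sig K ν o) := by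
          refine setLIntegral_mono' hTm fun w hw => ?_
          rw [← ENNReal.ofReal_one]
          refine ENNReal.ofReal_le_ofReal ?_
          rw [hθd, inner_neg_right, neg_neg]; exact (hnn w hw).2
      _ = _ := by simp

/-- The reference measure is the `m`-dimensional area: `local_compare` on a partition into small pieces,
in the limit `ε → 0`. -/
lemma euclHausdorff_eq_sig {m : ℕ} {K : Set (Euc (m + 1))} {ν : Euc (m + 1) → Euc (m + 1)} {r : ℝ}
    {o : Euc (m + 1)} (B : Body K ν r) (hm : Measurable ν) (ho : o ∈ interior K)
    {T : Set (Euc (m + 1))} (hT : T ⊆ frontier K) (hTm : MeasurableSet T) :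
    μHE[m] T = sig K ν o T := by
  have hr := B.rpos
  have key : ∀ ε ∈ Set.Ioo (0 : ℝ) 1, ENNReal.ofReal (1 - ε) * sig K ν o T ≤ μHE[m] T ∧
      ENNReal.ofReal ((1 - ε) ^ m) * μHE[m] T ≤ sig K ν o T := by
    rintro ε ⟨h0, h1⟩
    have hδ : 0 < ε * r / 4 := by positivity
    let U : ℕ → Set (Euc (m + 1)) :=
      fun i => ball (TopologicalSpace.denseSeq (Euc (m + 1)) i) (ε * r / 4)
    let V : ℕ → Set (Euc (m + 1)) := fun i => T ∩ disjointed U i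
    have hVm : ∀ i, MeasurableSet (V i) := fun i =>
      hTm.inter (MeasurableSet.disjointed (fun i => measurableSet_ball) i)
    have hVd : Pairwise (Function.onFun Disjoint V) := fun i j hij =>
      (disjoint_disjointed U hij).mono Set.inter_subset_right Set.inter_subset_right
    have hVU : ⋃ i, V i = T := by
      rw [← Set.inter_iUnion, iUnion_disjointed]
      refine Set.inter_eq_left.2 fun x _ => ?_
      obtain ⟨i, hi⟩ := (TopologicalSpace.denseRange_denseSeq (Euc (m + 1))).exists_dist_lt x hδ
      exact Set.mem_iUnion.2 ⟨i, hi⟩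
    have hloc : ∀ i, _ := fun i => B.local_compare hm ho (T := V i)
      (Set.inter_subset_left.trans hT) (hVm i) h0 h1 (by
        rintro x ⟨-, hx⟩ y ⟨-, hy⟩
        have hx := disjointed_subset U i hx
        have hy := disjointed_subset U i hy
        have := dist_triangle_right x y (TopologicalSpace.denseSeq (Euc (m + 1)) i)
        rw [← dist_eq_norm]
        have := mem_ball.1 hx
        have := mem_ball.1 hy
        linarith)
    rw [← hVU, measure_iUnion hVd hVm, measure_iUnion hVd hVm, ← ENNReal.tsum_mul_left,
      ← ENNReal.tsum_mul_left]
    exact ⟨ENNReal.tsum_le_tsum fun i => (hloc i).1, ENNReal.tsum_le_tsum fun i => (hloc i).2⟩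
  have hev : ∀ᶠ ε in 𝓝[>] (0 : ℝ), ε ∈ Set.Ioo (0 : ℝ) 1 := Ioo_mem_nhdsGT one_pos
  refine le_antisymm ?_ ?_
  · have ht : Tendsto (fun ε : ℝ => ENNReal.ofReal ((1 - ε) ^ m) * μHE[m] T) (𝓝[>] 0)
        (𝓝 (ENNReal.ofReal ((1 - 0) ^ m) * μHE[m] T)) := by
      refine ENNReal.Tendsto.mul_const (Tendsto.mono_left ?_ nhdsWithin_le_nhds) (Or.inl (by simp))
      exact (ENNReal.continuous_ofReal.comp (by fun_prop : Continuous fun ε : ℝ => (1 - ε) ^ m)).tendsto 0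
    have := le_of_tendsto ht (hev.mono fun ε hε => (key ε hε).2)
    simpa using this
  · have ht : Tendsto (fun ε : ℝ => ENNReal.ofReal (1 - ε) * sig K ν o T) (𝓝[>] 0)
        (𝓝 (ENNReal.ofReal (1 - 0) * sig K ν o T)) := by
      refine ENNReal.Tendsto.mul_const (Tendsto.mono_left ?_ nhdsWithin_le_nhds) (Or.inl (by simp))
      exact (ENNReal.continuous_ofReal.comp (by fun_prop : Continuous fun ε : ℝ => (1 - ε))).tendsto 0
    have := le_of_tendsto ht (hev.mono fun ε hε => (key ε hε).1)
    simpa using this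

/-- Surface measure is a positive multiple of the reference measure. -/
lemma surf_eq {n : ℕ} {K : Set (Euc n)} {ν : Euc n → Euc n} {r : ℝ} {o : Euc n} (hn : 1 ≤ n)
    (B : Body K ν r) (hm : Measurable ν) (ho : o ∈ interior K) :
    ∃ κ : ℝ≥0∞, κ ≠ 0 ∧ κ ≠ ⊤ ∧ surf K = κ • sig K ν o := by
  obtain ⟨m, rfl⟩ : ∃ m, n = m + 1 := ⟨n - 1, by omega⟩
  have hc := Measure.addHaarScalarFactor_volume_hausdorffMeasure_ne_zero m
  set c := Measure.addHaarScalarFactor (volume : Measure (EuclideanSpace ℝ (Fin m))) μH[m] with hcd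
  refine ⟨(c : ℝ≥0∞)⁻¹, by simp, by simpa using hc, ?_⟩
  ext T hT
  have hcast : ((m + 1 : ℕ) : ℝ) - 1 = m := by push_cast; ring
  rw [surf, hcast, Measure.restrict_apply hT, Measure.smul_apply, smul_eq_mul]
  have hfm : MeasurableSet (frontier K) := isClosed_frontier.measurableSet
  have h1 : sig K ν o T = sig K ν o (T ∩ frontier K) := by
    refine (measure_inter_conull (t := frontier K) ?_).symm
    exact B.sig_compl hm ho
  rw [h1, ← B.euclHausdorff_eq_sig hm ho Set.inter_subset_right (hT.inter hfm),
    Measure.euclideanHausdorffMeasure_def, ← hcd, Measure.smul_apply, ENNReal.smul_def, smul_eq_mul,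
    ← mul_assoc, ENNReal.inv_mul_cancel (by simpa using hc) (by simp), one_mul]

end Body

/-! ### The rotation-invariant measure on directions -/

/-- The rotation-invariant measure on the unit sphere, realised as the image of a weighted Lebesgue
measure on the shell `1 < ‖d‖ < e` under radial projection. -/
def dm (n : ℕ) : Measure (Euc n) :=
  ((volume.restrict (shell (norm : Euc n → ℝ))).withDensity fun d =>
    ENNReal.ofReal ((‖d‖ ^ n)⁻¹)).map fun d => ‖d‖⁻¹ • d

lemma measurable_normalize {n : ℕ} : Measurable fun d : Euc n => ‖d‖⁻¹ • d := by fun_prop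

lemma lintegral_dm {n : ℕ} {f : Euc n → ℝ≥0∞} (hf : Measurable f) :
    ∫⁻ θ, f θ ∂(dm n) = ∫⁻ d in shell (norm : Euc n → ℝ),
      ENNReal.ofReal ((‖d‖ ^ n)⁻¹) * f (‖d‖⁻¹ • d) := by
  rw [dm, lintegral_map hf measurable_normalize,
    lintegral_withDensity_eq_lintegral_mul _ (by fun_prop)
      (g := fun d => f (‖d‖⁻¹ • d)) (hf.comp measurable_normalize)]
  rfl

lemma dm_norm (n : ℕ) : ∀ᵐ θ ∂(dm n), ‖θ‖ = 1 := by
  rw [dm, ae_map_iff measurable_normalize.aemeasurable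
    (measurableSet_eq_fun measurable_norm measurable_const)]
  refine (withDensity_absolutelyContinuous _ _).ae_le ?_
  filter_upwards [ae_restrict_mem (shell_meas measurable_norm)] with d hd
  have : 0 < ‖d‖ := zero_lt_one.trans hd.1
  rw [norm_smul, norm_inv, norm_norm, inv_mul_cancel₀ this.ne']

instance dm_finite (n : ℕ) : IsFiniteMeasure (dm n) := by
  refine ⟨?_⟩
  rw [← lintegral_one, lintegral_dm measurable_const]
  calc _ ≤ ∫⁻ d in shell (norm : Euc n → ℝ), 1 := by
        refine setLIntegral_mono measurable_const fun d hd => ?_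
        rw [mul_one, ← ENNReal.ofReal_one]
        exact ENNReal.ofReal_le_ofReal (inv_le_one_of_one_le₀ (one_le_pow₀ hd.1.le))
    _ = volume (shell (norm : Euc n → ℝ)) := by simp
    _ ≤ volume (ball (0 : Euc n) (Real.exp 1)) := by
        refine measure_mono fun d hd => ?_
        simpa using hd.2
    _ < ⊤ := measure_ball_lt_top

lemma dm_inv {n : ℕ} (R : Euc n ≃ₗᵢ[ℝ] Euc n) : MeasurePreserving R (dm n) (dm n) := by
  have hR : Measurable R := R.continuous.measurable
  refine ⟨hR, ?_⟩
  ext s hs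
  rw [← lintegral_indicator_one hs, ← lintegral_indicator_one hs,
    lintegral_map (measurable_one.indicator hs) hR,
    lintegral_dm (measurable_one.indicator hs),
    lintegral_dm (f := fun a => s.indicator 1 (R a)) ((measurable_one.indicator hs).comp hR)]
  have hsh : R ⁻¹' (shell (norm : Euc n → ℝ)) = shell (norm : Euc n → ℝ) := by
    ext d; simp [shell]
  rw [← R.measurePreserving.setLIntegral_comp_preimage (shell_meas measurable_norm)
    (f := fun d => ENNReal.ofReal ((‖d‖ ^ n)⁻¹) * s.indicator 1 (‖d‖⁻¹ • d)), hsh]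
  · simp
  · exact Measurable.mul (by fun_prop) ((measurable_one.indicator hs).comp measurable_normalize)

lemma dm_integrable {n : ℕ} {g : Euc n → ℝ} (hg : Continuous g) : Integrable g (dm n) := by
  obtain ⟨C, hC⟩ := (isCompact_sphere (0 : Euc n) 1).exists_bound_of_continuousOn hg.continuousOn
  refine Integrable.of_bound hg.aestronglyMeasurable C ?_
  filter_upwards [dm_norm n] with θ hθ
  exact hC θ (by simpa using hθ)

/-- By rotation invariance the law of `⟪v, θ⟫` depends on `‖v‖` only. -/
lemma dm_rot {n : ℕ} {v w : Euc n} (h : ‖v‖ = ‖w‖) (g : ℝ → ℝ) :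
    ∫ θ, g ⟪v, θ⟫_ℝ ∂(dm n) = ∫ θ, g ⟪w, θ⟫_ℝ ∂(dm n) := by
  set R : Euc n ≃ₗᵢ[ℝ] Euc n := (ℝ ∙ (v - w))ᗮ.reflection
  have hR : R v = w := Submodule.reflection_sub h
  rw [← (dm_inv R).integral_comp R.toHomeomorph.measurableEmbedding (fun θ => g ⟪w, θ⟫_ℝ)]
  simp only [← hR, LinearIsometryEquiv.inner_map_map]

/-- The constant with `∫ |⟪v, θ⟫| = dβ n * ‖v‖` for all `v`. All elements of the set are equal by
rotation invariance, so that the supremum is their common value. -/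
def dβ (n : ℕ) : ℝ := sSup ((fun v : Euc n => ∫ θ, |⟪v, θ⟫_ℝ| ∂(dm n)) '' sphere 0 1)

lemma dm_abs {n : ℕ} (v : Euc n) : ∫ θ, |⟪v, θ⟫_ℝ| ∂(dm n) = dβ n * ‖v‖ := by
  by_cases hv : v = 0
  · simp [hv]
  have hv' : 0 < ‖v‖ := norm_pos_iff.2 hv
  have h1 : ‖(‖v‖⁻¹ • v)‖ = 1 := by
    rw [norm_smul, norm_inv, norm_norm, inv_mul_cancel₀ hv'.ne']
  have h2 : dβ n = ∫ θ, |⟪‖v‖⁻¹ • v, θ⟫_ℝ| ∂(dm n) := by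
    have : (fun v : Euc n => ∫ θ, |⟪v, θ⟫_ℝ| ∂(dm n)) '' sphere 0 1 =
        {∫ θ, |⟪‖v‖⁻¹ • v, θ⟫_ℝ| ∂(dm n)} := by
      ext x
      simp only [Set.mem_image, mem_sphere_zero_iff_norm, Set.mem_singleton_iff]
      constructor
      · rintro ⟨w, hw, rfl⟩
        exact dm_rot (hw.trans h1.symm) abs
      · rintro rfl
        exact ⟨_, h1, rfl⟩
    rw [dβ, this, csSup_singleton]
  rw [h2, mul_comm, ← integral_const_mul]
  congr 1; ext θ
  rw [real_inner_smul_left, abs_mul, abs_of_pos (inv_pos.2 hv'), ← mul_assoc,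
    mul_inv_cancel₀ hv'.ne', one_mul]

lemma dβ_nonneg (n : ℕ) : 0 ≤ dβ n := by
  refine Real.sSup_nonneg ?_
  rintro _ ⟨v, -, rfl⟩
  exact integral_nonneg fun _ => abs_nonneg _

lemma dm_pos_part {n : ℕ} (v : Euc n) :
    ∫⁻ θ, ENNReal.ofReal ⟪v, θ⟫_ℝ ∂(dm n) = ENNReal.ofReal (dβ n / 2 * ‖v‖) := by
  have h0 : ∫ θ, ⟪v, θ⟫_ℝ ∂(dm n) = 0 := by
    have := dm_rot (v := v) (w := -v) (by simp) id
    simp only [id, inner_neg_left, integral_neg] at this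
    linarith
  have h1 : ∫ θ, max ⟪v, θ⟫_ℝ 0 ∂(dm n) = dβ n / 2 * ‖v‖ := by
    have : ∀ θ, max ⟪v, θ⟫_ℝ 0 = (1 / 2) * (⟪v, θ⟫_ℝ + |⟪v, θ⟫_ℝ|) := by
      intro θ
      rcases le_total 0 ⟪v, θ⟫_ℝ with h | h
      · rw [max_eq_left h, abs_of_nonneg h]; ring
      · rw [max_eq_right h, abs_of_nonpos h]; ring
    simp only [this]
    rw [integral_const_mul, integral_add (dm_integrable (by fun_prop)) (dm_integrable (by fun_prop)),
      h0, dm_abs]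
    ring
  rw [← h1, ofReal_integral_eq_lintegral_ofReal (f := fun θ => max ⟪v, θ⟫_ℝ 0)
    (dm_integrable (by fun_prop)) (Eventually.of_forall fun _ => le_max_right _ _)]
  congr 1; ext θ
  rcases le_total 0 ⟪v, θ⟫_ℝ with h | h
  · rw [max_eq_left h]
  · rw [max_eq_right h, ENNReal.ofReal_of_nonpos h, ENNReal.ofReal_zero]

lemma dm_abs' {n : ℕ} (v : Euc n) :
    ∫⁻ θ, ENNReal.ofReal |⟪v, θ⟫_ℝ| ∂(dm n) = ENNReal.ofReal (dβ n * ‖v‖) := by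
  rw [← dm_abs, ofReal_integral_eq_lintegral_ofReal (dm_integrable (by fun_prop))
    (Eventually.of_forall fun _ => abs_nonneg _)]

/-- Two unit vectors always share a fixed proportion of their projected mass. -/
lemma dm_min {n : ℕ} {v w : Euc n} (hv : ‖v‖ = 1) (hw : ‖w‖ = 1) :
    ENNReal.ofReal (dβ n / 4) ≤
      ∫⁻ θ, ENNReal.ofReal (min |⟪v, θ⟫_ℝ| |⟪w, θ⟫_ℝ|) ∂(dm n) := by
  rw [← ofReal_integral_eq_lintegral_ofReal (dm_integrable (by fun_prop))
    (Eventually.of_forall fun _ => le_min (abs_nonneg _) (abs_nonneg _))]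
  refine ENNReal.ofReal_le_ofReal ?_
  have key : ∀ z : Euc n, (∀ θ, |(|⟪v, θ⟫_ℝ| - |⟪w, θ⟫_ℝ|)| ≤ |⟪z, θ⟫_ℝ|) → ‖z‖ ≤ 3 / 2 →
      dβ n / 4 ≤ ∫ θ, min |⟪v, θ⟫_ℝ| |⟪w, θ⟫_ℝ| ∂(dm n) := by
    intro z hz hz'
    have h1 : ∫ θ, (1 / 2) * (|⟪v, θ⟫_ℝ| + |⟪w, θ⟫_ℝ| - |⟪z, θ⟫_ℝ|) ∂(dm n) ≤
        ∫ θ, min |⟪v, θ⟫_ℝ| |⟪w, θ⟫_ℝ| ∂(dm n) := by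
      refine integral_mono (dm_integrable (by fun_prop)) (dm_integrable (by fun_prop)) fun θ => ?_
      have := hz θ
      simp only
      rcases le_total |⟪v, θ⟫_ℝ| |⟪w, θ⟫_ℝ| with h | h
      · rw [min_eq_left h]; rw [abs_of_nonpos (by linarith)] at this; linarith
      · rw [min_eq_right h]; rw [abs_of_nonneg (by linarith)] at this; linarith
    rw [integral_const_mul, integral_sub (dm_integrable (by fun_prop)) (dm_integrable (by fun_prop)),
      integral_add (dm_integrable (by fun_prop)) (dm_integrable (by fun_prop)),
      dm_abs, dm_abs, dm_abs, hv, hw] at h1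
    nlinarith [dβ_nonneg n]
  have hp := parallelogram_law_with_norm ℝ v w
  rw [hv, hw] at hp
  rcases le_total ‖v - w‖ ‖v + w‖ with h | h
  · refine key (v - w) (fun θ => ?_) (by nlinarith [norm_nonneg (v - w)])
    rw [inner_sub_left]; exact abs_abs_sub_abs_le _ _
  · refine key (v + w) (fun θ => ?_) (by nlinarith [norm_nonneg (v + w)])
    have := abs_abs_sub_abs_le ⟪v, θ⟫_ℝ (-⟪w, θ⟫_ℝ)
    rw [abs_neg, sub_neg_eq_add] at this
    rwa [inner_add_left]

/-- Second moment, from `∑ θ i ^ 2 = 1`. -/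
lemma dm_sq {n : ℕ} {v : Euc n} (hv : ‖v‖ = 1) :
    n * ∫ θ, ⟪v, θ⟫_ℝ ^ 2 ∂(dm n) = (dm n).real Set.univ := by
  have h1 : ∫ θ : Euc n, ∑ i, (θ i) ^ 2 ∂(dm n) = (dm n).real Set.univ := by
    rw [← mul_one ((dm n).real Set.univ), ← smul_eq_mul, ← integral_const]
    refine integral_congr_ae ?_
    filter_upwards [dm_norm n] with θ hθ
    have := EuclideanSpace.real_norm_sq_eq θ
    rw [← this, hθ]; simp
  rw [integral_finsetSum _ fun i _ => dm_integrable (by fun_prop)] at h1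
  rw [← h1]
  have : ∀ i : Fin n, ∫ θ : Euc n, (θ i) ^ 2 ∂(dm n) = ∫ θ, ⟪v, θ⟫_ℝ ^ 2 ∂(dm n) := by
    intro i
    rw [dm_rot (v := v) (w := EuclideanSpace.single i 1) (by simp [hv]) (fun t => t ^ 2)]
    simp [EuclideanSpace.inner_single_left]
  simp [this]

/-- Fourth moment, from `(∑ θ i ^ 2) ^ 2 = 1`; the mixed moments are compared with the pure ones
through the unit vectors `(e i ± e j) / √2`. -/
lemma dm_four {n : ℕ} {v : Euc n} (hv : ‖v‖ = 1) :
    (n : ℝ) ^ 2 * ∫ θ, ⟪v, θ⟫_ℝ ^ 4 ∂(dm n) ≤ 3 * (dm n).real Set.univ := by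
  set m := ∫ θ, ⟪v, θ⟫_ℝ ^ 4 ∂(dm n) with hm
  have h1 : ∫ θ : Euc n, ∑ i, ∑ j, (θ i) ^ 2 * (θ j) ^ 2 ∂(dm n) = (dm n).real Set.univ := by
    rw [← mul_one ((dm n).real Set.univ), ← smul_eq_mul, ← integral_const]
    refine integral_congr_ae ?_
    filter_upwards [dm_norm n] with θ hθ
    have := EuclideanSpace.real_norm_sq_eq θ
    rw [← Finset.sum_mul_sum, ← this, hθ]; simp
  rw [integral_finsetSum _ fun i _ => dm_integrable (by fun_prop)] at h1
  have h4 : ∀ w : Euc n, ‖w‖ = 1 → ∫ θ, ⟪w, θ⟫_ℝ ^ 4 ∂(dm n) = m := fun w hw =>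
    dm_rot (hw.trans hv.symm) (fun t => t ^ 4)
  have hm0 : 0 ≤ m := integral_nonneg fun θ => by positivity
  have h2 : ∀ i j : Fin n, m / 3 ≤ ∫ θ : Euc n, (θ i) ^ 2 * (θ j) ^ 2 ∂(dm n) := by
    intro i j
    by_cases hij : i = j
    · subst hij
      have := h4 (EuclideanSpace.single i 1) (by simp)
      simp only [EuclideanSpace.inner_single_left, map_one, one_mul] at this
      have e : ∀ θ : Euc n, (θ i) ^ 2 * (θ i) ^ 2 = (θ i) ^ 4 := fun θ => by ring
      simp only [e, this]; linarith
    · have s2 : (√2)⁻¹ ^ 2 = (1 / 2 : ℝ) := by rw [inv_pow, Real.sq_sqrt (by norm_num)]; norm_num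
      have nn : ∀ s : ℝ, s ^ 2 = 1 → ‖(√2)⁻¹ • (EuclideanSpace.single i 1 +
          s • EuclideanSpace.single j 1 : Euc n)‖ = 1 := by
        intro s hs
        rw [← sq_eq_sq₀ (norm_nonneg _) (by norm_num), norm_smul, mul_pow, Real.norm_eq_abs, sq_abs,
          s2, @norm_add_sq_real]
        simp [norm_smul, inner_smul_right, EuclideanSpace.inner_single_left, hij, hs]
        norm_num
      have ha := h4 _ (nn 1 (by norm_num))
      have hb := h4 _ (nn (-1) (by norm_num))
      have hi := h4 (EuclideanSpace.single i 1) (by simp)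
      have hj := h4 (EuclideanSpace.single j 1) (by simp)
      simp only [inner_smul_left, inner_add_left, EuclideanSpace.inner_single_left, map_one,
        one_mul, conj_trivial, mul_pow] at ha hb hi hj
      rw [integral_const_mul] at ha hb
      have s4 : (√2)⁻¹ ^ 4 = (1 / 4 : ℝ) := by
        rw [show (4 : ℕ) = 2 * 2 by norm_num, pow_mul, s2]; norm_num
      rw [s4] at ha hb
      have hs : ∫ θ : Euc n, (θ i + θ j) ^ 4 ∂(dm n) + ∫ θ : Euc n, (θ i + -1 * θ j) ^ 4 ∂(dm n) =
          2 * m + 2 * m + 12 * ∫ θ : Euc n, (θ i) ^ 2 * (θ j) ^ 2 ∂(dm n) := by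
        rw [← integral_add (dm_integrable (by fun_prop)) (dm_integrable (by fun_prop))]
        nth_rewrite 1 [← hi]
        rw [← hj, ← integral_const_mul, ← integral_const_mul, ← integral_const_mul,
          ← integral_add (dm_integrable (by fun_prop)) (dm_integrable (by fun_prop)),
          ← integral_add (dm_integrable (by fun_prop)) (dm_integrable (by fun_prop))]
        congr 1; ext θ; ring
      linarith
  have h3 : ∑ i : Fin n, ∑ j : Fin n, m / 3 ≤ (dm n).real Set.univ := by
    rw [← h1]
    refine Finset.sum_le_sum fun i _ => ?_
    rw [integral_finsetSum _ fun i _ => dm_integrable (by fun_prop)]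
    exact Finset.sum_le_sum fun j _ => h2 i j
  simp at h3
  nlinarith

/-- The mean of `|⟪v, θ⟫|` is at least of order `1 / √n`, by its second and fourth moments and the
inequality `3 * t ^ 2 - t ^ 4 ≤ 2 * t` for `t ≥ 0`. -/
lemma dm_mass {n : ℕ} (hn : 1 ≤ n) : (dm n).real Set.univ ≤ 2 * √n * dβ n := by
  set v : Euc n := EuclideanSpace.single ⟨0, hn⟩ 1
  have hv : ‖v‖ = 1 := by simp [v]
  have h1 := dm_abs v
  have h2 := dm_sq hv
  have h4 := dm_four hv
  set M := (dm n).real Set.univ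
  have hs : √(n : ℝ) ^ 2 = n := Real.sq_sqrt (Nat.cast_nonneg _)
  have hI : ∫ θ, (3 * (n / 4) * ⟪v, θ⟫_ℝ ^ 2 - n ^ 2 / 16 * ⟪v, θ⟫_ℝ ^ 4) / 2 ∂(dm n) ≤
      ∫ θ, √n / 2 * |⟪v, θ⟫_ℝ| ∂(dm n) := by
    refine integral_mono (dm_integrable (by fun_prop)) (dm_integrable (by fun_prop)) fun θ => ?_
    set t := √n / 2 * |⟪v, θ⟫_ℝ| with ht
    have t0 : 0 ≤ t := by positivity
    have e2 : t ^ 2 = n / 4 * ⟪v, θ⟫_ℝ ^ 2 := by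
      rw [ht, mul_pow, sq_abs, div_pow, hs]; ring
    have e4 : t ^ 4 = n ^ 2 / 16 * ⟪v, θ⟫_ℝ ^ 4 := by
      rw [show t ^ 4 = (t ^ 2) ^ 2 by ring, e2]; ring
    have : 0 ≤ t * ((t - 1) ^ 2 * (t + 2)) := by positivity
    simp only
    nlinarith
  rw [integral_const_mul, integral_div, integral_sub (dm_integrable (by fun_prop))
    (dm_integrable (by fun_prop)), integral_const_mul, integral_const_mul, h1, hv] at hI
  have : 0 ≤ √(n : ℝ) * dβ n := mul_nonneg (Real.sqrt_nonneg _) (dβ_nonneg n)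
  nlinarith

lemma dm_univ_pos {n : ℕ} (hn : 1 ≤ n) : 0 < (dm n).real Set.univ := by
  have hne : dm n Set.univ ≠ 0 := by
    rw [← lintegral_one, lintegral_dm measurable_const]
    intro h
    rw [lintegral_eq_zero_iff (by fun_prop)] at h
    have h0 : ∀ᵐ d ∂(volume.restrict (shell (norm : Euc n → ℝ))), False := by
      filter_upwards [h, ae_restrict_mem (shell_meas measurable_norm)] with d hd hs
      have : 0 < ‖d‖ := zero_lt_one.trans hs.1
      simp only [mul_one, Pi.zero_apply, ENNReal.ofReal_eq_zero] at hd
      have : 0 < (‖d‖ ^ n)⁻¹ := by positivity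
      linarith
    have h1 : volume (shell (norm : Euc n → ℝ)) = 0 := by
      simpa [Filter.eventually_false_iff_eq_bot, ae_eq_bot] using h0
    have ho : IsOpen (shell (norm : Euc n → ℝ)) :=
      (isOpen_lt continuous_const continuous_norm).inter (isOpen_lt continuous_norm continuous_const)
    refine (ho.measure_pos volume ⟨EuclideanSpace.single ⟨0, hn⟩ 2, ?_⟩).ne' h1
    have := Real.exp_one_gt_d9
    simp [shell]; linarith
  exact ENNReal.toReal_pos hne (measure_ne_top _ _)

lemma dβ_pos {n : ℕ} (hn : 1 ≤ n) : 0 < dβ n := by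
  have h1 := dm_mass hn
  have h2 := dm_univ_pos hn
  have : 0 < √(n : ℝ) := Real.sqrt_pos.2 (by exact_mod_cast hn)
  by_contra h
  push Not at h
  nlinarith

namespace Body
variable {n : ℕ} {K : Set (Euc n)} {ν : Euc n → Euc n} {r : ℝ} {o : Euc n}

/-- The billiard kernel from `u` is the law of the exit point of the chord from `u` whose direction has
density `⟪ν u, θ⟫⁺`. -/
lemma sig_kernel_dm (B : Body K ν r) (hm : Measurable ν) (ho : o ∈ interior K) {u : Euc n}
    (hu : u ∈ frontier K) {f : Euc n → ℝ≥0∞} (hf : Measurable f) :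
    ∫⁻ w, ENNReal.ofReal (bker ν u w) * f w ∂(sig K ν o) =
      ∫⁻ θ, ENNReal.ofReal ⟪ν u, θ⟫_ℝ * f (ext K θ u) ∂(dm n) := by
  rw [B.sig_kernel hm ho hu hf, lintegral_dm]
  · refine setLIntegral_congr_fun (shell_meas measurable_norm) fun d hd => ?_
    have hd0 : 0 < ‖d‖ := zero_lt_one.trans hd.1
    by_cases hp : 0 < ⟪ν u, d⟫_ℝ
    · obtain ⟨H, hH, he, hf', hneg⟩ := B.ext_bdry hu hp
      have e : ext K (‖d‖⁻¹ • d) u = ext K d u := by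
        refine B.ext_eq (s := H * ‖d‖) hf' ?_ ?_
        · rw [inner_smul_right]; exact mul_neg_of_pos_of_neg (inv_pos.2 hd0) hneg
        · rw [smul_smul, mul_assoc, mul_inv_cancel₀ hd0.ne', mul_one, he]
      rw [e, inner_smul_right, ← mul_assoc, ← ENNReal.ofReal_mul (by positivity)]
      congr 2
      field_simp
      ring
    · have h1 : ⟪ν u, d⟫_ℝ ≤ 0 := not_lt.1 hp
      rw [ENNReal.ofReal_of_nonpos, inner_smul_right, ENNReal.ofReal_of_nonpos (p := _ * _)]
      · simp
      · exact mul_nonpos_of_nonneg_of_nonpos (by positivity) h1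
      · exact mul_nonpos_of_nonpos_of_nonneg h1 (by positivity)
  · exact Measurable.mul (by fun_prop) (hf.comp (B.ext_meas_right (B.frontier_sub hu)))

end Body

/-! ### Overlap of one-step distributions -/

/-- The unnormalised one-step distribution of the billiard from `u`. -/
def bQ {n : ℕ} (K : Set (Euc n)) (ν : Euc n → Euc n) (o u : Euc n) (T : Set (Euc n)) : ℝ≥0∞ :=
  ∫⁻ w in T, ENNReal.ofReal (bker ν u w) ∂(sig K ν o)

lemma one_add_inv_pow {n : ℕ} (hn : 1 ≤ n) : (1 + 1 / (n : ℝ)) ^ (n + 1) ≤ 9 := by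
  have hn' : (1 : ℝ) ≤ n := by exact_mod_cast hn
  have h1 : 1 + 1 / (n : ℝ) ≤ Real.exp (1 / n) := by
    have := Real.add_one_le_exp (1 / (n : ℝ)); linarith
  calc (1 + 1 / (n : ℝ)) ^ (n + 1) ≤ (Real.exp (1 / n)) ^ (n + 1) := by gcongr
    _ = Real.exp (((n + 1 : ℕ) : ℝ) * (1 / n)) := by rw [Real.exp_nat_mul]
    _ ≤ Real.exp 2 := by
        refine Real.exp_le_exp.2 ?_
        push_cast
        rw [mul_one_div, div_le_iff₀ (by linarith)]; linarith
    _ = Real.exp 1 ^ 2 := by rw [← Real.exp_nat_mul]; norm_num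
    _ ≤ 9 := by
        have := Real.exp_one_lt_d9
        have := Real.exp_pos 1
        nlinarith

lemma measurable_bker {n : ℕ} {ν : Euc n → Euc n} (hm : Measurable ν) (u : Euc n) :
    Measurable fun w => bker ν u w := by
  unfold bker
  fun_prop

namespace Body
variable {n : ℕ} {K : Set (Euc n)} {ν : Euc n → Euc n} {r : ℝ} {o : Euc n}

set_option maxHeartbeats 1000000 in
/-- From nearby starting points the kernel densities are comparable at every target seen from `u`
neither too tangentially nor too much along the displacement `v - u`. -/
lemma bker_compare (B : Body K ν r) (hn : 1 ≤ n) {u v θ : Euc n} (hu : u ∈ frontier K)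
    (hv : v ∈ frontier K) (hθ : ‖θ‖ = 1) (hc : 1 / (32 * √n) ≤ ⟪ν u, θ⟫_ℝ)
    (ht : |⟪θ, v - u⟫_ℝ| ≤ ‖v - u‖ * (32 / √n)) (hd : ‖v - u‖ ≤ r / (4096 * n)) :
    bker ν u (ext K θ u) ≤ 12 * bker ν v (ext K θ u) := by
  have hr := B.rpos
  set s := √(n : ℝ) with hs
  have hn' : (1 : ℝ) ≤ n := by exact_mod_cast hn
  have hs1 : 1 ≤ s := Real.one_le_sqrt.2 hn'
  have hss : (n : ℝ) = s ^ 2 := (Real.sq_sqrt (by linarith)).symm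
  have hs0 : 0 < s := by linarith
  set c := ⟪ν u, θ⟫_ℝ with hcd
  have hc0 : 0 < c := lt_of_lt_of_le (by positivity) hc
  obtain ⟨ℓ, hℓ, he, hwf, hneg⟩ := B.ext_bdry hu hc0
  set w := ext K θ u
  set δ := ‖v - u‖ with hδ
  have hδ0 : 0 ≤ δ := norm_nonneg _
  have hwu : w - u = ℓ • θ := by rw [he]; abel
  have hnwu : ‖w - u‖ = ℓ := by rw [hwu, norm_smul, hθ, mul_one, Real.norm_of_nonneg hℓ.le]
  have hcs : 1 ≤ 32 * s * c := by
    rw [div_le_iff₀ (by positivity)] at hc; linarith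
  have hc1 : c ≤ 1 := by
    have := real_inner_le_norm (ν u) θ
    rw [B.norm_normal u hu, hθ] at this; linarith
  have hℓ2 : 2 * r * c ≤ ℓ := by
    have := B.sq_bound hu hwf.2
    rw [hnwu, hwu, inner_smul_right] at this
    rw [← hcd] at this
    nlinarith
  have hds : δ * (4096 * s ^ 2) ≤ r := by
    rw [hss, le_div_iff₀ (by positivity)] at hd; exact hd
  -- cosine at the starting point
  have a0 : ⟪ν u, w - u⟫_ℝ = ℓ * c := by rw [hwu, inner_smul_right]
  have a1 : ℓ * c ≤ 2 * ⟪ν v, w - v⟫_ℝ := by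
    have e : ⟪ν v, w - v⟫_ℝ = ⟪ν v, u - v⟫_ℝ + ⟪ν u, w - u⟫_ℝ - ⟪ν u - ν v, w - u⟫_ℝ := by
      rw [inner_sub_left, show w - v = (u - v) + (w - u) by abel, inner_add_right]; ring
    have h1 := B.supp v hv u (B.frontier_sub hu)
    have h2 := real_inner_le_norm (ν u - ν v) (w - u)
    have h3 := B.normal_lip hu hv
    rw [hnwu] at h2
    rw [norm_sub_rev u v, ← hδ, le_div_iff₀ hr] at h3
    have h4 : ‖ν u - ν v‖ ≤ c / 2 := by
      have q1 : ‖ν u - ν v‖ * (4096 * s ^ 2) ≤ 1 := by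
        by_contra hh
        push Not at hh
        nlinarith [mul_lt_mul_of_pos_right hh hr]
      have q2 : 1 ≤ c / 2 * (4096 * s ^ 2) := by nlinarith
      by_contra hh
      push Not at hh
      nlinarith [mul_lt_mul_of_pos_right hh (by positivity : 0 < 4096 * s ^ 2)]
    rw [e, a0]
    nlinarith
  -- cosine at the target: the chord passes through the inner ball at `u` with clearance `r c² / 2`
  have b0 : r * c ^ 2 / 2 ≤ ⟪ν w, u - w⟫_ℝ := by
    have hsub : closedBall (u + (r * c) • θ) (r * c ^ 2 / 2) ⊆ K := by
      refine (closedBall_subset_closedBall' ?_).trans (B.ball_sub u hu)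
      have : dist (u + (r * c) • θ) (u + r • ν u) ≤ r * (1 - c ^ 2 / 2) := by
        rw [dist_add_left, dist_eq_norm, ← sq_le_sq₀ (norm_nonneg _)
          (mul_nonneg hr.le (by nlinarith)),
          @norm_sub_sq_real, norm_smul, norm_smul, hθ, B.norm_normal u hu, inner_smul_left,
          inner_smul_right, real_inner_comm, ← hcd, Real.norm_of_nonneg hr.le,
          Real.norm_of_nonneg (by positivity : 0 ≤ r * c)]
        simp only [conj_trivial]
        nlinarith [sq_nonneg (r * c ^ 2)]
      linarith
    have h1 := B.clear hwf (by positivity) hsub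
    have e1 : u + (r * c) • θ - w = (1 - r * c / ℓ) • (u - w) := by
      rw [show u - w = -(ℓ • θ) by rw [← hwu]; abel, he, smul_neg, smul_smul, sub_mul,
        div_mul_cancel₀ _ hℓ.ne', sub_smul]
      module
    rw [e1, inner_smul_right] at h1
    have h2 := B.supp w hwf u (B.frontier_sub hu)
    have h3 : 0 ≤ r * c / ℓ := by positivity
    linarith [mul_nonneg h3 h2]
  have b1 : ⟪ν w, u - w⟫_ℝ ≤ 2 * ⟪ν w, v - w⟫_ℝ := by
    have e : ⟪ν w, v - w⟫_ℝ = ⟪ν w, v - u⟫_ℝ + ⟪ν w, u - w⟫_ℝ := by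
      rw [← inner_add_right]; congr 1; abel
    have h2 := abs_le.1 (abs_real_inner_le_norm (ν w) (v - u))
    rw [B.norm_normal w hwf, one_mul] at h2
    have h3 : δ ≤ r * c ^ 2 / 4 := by
      have q : 1 ≤ (32 * s * c) ^ 2 := one_le_pow₀ hcs
      by_contra hh
      push Not at hh
      nlinarith [mul_lt_mul_of_pos_right hh (by positivity : 0 < 4096 * s ^ 2)]
    linarith [h2.1]
  -- distances
  have d1 : ‖v - w‖ ^ 2 ≤ ℓ ^ 2 * (1 + 1 / n) := by
    have e : v - w = (v - u) - ℓ • θ := by rw [← hwu]; abel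
    have q1 : δ * (256 * s) ≤ ℓ := by
      have : r ≤ 16 * s * ℓ := by nlinarith
      have : δ * (4096 * s ^ 2) ≤ 16 * s * ℓ := by linarith
      by_contra hh
      push Not at hh
      nlinarith [mul_lt_mul_of_pos_right hh (by positivity : 0 < 16 * s)]
    have q2 : δ * (32 / s) ≤ ℓ / (8 * n) := by
      rw [hss, le_div_iff₀ (by positivity)]
      have : δ * (32 / s) * (8 * s ^ 2) = δ * (256 * s) := by field_simp; ring
      linarith
    have q3 : δ ^ 2 ≤ ℓ ^ 2 / (65536 * n) := by
      rw [hss, le_div_iff₀ (by positivity)]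
      have : (δ * (256 * s)) ^ 2 ≤ ℓ ^ 2 := pow_le_pow_left₀ (by positivity) q1 2
      nlinarith
    rw [e, @norm_sub_sq_real, norm_smul, hθ, mul_one, Real.norm_of_nonneg hℓ.le, inner_smul_right,
      real_inner_comm, ← hδ]
    have h1 := (abs_le.1 ht).1
    have h2 : ℓ ^ 2 / (65536 * n) ≤ ℓ ^ 2 * (1 / n) / 2 := by
      rw [mul_one_div, div_div]
      exact div_le_div_of_nonneg_left (by positivity) (by positivity) (by linarith)
    have h3 : ℓ * (ℓ / (8 * n)) ≤ ℓ ^ 2 * (1 / n) / 4 := by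
      rw [mul_one_div, div_div, ← mul_div_assoc, ← sq]
      exact div_le_div_of_nonneg_left (by positivity) (by positivity) (by linarith)
    nlinarith
  have d2 : ‖v - w‖ ^ (n + 1) ≤ 3 * ℓ ^ (n + 1) := by
    rw [← sq_le_sq₀ (by positivity) (by positivity), ← pow_mul, mul_comm (n + 1) 2, pow_mul]
    calc (‖v - w‖ ^ 2) ^ (n + 1) ≤ (ℓ ^ 2 * (1 + 1 / n)) ^ (n + 1) := by gcongr
      _ = (ℓ ^ 2) ^ (n + 1) * (1 + 1 / (n : ℝ)) ^ (n + 1) := mul_pow _ _ _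
      _ ≤ (ℓ ^ 2) ^ (n + 1) * 9 := by gcongr; exact one_add_inv_pow hn
      _ = _ := by rw [← pow_mul]; ring
  have hvw : 0 < ‖v - w‖ := by
    rw [norm_pos_iff]
    intro h
    have h' : w - v = 0 := by rw [← neg_sub, h, neg_zero]
    rw [h', inner_zero_right] at a1
    nlinarith [mul_pos hℓ hc0]
  have b2 : 0 ≤ ⟪ν w, u - w⟫_ℝ := le_trans (by positivity) b0
  rw [bker, bker, norm_sub_rev u w, hnwu, a0, ← mul_div_assoc, div_le_div_iff₀ (by positivity)
    (by positivity)]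
  calc ℓ * c * ⟪ν w, u - w⟫_ℝ * ‖v - w‖ ^ (n + 1)
      ≤ (2 * ⟪ν v, w - v⟫_ℝ) * (2 * ⟪ν w, v - w⟫_ℝ) * (3 * ℓ ^ (n + 1)) := by
        have := mul_pos hℓ hc0
        refine mul_le_mul (mul_le_mul a1 b1 b2 (by linarith)) d2 (by positivity) ?_
        exact mul_nonneg (by linarith) (by linarith)
    _ = _ := by ring

/-- One-step distributions from points at distance at most `r / (4096 n)` overlap: if `S` and `T`
cover the boundary, it is not possible that both `S` is unlikely from `v` and `T` is unlikely
from `u`. -/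
lemma overlap (B : Body K ν r) (hm : Measurable ν) (ho : o ∈ interior K) (hn : 1 ≤ n)
    {u v : Euc n} (hu : u ∈ frontier K) (hv : v ∈ frontier K) (hd : ‖v - u‖ ≤ r / (4096 * n))
    {S T : Set (Euc n)} (hS : MeasurableSet S) (hST : frontier K ⊆ S ∪ T) :
    ENNReal.ofReal (dβ n / 4) ≤ 12 * bQ K ν o v S + bQ K ν o u T := by
  have hn' : (1 : ℝ) ≤ n := by exact_mod_cast hn
  set s := √(n : ℝ) with hs
  have hs1 : 1 ≤ s := Real.one_le_sqrt.2 hn'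
  have hss : (n : ℝ) = s ^ 2 := (Real.sq_sqrt (by linarith)).symm
  have hs0 : 0 < s := by linarith
  set W : Set (Euc n) := {w | bker ν u w ≤ 12 * bker ν v w} with hW
  have mW : MeasurableSet W :=
    measurableSet_le (measurable_bker hm u) ((measurable_bker hm v).const_mul 12)
  obtain ⟨τ, hτ, hvu⟩ : ∃ τ : Euc n, ‖τ‖ = 1 ∧ v - u = ‖v - u‖ • τ := by
    by_cases h : v - u = 0
    · exact ⟨ν u, B.norm_normal u hu, by simp [h]⟩
    · refine ⟨‖v - u‖⁻¹ • (v - u), ?_, ?_⟩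
      · rw [norm_smul, norm_inv, norm_norm, inv_mul_cancel₀ (norm_ne_zero_iff.2 h)]
      · rw [smul_smul, mul_inv_cancel₀ (norm_ne_zero_iff.2 h), one_smul]
  -- `g` dominates `⟪ν u, θ⟫⁺` on the directions excluded in `bker_compare`, and has small integral.
  set g : Euc n → ℝ := fun θ => 1 / (32 * s) + s / 64 * (⟪ν u, θ⟫_ℝ ^ 2 + ⟪τ, θ⟫_ℝ ^ 2) with hg
  have hg0 : ∀ θ, 0 ≤ g θ := fun θ => by positivity
  have hgc : Continuous g := by fun_prop
  have hβ := dβ_nonneg n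
  have hgI : ∫ θ, g θ ∂(dm n) ≤ dβ n / 8 := by
    have h1 := dm_sq (B.norm_normal u hu)
    have h2 := dm_sq hτ
    have h3 := dm_mass hn
    rw [← hs] at h3
    set M := (dm n).real Set.univ with hM
    simp only [hg]
    rw [integral_add (dm_integrable (by fun_prop)) (dm_integrable (by fun_prop)),
      integral_const_mul, integral_add (dm_integrable (by fun_prop)) (dm_integrable (by fun_prop)),
      integral_const, smul_eq_mul, ← hM]
    have e1 : ∫ θ, ⟪ν u, θ⟫_ℝ ^ 2 ∂(dm n) = M / s ^ 2 := by rw [← h1, hss]; field_simp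
    have e2 : ∫ θ, ⟪τ, θ⟫_ℝ ^ 2 ∂(dm n) = M / s ^ 2 := by rw [← h2, hss]; field_simp
    rw [e1, e2]
    have : M * (1 / (32 * s)) + s / 64 * (M / s ^ 2 + M / s ^ 2) = M / (16 * s) := by
      field_simp; ring
    rw [this, div_le_iff₀ (by positivity)]
    linarith
  have hpt : ∀ᵐ θ ∂(dm n), ENNReal.ofReal ⟪ν u, θ⟫_ℝ ≤
      ENNReal.ofReal ⟪ν u, θ⟫_ℝ * W.indicator 1 (ext K θ u) + ENNReal.ofReal (g θ) := by
    filter_upwards [dm_norm n] with θ hθ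
    by_cases hw : ext K θ u ∈ W
    · rw [Set.indicator_of_mem hw]; simp
    rw [Set.indicator_of_notMem hw, mul_zero, zero_add]
    refine ENNReal.ofReal_le_ofReal ?_
    by_cases hc : 1 / (32 * s) ≤ ⟪ν u, θ⟫_ℝ
    · by_cases ht : |⟪θ, v - u⟫_ℝ| ≤ ‖v - u‖ * (32 / s)
      · exact absurd (B.bker_compare hn hu hv hθ hc ht hd) hw
      · have h1 : 32 / s < |⟪τ, θ⟫_ℝ| := by
          rw [hvu, inner_smul_right, abs_mul, abs_norm, real_inner_comm, ← hvu] at ht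
          push Not at ht
          exact lt_of_mul_lt_mul_left ht (norm_nonneg _)
        have hc0 : 0 < ⟪ν u, θ⟫_ℝ := lt_of_lt_of_le (by positivity) hc
        rw [div_lt_iff₀ hs0] at h1
        have h2 : ⟪ν u, θ⟫_ℝ ≤ s / 32 * (⟪ν u, θ⟫_ℝ * |⟪τ, θ⟫_ℝ|) := by nlinarith
        have h3 := two_mul_le_add_sq ⟪ν u, θ⟫_ℝ |⟪τ, θ⟫_ℝ|
        rw [sq_abs] at h3
        have h4 : 0 < 1 / (32 * s) := by positivity
        simp only [hg]
        nlinarith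
    · push Not at hc
      have : 0 ≤ s / 64 * (⟪ν u, θ⟫_ℝ ^ 2 + ⟪τ, θ⟫_ℝ ^ 2) := by positivity
      simp only [hg]; linarith
  have hmW : Measurable (W.indicator (1 : Euc n → ℝ≥0∞)) := measurable_one.indicator mW
  have hQW : bQ K ν o u W = ∫⁻ θ, ENNReal.ofReal ⟪ν u, θ⟫_ℝ * W.indicator 1 (ext K θ u) ∂(dm n) := by
    rw [← B.sig_kernel_dm hm ho hu hmW, bQ, ← lintegral_indicator mW]
    congr 1; ext w
    by_cases h : w ∈ W <;> simp [h]
  have h1 : ENNReal.ofReal (dβ n / 2) ≤ bQ K ν o u W + ENNReal.ofReal (dβ n / 8) := by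
    calc ENNReal.ofReal (dβ n / 2) = ∫⁻ θ, ENNReal.ofReal ⟪ν u, θ⟫_ℝ ∂(dm n) := by
          rw [dm_pos_part, B.norm_normal u hu, mul_one]
      _ ≤ _ := lintegral_mono_ae hpt
      _ = bQ K ν o u W + ∫⁻ θ, ENNReal.ofReal (g θ) ∂(dm n) := by
          rw [lintegral_add_right _ (by fun_prop), hQW]
      _ ≤ _ := by
          rw [← ofReal_integral_eq_lintegral_ofReal (dm_integrable hgc) (Eventually.of_forall hg0)]
          gcongr
  have h2 : bQ K ν o u W ≤ 12 * bQ K ν o v S + bQ K ν o u T := by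
    have hsub : (W : Set (Euc n)) ≤ᵐ[sig K ν o] (W ∩ S ∪ T : Set (Euc n)) := by
      have : ∀ᵐ w ∂(sig K ν o), w ∈ frontier K := B.sig_compl hm ho
      filter_upwards [this] with w hw hwW
      rcases hST hw with h | h
      · exact Or.inl ⟨hwW, h⟩
      · exact Or.inr h
    calc bQ K ν o u W ≤ bQ K ν o u (W ∩ S ∪ T) := lintegral_mono' (Measure.restrict_mono_ae hsub) le_rfl
      _ ≤ bQ K ν o u (W ∩ S) + bQ K ν o u T := lintegral_union_le _ _ _
      _ ≤ 12 * bQ K ν o v S + bQ K ν o u T := by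
          gcongr
          calc bQ K ν o u (W ∩ S) ≤ ∫⁻ w in W ∩ S, 12 * ENNReal.ofReal (bker ν v w) ∂(sig K ν o) := by
                refine setLIntegral_mono' (mW.inter hS) fun w hw => ?_
                rw [show (12 : ℝ≥0∞) = ENNReal.ofReal 12 by simp,
                  ← ENNReal.ofReal_mul (by norm_num)]
                exact ENNReal.ofReal_le_ofReal hw.1
            _ = 12 * bQ K ν o v (W ∩ S) := by
                rw [lintegral_const_mul _ (measurable_bker hm v).ennreal_ofReal]; rfl
            _ ≤ _ := by
                gcongr
                exact lintegral_mono_set Set.inter_subset_right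
  have h3 : ENNReal.ofReal (dβ n / 2) = ENNReal.ofReal (dβ n / 4) + ENNReal.ofReal (dβ n / 8)
      + ENNReal.ofReal (dβ n / 8) := by
    rw [← ENNReal.ofReal_add (by positivity) (by positivity),
      ← ENNReal.ofReal_add (by positivity) (by positivity)]
    congr 1; ring
  rw [h3] at h1
  have h4 := (ENNReal.add_le_add_iff_right ENNReal.ofReal_ne_top).1 h1
  exact (le_add_right le_rfl).trans (h4.trans h2)

end Body

/-! ### Smooth separation of distant sets -/

/-- A `C¹` function separating two sets at distance `δ`, with gradient at most `2 / δ`: the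
mollification at scale `δ / 4` of a truncated distance function. -/
lemma smooth_sep {n : ℕ} {S T : Set (Euc n)} {δ : ℝ} (hδ : 0 < δ)
    (h : ∀ a ∈ S, ∀ b ∈ T, δ ≤ ‖a - b‖) :
    ∃ F : Euc n → ℝ, ContDiff ℝ 1 F ∧ (∀ x, 0 ≤ F x) ∧ (∀ x, F x ≤ 1) ∧ (∀ a ∈ S, F a = 1) ∧
      (∀ b ∈ T, F b = 0) ∧ LipschitzWith (2 / δ).toNNReal F := by
  by_cases hT : T = ∅
  · exact ⟨fun _ => 1, contDiff_const, by simp, by simp, by simp, by simp [hT],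
      LipschitzWith.const' 1⟩
  have hTne : T.Nonempty := Set.nonempty_iff_ne_empty.2 hT
  set g : Euc n → ℝ := fun x => max 0 (min 1 (2 / δ * infDist x T - 1 / 2)) with hg
  have hgc : Continuous g := by fun_prop
  have hgl : ∀ x y, |g x - g y| ≤ 2 / δ * ‖x - y‖ := by
    intro x y
    have h1 : |g x - g y| ≤ |(2 / δ * infDist x T - 1 / 2) - (2 / δ * infDist y T - 1 / 2)| := by
      refine (abs_max_sub_max_le_max 0 _ 0 _).trans (max_le (by simp) ?_)
      exact (abs_min_sub_min_le_max 1 _ 1 _).trans (max_le (by simp) le_rfl)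
    refine h1.trans ?_
    rw [sub_sub_sub_cancel_right, ← mul_sub, abs_mul, abs_of_pos (by positivity)]
    gcongr
    have := (lipschitz_infDist_pt T).dist_le_mul x y
    simpa [Real.dist_eq, dist_eq_norm] using this
  have hg0 : ∀ x, 0 ≤ g x := fun x => le_max_left _ _
  have hg1 : ∀ x, g x ≤ 1 := fun x => max_le zero_le_one (min_le_left _ _)
  let φ : ContDiffBump (0 : Euc n) := ⟨δ / 8, δ / 4, by positivity, by linarith⟩
  set F : Euc n → ℝ :=
    convolution (φ.normed volume) g (ContinuousLinearMap.lsmul ℝ ℝ) volume with hF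
  have hFe : ∀ x, F x = ∫ t, φ.normed volume t * g (x - t) := by
    intro x; simp [hF, convolution]
  have hInt : ∀ x, Integrable fun t => φ.normed volume t * g (x - t) := by
    intro x
    have hc : Continuous fun t => g (x - t) := hgc.comp (by fun_prop)
    refine φ.integrable_normed.mul_bdd (c := 1) hc.aestronglyMeasurable
      (Eventually.of_forall fun t => ?_)
    rw [Real.norm_of_nonneg (hg0 _)]; exact hg1 _
  have hfr : ∀ x, (∀ y ∈ ball x (δ / 4), g y = g x) → F x = g x := fun x hx =>
    φ.normed_convolution_eq_right hx
  refine ⟨F, φ.hasCompactSupport_normed.contDiff_convolution_left _ φ.contDiff_normed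
    hgc.locallyIntegrable, fun x => ?_, fun x => ?_, fun a ha => ?_, fun b hb => ?_, ?_⟩
  · rw [hFe]
    exact integral_nonneg fun t => mul_nonneg (φ.nonneg_normed t) (hg0 _)
  · rw [hFe, ← φ.integral_normed (μ := volume)]
    exact integral_mono (hInt x) φ.integrable_normed fun t =>
      mul_le_of_le_one_right (φ.nonneg_normed t) (hg1 _)
  · have h1 : ∀ y ∈ ball a (δ / 4), g y = 1 := by
      intro y hy
      have h2 : δ ≤ infDist a T :=
        (le_infDist hTne).2 fun b hb => by rw [dist_eq_norm]; exact h a ha b hb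
      have h3 := infDist_le_infDist_add_dist (s := T) (x := a) (y := y)
      rw [mem_ball, dist_comm] at hy
      have h4 : 3 / 4 * δ ≤ infDist y T := by linarith
      have h5 : 1 ≤ 2 / δ * infDist y T - 1 / 2 := by
        have : 2 / δ * (3 / 4 * δ) ≤ 2 / δ * infDist y T := by gcongr
        have e : 2 / δ * (3 / 4 * δ) = 3 / 2 := by field_simp; norm_num
        linarith
      simp only [hg]
      rw [min_eq_left h5]; simp
    have ha1 := h1 a (mem_ball_self (by positivity))
    rw [hfr a fun y hy => (h1 y hy).trans ha1.symm, ha1]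
  · have h1 : ∀ y ∈ ball b (δ / 4), g y = 0 := by
      intro y hy
      have h3 := infDist_le_dist_of_mem (x := y) hb
      rw [mem_ball] at hy
      have h5 : 2 / δ * infDist y T - 1 / 2 ≤ 0 := by
        have : 2 / δ * infDist y T ≤ 2 / δ * (δ / 4) := by gcongr; linarith
        have e : 2 / δ * (δ / 4) = 1 / 2 := by field_simp; norm_num
        linarith
      simp only [hg]
      exact max_eq_left ((min_le_right _ _).trans h5)
    have ha1 := h1 b (mem_ball_self (by positivity))
    rw [hfr b fun y hy => (h1 y hy).trans ha1.symm, ha1]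
  · refine LipschitzWith.of_dist_le_mul fun x y => ?_
    rw [Real.coe_toNNReal _ (by positivity), Real.dist_eq, dist_eq_norm, hFe, hFe,
      ← integral_sub (hInt x) (hInt y), ← Real.norm_eq_abs]
    refine (norm_integral_le_integral_norm _).trans ?_
    have : (2 / δ * ‖x - y‖) = ∫ t, φ.normed volume t * (2 / δ * ‖x - y‖) := by
      rw [integral_mul_const, φ.integral_normed, one_mul]
    rw [this]
    refine integral_mono ((hInt x).sub (hInt y)).norm (φ.integrable_normed.mul_const _) fun t => ?_
    simp only
    rw [← mul_sub, norm_mul, Real.norm_of_nonneg (φ.nonneg_normed t), Real.norm_eq_abs]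
    refine mul_le_mul_of_nonneg_left ?_ (φ.nonneg_normed t)
    have := hgl (x - t) (y - t)
    rwa [sub_sub_sub_cancel_right] at this

/-! ### A Poincaré inequality on the boundary for a fixed direction -/

namespace Body
variable {n : ℕ} {K : Set (Euc n)} {ν : Euc n → Euc n} {r : ℝ} {o : Euc n}

/-- The area of the shadow of `T` seen along the direction `θ`, counting exit points only. -/
def shad (K : Set (Euc n)) (ν : Euc n → Euc n) (o θ : Euc n) (T : Set (Euc n)) : ℝ≥0∞ :=
  ∫⁻ w in T, ENNReal.ofReal (-⟪ν w, θ⟫_ℝ) ∂(sig K ν o)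

lemma shad_le_vol (B : Body K ν r) (hm : Measurable ν) (ho : o ∈ interior K) {θ : Euc n}
    (hθ : θ ≠ 0) {T X : Set (Euc n)} (hT : MeasurableSet T) (hTX : T ⊆ X) :
    shad K ν o θ T ≤ volume {z ∈ cyl (interior K) θ | ext K θ z ∈ X} := by
  have h1 := B.sig_cyl hm ho hθ (f := T.indicator 1) (measurable_one.indicator hT)
  have h2 : shad K ν o θ T =
      ∫⁻ w, ENNReal.ofReal (-⟪ν w, θ⟫_ℝ) * T.indicator 1 w ∂(sig K ν o) := by
    rw [shad, ← lintegral_indicator hT]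
    congr 1; ext w
    by_cases h : w ∈ T <;> simp [h]
  rw [h2, ← h1]
  have hc : MeasurableSet (cyl (interior K) θ) := (cyl_open isOpen_interior θ).measurableSet
  calc _ = ∫⁻ z in cyl (interior K) θ, (ext K θ ⁻¹' T).indicator 1 z := rfl
    _ ≤ (volume.restrict (cyl (interior K) θ)) (ext K θ ⁻¹' T) := lintegral_indicator_one_le _
    _ = volume (ext K θ ⁻¹' T ∩ cyl (interior K) θ) := Measure.restrict_apply' hc
    _ ≤ volume {z ∈ cyl (interior K) θ | ext K θ z ∈ X} :=
        measure_mono fun z hz => ⟨hz.2, hTX hz.1⟩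

lemma shad_univ (B : Body K ν r) (hm : Measurable ν) (ho : o ∈ interior K) {θ : Euc n}
    (hθ : θ ≠ 0) : shad K ν o θ Set.univ = volume (cyl (interior K) θ) := by
  have h1 := B.sig_cyl hm ho hθ (f := fun _ => 1) measurable_const
  simpa [shad] using h1.symm

lemma shad_univ_ne_top (B : Body K ν r) (hm : Measurable ν) (ho : o ∈ interior K) {θ : Euc n}
    (hθ : θ ≠ 0) : shad K ν o θ Set.univ ≠ ⊤ := by
  rw [B.shad_univ hm ho hθ]
  exact (cyl_bounded (B.cpt.isBounded.subset interior_subset) hθ).measure_lt_top.ne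

lemma cyl_core_iUnion (θ : Euc n) :
    ⋃ j : ℕ, cyl (core K (1 / ((j : ℝ) + 1))) θ = cyl (interior K) θ := by
  apply Set.Subset.antisymm
  · exact Set.iUnion_subset fun j => cyl_mono (core_sub_int (by positivity)) θ
  · rintro z ⟨h1, s, hs⟩
    obtain ⟨ρ, hρ, h⟩ := mem_core_of_int hs
    obtain ⟨j, hj⟩ := exists_nat_one_div_lt hρ
    exact Set.mem_iUnion.2 ⟨j, h1, s, core_anti hj.le h⟩

lemma cyl_core_mono (θ : Euc n) : Monotone fun j : ℕ => cyl (core K (1 / ((j : ℝ) + 1))) θ :=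
  fun i j hij => cyl_mono (core_anti (one_div_le_one_div_of_le (by positivity)
    (by exact_mod_cast Nat.succ_le_succ hij))) θ

/-- The Poincaré inequality for a function on `∂K`, obtained by transporting it along parallel lines
to the cylinder over the shadow of `K`. -/
lemma poin_dir (B : Body K ν r) (hm : Measurable ν) (ho : o ∈ interior K) {θ : Euc n}
    (hθ : ‖θ‖ = 1) {S T : Set (Euc n)} (hS : MeasurableSet S) (hT : MeasurableSet T)
    {F : Euc n → ℝ} {L : ℝ≥0} (hF : ContDiff ℝ 1 F) (F0 : ∀ x, 0 ≤ F x) (F1 : ∀ x, F x ≤ 1)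
    (FS : ∀ x ∈ S, F x = 1) (FT : ∀ x ∈ T, F x = 0) (FL : LipschitzWith L F) :
    shad K ν o θ S * shad K ν o θ T ≤ shad K ν o θ Set.univ *
      ∫⁻ w in (S ∪ T)ᶜ, ENNReal.ofReal (diam K * (L * |⟪ν w, θ⟫_ℝ| + |fderiv ℝ F w θ|))
        ∂(sig K ν o) := by
  have hθ0 : θ ≠ 0 := by rintro rfl; simp at hθ
  have hD : 0 ≤ diam K := diam_nonneg
  have hFd : Differentiable ℝ F := hF.differentiable (by norm_num)
  have hFc : Continuous (fderiv ℝ F) := hF.continuous_fderiv (by norm_num)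
  have hFn : ∀ x, ‖fderiv ℝ F x‖ ≤ L := fun x => norm_fderiv_le_of_lipschitz ℝ FL
  -- `Γ` bounds the radial derivative of the pullback of `F`; the obliqueness in the change of
  -- variables cancels the denominator.
  set Γ : Euc n → ℝ := fun w => diam K * (‖fderiv ℝ F w‖ + |fderiv ℝ F w θ| / |⟪ν w, θ⟫_ℝ|) with hΓ
  have hΓm : Measurable Γ := by
    have h1 : Measurable fun w => ‖fderiv ℝ F w‖ := hFc.norm.measurable
    have h2 : Measurable fun w => |fderiv ℝ F w θ| := by
      exact (hFc.clm_apply continuous_const).abs.measurable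
    have h3 : Measurable fun w => |⟪ν w, θ⟫_ℝ| := by fun_prop
    exact (h1.add (h2.div h3)).const_mul _
  have step : ∀ j : ℕ,
      volume {z ∈ cyl (core K (1 / ((j : ℝ) + 1))) θ | ext K θ z ∈ {w | F w = 1}} *
        volume {z ∈ cyl (core K (1 / ((j : ℝ) + 1))) θ | ext K θ z ∈ {w | F w = 0}} ≤
      shad K ν o θ Set.univ * ∫⁻ z in cyl (interior K) θ, ENNReal.ofReal (Γ (ext K θ z)) := by
    intro j
    set ρ : ℝ := 1 / ((j : ℝ) + 1) with hρd
    have hρ : 0 < ρ := by positivity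
    have hsub : cyl (core K ρ) θ ⊆ cyl (interior K) θ := cyl_mono (core_sub_int hρ.le) θ
    have hbd : Bornology.IsBounded (cyl (core K ρ) θ) :=
      (cyl_bounded (B.cpt.isBounded.subset interior_subset) hθ0).subset hsub
    have hp := poincare (cyl_open (core_open ρ) θ) (cyl_convex (core_convex B.cvx ρ) θ) hbd
      (f := fun z => F (ext K θ z)) (L := L * (1 + diam K / ρ)) (by positivity)
      (f' := fun z => (fderiv ℝ F (ext K θ z)).comp (extD ν θ (ext K θ z)))
      (G := fun z => Γ (ext K θ z)) ?_ (fun z _ => F0 _) (fun z _ => F1 _) ?_ ?_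
    · refine hp.trans ?_
      rw [B.shad_univ hm ho hθ0]
      exact mul_le_mul' (measure_mono hsub) (lintegral_mono_set hsub)
    · rintro x ⟨-, s, hs⟩ y ⟨-, t, ht⟩
      have h1 := FL.dist_le_mul (ext K θ x) (ext K θ y)
      rw [Real.dist_eq, dist_eq_norm] at h1
      refine h1.trans ?_
      rw [mul_assoc]
      gcongr
      exact B.ext_lip hρ hθ0 ht hs
    · rintro z ⟨-, s, hs⟩
      exact (hFd _).hasFDerivAt.comp z (B.ext_hasFDerivAt hθ0 (core_sub_int hρ.le hs))
    · rintro z ⟨-, s, hs⟩ k ⟨-, t, ht⟩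
      obtain ⟨H, -, -, hwf, hneg⟩ := B.ext_int hθ0 (core_sub_int hρ.le hs)
      set w := ext K θ z
      set p := z + s • θ with hp
      set q := k + t • θ with hq
      have hpq : ‖p - q‖ ≤ diam K := B.dist_le (interior_subset (core_sub_int hρ.le hs))
        (interior_subset (core_sub_int hρ.le ht))
      have e1 : extD ν θ w (z - k) = (p - q) - (⟪ν w, p - q⟫_ℝ / ⟪ν w, θ⟫_ℝ) • θ := by
        have : z - k = (p - q) + (t - s) • θ := by rw [hp, hq]; module
        rw [extD_apply, this, inner_add_right, inner_smul_right, add_div,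
          mul_div_cancel_right₀ _ hneg.ne]
        module
      change fderiv ℝ F w (extD ν θ w (z - k)) ≤
        diam K * (‖fderiv ℝ F w‖ + |fderiv ℝ F w θ| / |⟪ν w, θ⟫_ℝ|)
      rw [e1, (fderiv ℝ F w).map_sub, map_smul, smul_eq_mul]
      have a1 : fderiv ℝ F w (p - q) ≤ diam K * ‖fderiv ℝ F w‖ := by
        refine (le_abs_self _).trans (((fderiv ℝ F w).le_opNorm (p - q)).trans ?_)
        rw [mul_comm]; gcongr
      have a2 : |⟪ν w, p - q⟫_ℝ| ≤ diam K := by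
        have := abs_real_inner_le_norm (ν w) (p - q)
        rw [B.norm_normal w hwf, one_mul] at this
        linarith
      have a3 : -(⟪ν w, p - q⟫_ℝ / ⟪ν w, θ⟫_ℝ * fderiv ℝ F w θ) ≤
          diam K * (|fderiv ℝ F w θ| / |⟪ν w, θ⟫_ℝ|) := by
        refine (neg_le_abs _).trans ?_
        rw [abs_mul, abs_div, div_mul_eq_mul_div, mul_div_assoc]
        gcongr
      linarith
  have hlim : ∀ X : Set (Euc n), Tendsto (fun j : ℕ =>
      volume {z ∈ cyl (core K (1 / ((j : ℝ) + 1))) θ | ext K θ z ∈ X}) atTop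
      (𝓝 (volume {z ∈ cyl (interior K) θ | ext K θ z ∈ X})) := by
    intro X
    have e : {z ∈ cyl (interior K) θ | ext K θ z ∈ X} =
        ⋃ j : ℕ, {z ∈ cyl (core K (1 / ((j : ℝ) + 1))) θ | ext K θ z ∈ X} := by
      rw [← cyl_core_iUnion]
      ext z
      simp
    rw [e]
    exact tendsto_measure_iUnion_atTop fun i j hij z hz => ⟨cyl_core_mono θ hij hz.1, hz.2⟩
  have hfin : ∀ X : Set (Euc n), volume {z ∈ cyl (interior K) θ | ext K θ z ∈ X} ≠ ⊤ := by
    intro X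
    refine ne_top_of_le_ne_top (B.shad_univ_ne_top hm ho hθ0) ?_
    rw [B.shad_univ hm ho hθ0]
    exact measure_mono fun z hz => hz.1
  have key := le_of_tendsto (ENNReal.Tendsto.mul (hlim {w | F w = 1}) (Or.inr (hfin _))
    (hlim {w | F w = 0}) (Or.inr (hfin _))) (Eventually.of_forall step)
  refine (mul_le_mul' (B.shad_le_vol hm ho hθ0 hS fun w hw => FS w hw)
    (B.shad_le_vol hm ho hθ0 hT fun w hw => FT w hw)).trans (key.trans (mul_le_mul_right ?_ _))
  rw [B.sig_cyl hm ho hθ0 (f := fun w => ENNReal.ofReal (Γ w)) hΓm.ennreal_ofReal,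
    ← lintegral_indicator (hS.union hT).compl]
  refine lintegral_mono fun w => ?_
  by_cases hw : w ∈ S ∪ T
  · have hz : fderiv ℝ F w = 0 := by
      rcases hw with hw | hw
      · refine IsLocalMax.fderiv_eq_zero (Eventually.of_forall fun y => ?_)
        rw [FS w hw]; exact F1 y
      · refine IsLocalMin.fderiv_eq_zero (Eventually.of_forall fun y => ?_)
        rw [FT w hw]; exact F0 y
    simp [hΓ, hz]
  · rw [Set.indicator_of_mem (by exact hw)]
    by_cases hneg : ⟪ν w, θ⟫_ℝ < 0
    · rw [← ENNReal.ofReal_mul (by linarith)]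
      refine ENNReal.ofReal_le_ofReal ?_
      have hx : 0 < |⟪ν w, θ⟫_ℝ| := abs_pos.2 hneg.ne
      rw [← abs_of_neg hneg]
      have : |⟪ν w, θ⟫_ℝ| * Γ w = diam K * (‖fderiv ℝ F w‖ * |⟪ν w, θ⟫_ℝ| + |fderiv ℝ F w θ|) := by
        simp only [hΓ]; field_simp
      rw [this]
      gcongr
      exact hFn w
    · rw [ENNReal.ofReal_of_nonpos (by linarith)]; simp

end Body

/-! ### Entry and exit points, symmetry of the kernel -/

namespace Body
variable {n : ℕ} {K : Set (Euc n)} {ν : Euc n → Euc n} {r : ℝ} {o : Euc n}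

/-- The cylinders over the shadow of `K` in the directions `θ` and `-θ` are translates of each other
along `θ`, and the exit point is constant along these lines. -/
lemma lintegral_cyl_neg (B : Body K ν r) {θ : Euc n} (hθ : ‖θ‖ = 1) (f : Euc n → ℝ≥0∞) :
    ∫⁻ z in cyl (interior K) (-θ), f (ext K θ z) = ∫⁻ z in cyl (interior K) θ, f (ext K θ z) := by
  have hθ0 : θ ≠ 0 := by rintro rfl; simp at hθ
  have e : cyl (interior K) (-θ) = (· + θ) ⁻¹' cyl (interior K) θ := by
    ext z
    simp only [cyl, Set.mem_ofPred_eq, Set.mem_preimage, inner_neg_left, norm_neg, inner_add_right,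
      real_inner_self_eq_norm_sq, hθ]
    refine and_congr ⟨fun h => ⟨by linarith, by linarith⟩, fun h => ⟨by linarith, by linarith⟩⟩ ?_
    constructor
    · rintro ⟨s, hs⟩
      exact ⟨-s - 1, by convert hs using 1; module⟩
    · rintro ⟨s, hs⟩
      exact ⟨-s - 1, by convert hs using 1; module⟩
  have hc : MeasurableSet (cyl (interior K) θ) := (cyl_open isOpen_interior θ).measurableSet
  have key := (measurePreserving_add_right volume θ).setLIntegral_comp_preimage_emb
    (measurableEmbedding_addRight θ) (fun z => f (ext K θ z)) (cyl (interior K) θ)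
  rw [← e] at key
  rw [← key]
  refine setLIntegral_congr_fun (cyl_open isOpen_interior _).measurableSet fun z hz => ?_
  obtain ⟨-, s, hs⟩ := hz
  rw [smul_neg, ← neg_smul] at hs
  obtain ⟨H, -, h1, h2, h3⟩ := B.ext_int hθ0 hs
  rw [B.ext_eq (z := z + θ) (s := H - 1) h2 h3 (by rw [h1]; module)]

lemma shad_neg_univ (B : Body K ν r) (hm : Measurable ν) (ho : o ∈ interior K) {θ : Euc n}
    (hθ : ‖θ‖ = 1) : shad K ν o (-θ) Set.univ = shad K ν o θ Set.univ := by
  have hθ0 : θ ≠ 0 := by rintro rfl; simp at hθ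
  rw [B.shad_univ hm ho hθ0, B.shad_univ hm ho (neg_ne_zero.2 hθ0)]
  simpa using B.lintegral_cyl_neg hθ (fun _ => 1)

/-- Matching entry points with exit points: the part of `T` entered along `θ` by a chord which also
leaves through `T` has no larger shadow than the part of `T` left along `θ`. -/
lemma shad_neg_le (B : Body K ν r) (hm : Measurable ν) (ho : o ∈ interior K) {θ : Euc n}
    (hθ : ‖θ‖ = 1) {T : Set (Euc n)} (hT : MeasurableSet T) (hTK : T ⊆ K)
    {g : Euc n × Euc n → Euc n} (hg : Measurable g) (hgK : ∀ u ∈ K, ∀ d, g (u, d) = ext K d u) :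
    shad K ν o (-θ) T ≤ shad K ν o θ T +
      ∫⁻ u in T, ENNReal.ofReal ⟪ν u, θ⟫_ℝ * Tᶜ.indicator 1 (g (u, θ)) ∂(sig K ν o) := by
  have hθ0 : θ ≠ 0 := by rintro rfl; simp at hθ
  have hi : Measurable (T.indicator (1 : Euc n → ℝ≥0∞)) := measurable_one.indicator hT
  have hgθ : Measurable fun u => g (u, θ) := hg.comp (by fun_prop)
  set f : Euc n → ℝ≥0∞ := fun u => T.indicator 1 u * T.indicator 1 (g (u, θ)) with hf
  have hfm : Measurable f := hi.mul (hi.comp hgθ)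
  have h1 : shad K ν o (-θ) T =
      (∫⁻ u in T, ENNReal.ofReal ⟪ν u, θ⟫_ℝ * T.indicator 1 (g (u, θ)) ∂(sig K ν o)) +
      ∫⁻ u in T, ENNReal.ofReal ⟪ν u, θ⟫_ℝ * Tᶜ.indicator 1 (g (u, θ)) ∂(sig K ν o) := by
    rw [← lintegral_add_left, shad]
    · congr 1; ext u
      rw [inner_neg_right, neg_neg, ← mul_add]
      by_cases h : g (u, θ) ∈ T <;> simp [h]
    · exact Measurable.mul (by fun_prop) (hi.comp hgθ)
  rw [h1]
  gcongr
  have h2 : ∫⁻ u in T, ENNReal.ofReal ⟪ν u, θ⟫_ℝ * T.indicator 1 (g (u, θ)) ∂(sig K ν o) =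
      ∫⁻ u, ENNReal.ofReal (-⟪ν u, -θ⟫_ℝ) * f u ∂(sig K ν o) := by
    rw [← lintegral_indicator hT]
    congr 1; ext u
    rw [inner_neg_right, neg_neg]
    by_cases h : u ∈ T <;> simp [h, hf]
  have h3 : shad K ν o θ T = ∫⁻ u, ENNReal.ofReal (-⟪ν u, θ⟫_ℝ) * T.indicator 1 u ∂(sig K ν o) := by
    rw [shad, ← lintegral_indicator hT]
    congr 1; ext u
    by_cases h : u ∈ T <;> simp [h]
  rw [h2, h3, ← B.sig_cyl hm ho hθ0 hi, ← B.sig_cyl hm ho (neg_ne_zero.2 hθ0) hfm,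
    ← B.lintegral_cyl_neg hθ]
  refine setLIntegral_mono' (cyl_open isOpen_interior _).measurableSet fun z hz => ?_
  obtain ⟨-, s, hs⟩ := hz
  obtain ⟨H, -, h1, h2, h3⟩ := B.ext_int (neg_ne_zero.2 hθ0) hs
  rw [smul_neg, ← neg_smul] at hs
  obtain ⟨H', -, h1', h2', h3'⟩ := B.ext_int hθ0 hs
  simp only [hf]
  rw [hgK _ (B.frontier_sub h2), B.ext_eq (z := ext K (-θ) z) (s := H' + H) h2' h3'
    (by rw [h1, h1']; module)]
  calc _ ≤ 1 * T.indicator (1 : Euc n → ℝ≥0∞) (ext K θ z) := by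
        gcongr
        exact Set.indicator_le_self' (fun _ _ => zero_le_one) _
    _ = _ := one_mul _

lemma measurable_bker2 (hm : Measurable ν) : Measurable fun p : Euc n × Euc n => bker ν p.1 p.2 := by
  unfold bker
  fun_prop

lemma bker_comm (u w : Euc n) : bker ν u w = bker ν w u := by
  rw [bker, bker, norm_sub_rev, mul_comm]

lemma measurable_bQ (hm : Measurable ν) [IsFiniteMeasure (sig K ν o)] (T : Set (Euc n)) :
    Measurable fun u => bQ K ν o u T :=
  Measurable.lintegral_prod_right' (f := fun p : Euc n × Euc n => ENNReal.ofReal (bker ν p.1 p.2))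
    (measurable_bker2 hm).ennreal_ofReal

lemma bQ_symm (hm : Measurable ν) [IsFiniteMeasure (sig K ν o)] (S T : Set (Euc n)) :
    ∫⁻ u in S, bQ K ν o u T ∂(sig K ν o) = ∫⁻ u in T, bQ K ν o u S ∂(sig K ν o) := by
  simp only [bQ]
  rw [lintegral_lintegral_swap (measurable_bker2 hm).ennreal_ofReal.aemeasurable]
  simp only [bker_comm]

lemma bQ_univ (B : Body K ν r) (hm : Measurable ν) (ho : o ∈ interior K) {u : Euc n}
    (hu : u ∈ frontier K) : bQ K ν o u Set.univ = ENNReal.ofReal (dβ n / 2) := by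
  have := B.sig_kernel_dm hm ho hu (f := fun _ => 1) measurable_const
  simp only [mul_one] at this
  rw [bQ, Measure.restrict_univ, this, dm_pos_part, B.norm_normal u hu, mul_one]

lemma bQ_dm (B : Body K ν r) (hm : Measurable ν) (ho : o ∈ interior K) {u : Euc n}
    (hu : u ∈ frontier K) {T : Set (Euc n)} (hT : MeasurableSet T) :
    bQ K ν o u T = ∫⁻ θ, ENNReal.ofReal ⟪ν u, θ⟫_ℝ * T.indicator 1 (ext K θ u) ∂(dm n) := by
  rw [← B.sig_kernel_dm hm ho hu (measurable_one.indicator hT), bQ, ← lintegral_indicator hT]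
  congr 1; ext w
  by_cases h : w ∈ T <;> simp [h]

end Body

/-! ### Combining opposite directions -/

/-- The scalar inequality combining the two directional Poincaré bounds with the matching of entry
and exit shadows. -/
lemma min_le_combine {p p' q q' h a a' e e' z : ℝ} (hp : 0 ≤ p) (hp' : 0 ≤ p') (hq : 0 ≤ q)
    (hq' : 0 ≤ q') (ha : 0 ≤ a) (ha' : 0 ≤ a') (he : 0 ≤ e) (he' : 0 ≤ e') (hz : 0 ≤ z)
    (ph : p ≤ h) (ph' : p' ≤ h) (h1 : p * q ≤ h * a) (h2 : p' * q' ≤ h * a') (h3 : q' ≤ q + e)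
    (h4 : q ≤ q' + e') (hs : (p + p') + (q + q') + z = 2 * h) :
    min (p + p') (q + q') ≤ 2 * a + 2 * a' + e + e' + z := by
  have h0 : 0 ≤ h := hp.trans ph
  rcases h0.eq_or_lt with rfl | hpos
  · refine (min_le_left _ _).trans ?_
    linarith
  set x := p + p' with hx
  set y := q + q' with hy
  have hxy : x * y ≤ h * (2 * a + 2 * a' + e + e') := by
    have i1 : p * q' ≤ p * (q + e) := mul_le_mul_of_nonneg_left h3 hp
    have i2 : p' * q ≤ p' * (q' + e') := mul_le_mul_of_nonneg_left h4 hp'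
    have i3 : p * e ≤ h * e := mul_le_mul_of_nonneg_right ph he
    have i4 : p' * e' ≤ h * e' := mul_le_mul_of_nonneg_right ph' he'
    rw [hx, hy]; nlinarith
  have hm0 : 0 ≤ min x y := le_min (by positivity) (by positivity)
  have hmm : min x y * (x + y) ≤ 2 * (x * y) := by
    rcases le_total x y with h | h
    · rw [min_eq_left h]; nlinarith [mul_nonneg (add_nonneg hp hp') (sub_nonneg.2 h)]
    · rw [min_eq_right h]; nlinarith [mul_nonneg (add_nonneg hq hq') (sub_nonneg.2 h)]
  have hmh : min x y ≤ h := by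
    have := min_le_left x y; have := min_le_right x y; linarith
  have hzz : z * min x y ≤ z * h := mul_le_mul_of_nonneg_left hmh hz
  have : (2 * h) * min x y ≤ (2 * h) * (2 * a + 2 * a' + e + e' + z) := by
    have e1 : (2 * h) * min x y = min x y * (x + y) + z * min x y := by rw [← hs]; ring
    have e2 := mul_nonneg h0 hz
    rw [e1]
    linarith
  exact le_of_mul_le_mul_left this (by positivity)

lemma ofReal_add_neg (a : ℝ) : ENNReal.ofReal (-a) + ENNReal.ofReal a = ENNReal.ofReal |a| := by
  rcases le_total 0 a with h | h
  · rw [ENNReal.ofReal_of_nonpos (by linarith : -a ≤ 0), abs_of_nonneg h, zero_add]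
  · rw [ENNReal.ofReal_of_nonpos h, abs_of_nonpos h, add_zero]

namespace Body
variable {n : ℕ} {K : Set (Euc n)} {ν : Euc n → Euc n} {r : ℝ} {o : Euc n}

/-- Total shadow of `T` in the directions `±θ`. -/
def wid (K : Set (Euc n)) (ν : Euc n → Euc n) (o θ : Euc n) (T : Set (Euc n)) : ℝ≥0∞ :=
  ∫⁻ w in T, ENNReal.ofReal |⟪ν w, θ⟫_ℝ| ∂(sig K ν o)

/-- The right-hand side of the directional Poincaré inequality: the integral over the separating
region of the gradient term. -/
def grd (K : Set (Euc n)) (ν : Euc n → Euc n) (o : Euc n) (F : Euc n → ℝ) (L : ℝ≥0)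
    (U : Set (Euc n)) (θ : Euc n) : ℝ≥0∞ :=
  ∫⁻ w in U, ENNReal.ofReal (diam K * (L * |⟪ν w, θ⟫_ℝ| + |fderiv ℝ F w θ|)) ∂(sig K ν o)

/-- The flux of chords of direction `θ` starting in `T` and leaving through the complement of `T`;
`g (u, θ)` is the exit point. -/
def esc (K : Set (Euc n)) (ν : Euc n → Euc n) (o : Euc n) (g : Euc n × Euc n → Euc n)
    (T : Set (Euc n)) (θ : Euc n) : ℝ≥0∞ :=
  ∫⁻ u in T, ENNReal.ofReal ⟪ν u, θ⟫_ℝ * Tᶜ.indicator 1 (g (u, θ)) ∂(sig K ν o)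

lemma shad_add_neg (hm : Measurable ν) (θ : Euc n) (T : Set (Euc n)) :
    shad K ν o θ T + shad K ν o (-θ) T = wid K ν o θ T := by
  rw [shad, shad, wid, ← lintegral_add_left (by fun_prop)]
  congr 1; ext w
  rw [inner_neg_right, neg_neg, ofReal_add_neg]

/-- The directional inequality behind isoperimetry: for each `θ`, the smaller of the total shadows of
`S` and `T` is bounded by gradient terms, the flux out of `T`, and the shadow of the rest. -/
lemma dir_min (B : Body K ν r) (hm : Measurable ν) (ho : o ∈ interior K) {θ : Euc n}
    (hθ : ‖θ‖ = 1) {S T : Set (Euc n)} (hS : MeasurableSet S) (hT : MeasurableSet T)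
    (hd : Disjoint S T) (hTK : T ⊆ K)
    {g : Euc n × Euc n → Euc n} (hg : Measurable g) (hgK : ∀ u ∈ K, ∀ d, g (u, d) = ext K d u)
    {F : Euc n → ℝ} {L : ℝ≥0} (hF : ContDiff ℝ 1 F) (F0 : ∀ x, 0 ≤ F x) (F1 : ∀ x, F x ≤ 1)
    (FS : ∀ x ∈ S, F x = 1) (FT : ∀ x ∈ T, F x = 0) (FL : LipschitzWith L F) :
    min (wid K ν o θ S) (wid K ν o θ T) ≤
      2 * grd K ν o F L (S ∪ T)ᶜ θ + 2 * grd K ν o F L (S ∪ T)ᶜ (-θ) + esc K ν o g T θ +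
        esc K ν o g T (-θ) + wid K ν o θ (S ∪ T)ᶜ := by
  have hθ0 : θ ≠ 0 := by rintro rfl; simp at hθ
  have hθn : ‖-θ‖ = 1 := by rwa [norm_neg]
  have hfin := B.shad_univ_ne_top hm ho hθ0
  have hfin' : shad K ν o (-θ) Set.univ ≠ ⊤ := by rwa [B.shad_neg_univ hm ho hθ]
  have mono : ∀ d (A : Set (Euc n)), shad K ν o d A ≤ shad K ν o d Set.univ := fun d A =>
    lintegral_mono_set (Set.subset_univ A)
  have f1 : ∀ A : Set (Euc n), shad K ν o θ A ≠ ⊤ := fun A => ne_top_of_le_ne_top hfin (mono θ A)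
  have f2 : ∀ A : Set (Euc n), shad K ν o (-θ) A ≠ ⊤ := fun A =>
    ne_top_of_le_ne_top hfin' (mono (-θ) A)
  have i1 := B.poin_dir hm ho hθ hS hT hF F0 F1 FS FT FL
  have i2 := B.poin_dir hm ho hθn hS hT hF F0 F1 FS FT FL
  have i3 := B.shad_neg_le hm ho hθ hT hTK hg hgK
  have i4 := B.shad_neg_le hm ho hθn hT hTK hg hgK
  rw [neg_neg] at i4
  rw [B.shad_neg_univ hm ho hθ] at i2
  change _ ≤ _ * grd K ν o F L (S ∪ T)ᶜ θ at i1
  change _ ≤ _ * grd K ν o F L (S ∪ T)ᶜ (-θ) at i2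
  change _ ≤ _ + esc K ν o g T θ at i3
  change _ ≤ _ + esc K ν o g T (-θ) at i4
  have hsum : wid K ν o θ S + wid K ν o θ T + wid K ν o θ (S ∪ T)ᶜ =
      2 * shad K ν o θ Set.univ := by
    have : wid K ν o θ Set.univ = 2 * shad K ν o θ Set.univ := by
      rw [← shad_add_neg hm, B.shad_neg_univ hm ho hθ, two_mul]
    rw [← this, wid, wid, wid, ← lintegral_union hT hd,
      ← lintegral_union (hS.union hT).compl disjoint_compl_right, Set.union_compl_self, wid]
  rw [← shad_add_neg hm θ S, ← shad_add_neg hm θ T] at hsum ⊢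
  have fz : wid K ν o θ (S ∪ T)ᶜ ≠ ⊤ := by
    rw [← shad_add_neg hm]; exact ENNReal.add_ne_top.2 ⟨f1 _, f2 _⟩
  by_cases g1 : grd K ν o F L (S ∪ T)ᶜ θ = ⊤
  · rw [g1]; simp
  by_cases g2 : grd K ν o F L (S ∪ T)ᶜ (-θ) = ⊤
  · rw [g2]; simp
  by_cases e1 : esc K ν o g T θ = ⊤
  · simp [e1]
  by_cases e2 : esc K ν o g T (-θ) = ⊤
  · simp [e2]
  have pS := mono θ S
  have pS' := mono (-θ) S
  rw [B.shad_neg_univ hm ho hθ] at pS'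
  generalize wid K ν o θ (S ∪ T)ᶜ = z at *
  generalize grd K ν o F L (S ∪ T)ᶜ θ = a at *
  generalize grd K ν o F L (S ∪ T)ᶜ (-θ) = a' at *
  generalize esc K ν o g T θ = e at *
  generalize esc K ν o g T (-θ) = e' at *
  have p1 := f1 S
  have p2 := f2 S
  have q1 := f1 T
  have q2 := f2 T
  generalize shad K ν o θ S = p at *
  generalize shad K ν o (-θ) S = p' at *
  generalize shad K ν o θ T = q at *
  generalize shad K ν o (-θ) T = q' at *
  generalize shad K ν o θ Set.univ = h at *
  clear f1 f2 mono
  lift z to ℝ≥0 using fz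
  lift a to ℝ≥0 using g1
  lift a' to ℝ≥0 using g2
  lift e to ℝ≥0 using e1
  lift e' to ℝ≥0 using e2
  lift p to ℝ≥0 using p1
  lift p' to ℝ≥0 using p2
  lift q to ℝ≥0 using q1
  lift q' to ℝ≥0 using q2
  lift h to ℝ≥0 using hfin
  norm_cast at *
  have := min_le_combine (p := p) (p' := p') (q := q) (q' := q') (h := h) (a := a) (a' := a')
    (e := e) (e' := e') (z := z) p.2 p'.2 q.2 q'.2 a.2 a'.2 e.2 e'.2 z.2 (by exact_mod_cast pS)
    (by exact_mod_cast pS') (by exact_mod_cast i1) (by exact_mod_cast i2) (by exact_mod_cast i3)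
    (by exact_mod_cast i4) (by exact_mod_cast hsum)
  exact_mod_cast this

end Body

/-! ### Averaging over directions: isoperimetry on the boundary -/

namespace Body
variable {n : ℕ} {K : Set (Euc n)} {ν : Euc n → Euc n} {r : ℝ} {o : Euc n}

lemma ae_frontier (B : Body K ν r) (hm : Measurable ν) (ho : o ∈ interior K) :
    ∀ᵐ w ∂(sig K ν o), w ∈ frontier K := by
  rw [ae_iff]
  exact B.sig_compl hm ho

lemma int_wid (B : Body K ν r) (hm : Measurable ν) (ho : o ∈ interior K)
    [IsFiniteMeasure (sig K ν o)] (T : Set (Euc n)) :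
    ∫⁻ θ, wid K ν o θ T ∂(dm n) = ENNReal.ofReal (dβ n) * sig K ν o T := by
  simp only [wid]
  rw [lintegral_lintegral_swap (Measurable.aemeasurable (by fun_prop))]
  rw [← setLIntegral_const]
  refine lintegral_congr_ae ((ae_restrict_of_ae (B.ae_frontier hm ho)).mono fun w hw => ?_)
  simp only
  rw [dm_abs', B.norm_normal w hw, mul_one]

lemma int_grd (B : Body K ν r) (hm : Measurable ν) (ho : o ∈ interior K)
    [IsFiniteMeasure (sig K ν o)] {F : Euc n → ℝ} {L : ℝ≥0} (hF : ContDiff ℝ 1 F)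
    (FL : LipschitzWith L F) (U : Set (Euc n)) :
    ∫⁻ θ, grd K ν o F L U θ ∂(dm n) ≤
      ENNReal.ofReal (2 * diam K * L * dβ n) * sig K ν o U := by
  have hFc : Continuous (fderiv ℝ F) := hF.continuous_fderiv (by norm_num)
  have hD : 0 ≤ diam K := diam_nonneg
  simp only [grd]
  rw [lintegral_lintegral_swap]
  swap
  · refine Measurable.aemeasurable ?_
    have : Measurable fun p : Euc n × Euc n => fderiv ℝ F p.2 p.1 := by
      have : Continuous fun p : Euc n × Euc n => fderiv ℝ F p.2 p.1 := by fun_prop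
      exact this.measurable
    unfold Function.uncurry
    fun_prop
  rw [← setLIntegral_const]
  refine lintegral_mono_ae ((ae_restrict_of_ae (B.ae_frontier hm ho)).mono fun w hw => ?_)
  set v := (InnerProductSpace.toDual ℝ (Euc n)).symm (fderiv ℝ F w) with hv
  have hvn : ‖v‖ ≤ L := by
    rw [hv, LinearIsometryEquiv.norm_map]; exact norm_fderiv_le_of_lipschitz ℝ FL
  have hvi : ∀ θ, fderiv ℝ F w θ = ⟪v, θ⟫_ℝ := fun θ => by
    rw [hv, InnerProductSpace.toDual_symm_apply]
  simp only [hvi]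
  have e : ∀ θ : Euc n, ENNReal.ofReal (diam K * (L * |⟪ν w, θ⟫_ℝ| + |⟪v, θ⟫_ℝ|)) =
      ENNReal.ofReal (diam K * L) * ENNReal.ofReal |⟪ν w, θ⟫_ℝ| +
        ENNReal.ofReal (diam K) * ENNReal.ofReal |⟪v, θ⟫_ℝ| := by
    intro θ
    rw [← ENNReal.ofReal_mul (by positivity), ← ENNReal.ofReal_mul hD,
      ← ENNReal.ofReal_add (by positivity) (by positivity)]
    congr 1; ring
  simp only [e]
  rw [lintegral_add_left (by fun_prop), lintegral_const_mul _ (by fun_prop),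
    lintegral_const_mul _ (by fun_prop), dm_abs', dm_abs', B.norm_normal w hw,
    ← ENNReal.ofReal_mul (by positivity), ← ENNReal.ofReal_mul hD,
    ← ENNReal.ofReal_add (mul_nonneg (by positivity) (mul_nonneg (dβ_nonneg n) zero_le_one))
      (mul_nonneg hD (mul_nonneg (dβ_nonneg n) (norm_nonneg _)))]
  apply ENNReal.ofReal_le_ofReal
  have := mul_le_mul_of_nonneg_left hvn (mul_nonneg hD (dβ_nonneg n))
  linarith

/-- Averaged over directions, the flux of chords leaving `T` is the ergodic flow of the kernel. -/
lemma int_esc (B : Body K ν r) (hm : Measurable ν) (ho : o ∈ interior K)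
    [IsFiniteMeasure (sig K ν o)] {T : Set (Euc n)} (hT : MeasurableSet T)
    {g : Euc n × Euc n → Euc n} (hg : Measurable g) (hgK : ∀ u ∈ K, ∀ d, g (u, d) = ext K d u) :
    ∫⁻ θ, esc K ν o g T θ ∂(dm n) = ∫⁻ u in T, bQ K ν o u Tᶜ ∂(sig K ν o) := by
  simp only [esc]
  rw [lintegral_lintegral_swap]
  swap
  · refine Measurable.aemeasurable ?_
    have hi : Measurable (Tᶜ.indicator (1 : Euc n → ℝ≥0∞)) := measurable_one.indicator hT.compl
    have h2 : Measurable fun p : Euc n × Euc n => Tᶜ.indicator (1 : Euc n → ℝ≥0∞) (g (p.2, p.1)) :=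
      hi.comp (hg.comp (by fun_prop))
    unfold Function.uncurry
    exact Measurable.mul (by fun_prop) h2
  refine lintegral_congr_ae ((ae_restrict_of_ae (B.ae_frontier hm ho)).mono fun u hu => ?_)
  simp only
  rw [B.bQ_dm hm ho hu hT.compl]
  simp only [hgK u (B.frontier_sub hu)]

/-- Averaging over directions the smaller of the two shadows bounds the product of the surface
areas. -/
lemma min_wid (B : Body K ν r) (hm : Measurable ν) (ho : o ∈ interior K)
    [IsFiniteMeasure (sig K ν o)] (S T : Set (Euc n)) :
    ENNReal.ofReal (dβ n / 4) * (sig K ν o S * sig K ν o T) ≤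
      sig K ν o Set.univ * ∫⁻ θ, min (wid K ν o θ S) (wid K ν o θ T) ∂(dm n) := by
  set σ := sig K ν o with hσ
  have hf := B.ae_frontier hm ho
  have h1 : ENNReal.ofReal (dβ n / 4) * (σ S * σ T) ≤
      ∫⁻ p, ∫⁻ θ, ENNReal.ofReal (min |⟪ν p.1, θ⟫_ℝ| |⟪ν p.2, θ⟫_ℝ|) ∂(dm n)
        ∂((σ.restrict S).prod (σ.restrict T)) := by
    have : ENNReal.ofReal (dβ n / 4) * (σ S * σ T) =
        ∫⁻ _, ENNReal.ofReal (dβ n / 4) ∂((σ.restrict S).prod (σ.restrict T)) := by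
      rw [lintegral_const, ← Set.univ_prod_univ, Measure.prod_prod]; simp
    rw [this]
    refine lintegral_mono_ae ?_
    have a1 : ∀ᵐ p ∂((σ.restrict S).prod (σ.restrict T)), p.1 ∈ frontier K :=
      Measure.quasiMeasurePreserving_fst.ae (ae_restrict_of_ae hf)
    have a2 : ∀ᵐ p ∂((σ.restrict S).prod (σ.restrict T)), p.2 ∈ frontier K :=
      Measure.quasiMeasurePreserving_snd.ae (ae_restrict_of_ae hf)
    filter_upwards [a1, a2] with p h1 h2
    exact dm_min (B.norm_normal _ h1) (B.norm_normal _ h2)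
  refine h1.trans ?_
  rw [lintegral_lintegral_swap (Measurable.aemeasurable (by unfold Function.uncurry; fun_prop))]
  have hw : ∀ A : Set (Euc n), Measurable fun θ => wid K ν o θ A := fun A =>
    Measurable.lintegral_prod_right'
      (f := fun p : Euc n × Euc n => ENNReal.ofReal |⟪ν p.2, p.1⟫_ℝ|) (by fun_prop)
  rw [← lintegral_const_mul _ ((hw S).min (hw T))]
  refine lintegral_mono fun θ => ?_
  simp only
  rw [lintegral_prod _ (Measurable.aemeasurable (by fun_prop))]
  rcases le_total (wid K ν o θ S) (wid K ν o θ T) with h | h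
  · rw [min_eq_left h]
    calc _ ≤ ∫⁻ u in S, ∫⁻ _ in T, ENNReal.ofReal |⟪ν u, θ⟫_ℝ| ∂σ ∂σ :=
          lintegral_mono fun u => lintegral_mono fun w =>
            ENNReal.ofReal_le_ofReal (min_le_left _ _)
      _ = wid K ν o θ S * σ T := by
          simp only [setLIntegral_const]
          rw [lintegral_mul_const _ (by fun_prop), wid]
      _ ≤ _ := by
          rw [mul_comm]
          exact mul_le_mul_left (measure_mono (Set.subset_univ _)) _
  · rw [min_eq_right h]
    calc _ ≤ ∫⁻ _ in S, ∫⁻ w in T, ENNReal.ofReal |⟪ν w, θ⟫_ℝ| ∂σ ∂σ :=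
          lintegral_mono fun u => lintegral_mono fun w =>
            ENNReal.ofReal_le_ofReal (min_le_right _ _)
      _ = wid K ν o θ T * σ S := by
          rw [setLIntegral_const, wid]
      _ ≤ _ := by
          rw [mul_comm]
          exact mul_le_mul_left (measure_mono (Set.subset_univ _)) _

lemma measurable_grd (hm : Measurable ν) [IsFiniteMeasure (sig K ν o)] {F : Euc n → ℝ} {L : ℝ≥0}
    (hF : ContDiff ℝ 1 F) (U : Set (Euc n)) : Measurable fun θ => grd K ν o F L U θ := by
  have hFc : Continuous (fderiv ℝ F) := hF.continuous_fderiv (by norm_num)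
  have : Measurable fun p : Euc n × Euc n => fderiv ℝ F p.2 p.1 := by
    have : Continuous fun p : Euc n × Euc n => fderiv ℝ F p.2 p.1 := by fun_prop
    exact this.measurable
  exact Measurable.lintegral_prod_right' (f := fun p : Euc n × Euc n =>
    ENNReal.ofReal (diam K * (L * |⟪ν p.2, p.1⟫_ℝ| + |fderiv ℝ F p.2 p.1|))) (by fun_prop)

lemma measurable_esc (hm : Measurable ν) [IsFiniteMeasure (sig K ν o)] {T : Set (Euc n)}
    (hT : MeasurableSet T) {g : Euc n × Euc n → Euc n} (hg : Measurable g) :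
    Measurable fun θ => esc K ν o g T θ := by
  have hi : Measurable (Tᶜ.indicator (1 : Euc n → ℝ≥0∞)) := measurable_one.indicator hT.compl
  have h2 : Measurable fun p : Euc n × Euc n => Tᶜ.indicator (1 : Euc n → ℝ≥0∞) (g (p.2, p.1)) :=
    hi.comp (hg.comp (by fun_prop))
  exact Measurable.lintegral_prod_right' (f := fun p : Euc n × Euc n =>
    ENNReal.ofReal ⟪ν p.2, p.1⟫_ℝ * Tᶜ.indicator (1 : Euc n → ℝ≥0∞) (g (p.2, p.1)))
    (Measurable.mul (by fun_prop) h2)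

lemma dm_neg {f : Euc n → ℝ≥0∞} (hf : Measurable f) : ∫⁻ θ, f (-θ) ∂(dm n) = ∫⁻ θ, f θ ∂(dm n) :=
  (dm_inv (LinearIsometryEquiv.neg ℝ)).lintegral_comp hf

/-- Isoperimetry on the boundary: two sets at distance at least `δ` cannot both be large unless the
rest of the boundary is large or many chords leave one of them. -/
lemma isoperimetry (B : Body K ν r) (hm : Measurable ν) (ho : o ∈ interior K)
    [IsFiniteMeasure (sig K ν o)] {S T : Set (Euc n)} (hS : MeasurableSet S)
    (hT : MeasurableSet T) (hTK : T ⊆ K) {δ : ℝ} (hδ : 0 < δ)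
    (h : ∀ a ∈ S, ∀ b ∈ T, δ ≤ ‖a - b‖) :
    ENNReal.ofReal (dβ n / 4) * (sig K ν o S * sig K ν o T) ≤
      sig K ν o Set.univ *
        (ENNReal.ofReal (16 * diam K / δ + 1) * (ENNReal.ofReal (dβ n) * sig K ν o (S ∪ T)ᶜ) +
          2 * ∫⁻ u in T, bQ K ν o u Tᶜ ∂(sig K ν o)) := by
  obtain ⟨g, hg, hgK⟩ := B.ext_measurable
  obtain ⟨F, hF, F0, F1, FS, FT, FL⟩ := smooth_sep hδ h
  set L := (2 / δ).toNNReal with hL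
  have hLr : (L : ℝ) = 2 / δ := Real.coe_toNNReal _ (by positivity)
  have hd : Disjoint S T := Set.disjoint_left.2 fun a ha hb => by
    have := h a ha a hb; simp at this; linarith
  have hD : 0 ≤ diam K := diam_nonneg
  refine (B.min_wid hm ho S T).trans (mul_le_mul_right ?_ _)
  have mg := measurable_grd (o := o) (L := L) hm hF (S ∪ T)ᶜ (K := K)
  have me := measurable_esc (o := o) (K := K) hm hT hg
  have mg' : Measurable fun θ => grd K ν o F L (S ∪ T)ᶜ (-θ) := mg.comp measurable_neg
  have me' : Measurable fun θ => esc K ν o g T (-θ) := me.comp measurable_neg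
  calc _ ≤ ∫⁻ θ, (2 * grd K ν o F L (S ∪ T)ᶜ θ + 2 * grd K ν o F L (S ∪ T)ᶜ (-θ) +
        esc K ν o g T θ + esc K ν o g T (-θ) + wid K ν o θ (S ∪ T)ᶜ) ∂(dm n) :=
        lintegral_mono_ae ((dm_norm n).mono fun θ hθ =>
          B.dir_min hm ho hθ hS hT hd hTK hg hgK hF F0 F1 FS FT FL)
    _ = 4 * (∫⁻ θ, grd K ν o F L (S ∪ T)ᶜ θ ∂(dm n)) + 2 * (∫⁻ θ, esc K ν o g T θ ∂(dm n)) +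
        ∫⁻ θ, wid K ν o θ (S ∪ T)ᶜ ∂(dm n) := by
        rw [lintegral_add_left (by fun_prop), lintegral_add_left (by fun_prop),
          lintegral_add_left (by fun_prop), lintegral_add_left (by fun_prop),
          lintegral_const_mul _ mg, lintegral_const_mul _ mg', dm_neg mg, dm_neg me]
        ring
    _ ≤ 4 * (ENNReal.ofReal (2 * diam K * L * dβ n) * sig K ν o (S ∪ T)ᶜ) +
        2 * (∫⁻ u in T, bQ K ν o u Tᶜ ∂(sig K ν o)) +
        ENNReal.ofReal (dβ n) * sig K ν o (S ∪ T)ᶜ := by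
        rw [B.int_esc hm ho hT hg hgK, B.int_wid hm ho]
        gcongr
        exact B.int_grd hm ho hF FL _
    _ = _ := by
        rw [hLr, show 2 * diam K * (2 / δ) * dβ n = (4 * diam K / δ) * dβ n by ring,
          ENNReal.ofReal_mul (by positivity), ENNReal.ofReal_add (by positivity) zero_le_one,
          show 16 * diam K / δ = 4 * (4 * diam K / δ) by ring, ENNReal.ofReal_mul (p := 4) (by norm_num)]
        simp only [ENNReal.ofReal_ofNat, ENNReal.ofReal_one]
        ring

end Body

/-! ### Conductance of the unnormalised kernel -/

/-- The arithmetic of the conductance bound: `a`, `b` are the areas of the two halves of the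
boundary, `x`, `y` those of the points from which crossing is unlikely, `x₁`, `y₁` those of the
remaining points. -/
lemma flow_arith {β a b x y x₁ y₁ z e q Z : ℝ} (hβ : 0 < β) (hx : 0 ≤ x) (hx1 : 0 ≤ x₁)
    (hy1 : 0 ≤ y₁) (hq : 0 ≤ q) (hZ : 1 ≤ Z)
    (ha : a = x + x₁) (hb : b = y + y₁) (hab : a ≤ b) (h1 : β / 52 * x₁ ≤ q) (h2 : β / 52 * y₁ ≤ q)
    (hz : z ≤ x₁ + y₁) (he : e ≤ q + β / 2 * z)
    (h : β / 4 * (x * y) ≤ (a + b) * ((16 * (4096 * Z) + 1) * (β * z) + 2 * e)) :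
    β * a ≤ 240000000 * Z * q := by
  have hZq : q ≤ Z * q := by nlinarith
  have hZq0 : 0 ≤ Z * q := by positivity
  rcases le_or_gt (a / 2) x₁ with c1 | c1
  · have := mul_le_mul_of_nonneg_left c1 hβ.le
    linarith
  rcases le_or_gt (b / 2) y₁ with c2 | c2
  · have := mul_le_mul_of_nonneg_left c2 hβ.le
    have := mul_le_mul_of_nonneg_left hab hβ.le
    linarith
  have hxa : a / 2 ≤ x := by linarith
  have hyb : (a + b) / 4 ≤ y := by linarith
  have ha0 : 0 < a := by linarith
  have hV : 0 < a + b := by linarith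
  have hzq : β * z ≤ 104 * q := by
    have := mul_le_mul_of_nonneg_left hz hβ.le
    linarith
  have hin : (16 * (4096 * Z) + 1) * (β * z) + 2 * e ≤ 6815954 * (Z * q) := by
    have := mul_le_mul_of_nonneg_left hzq (by positivity : 0 ≤ 16 * (4096 * Z) + 1)
    linarith
  have hxy : (a / 2) * ((a + b) / 4) ≤ x * y := mul_le_mul hxa hyb (by linarith) hx
  have k1 := mul_le_mul_of_nonneg_left hxy (by positivity : 0 ≤ β / 4)
  have k2 := mul_le_mul_of_nonneg_left hin hV.le
  have k3 : (a + b) * (β * a / 32) ≤ (a + b) * (6815954 * (Z * q)) := by linarith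
  have k4 := le_of_mul_le_mul_left k3 hV
  linarith

namespace Body
variable {n : ℕ} {K : Set (Euc n)} {ν : Euc n → Euc n} {r : ℝ} {o : Euc n}

lemma r_le_diam (B : Body K ν r) {x : Euc n} (hx : x ∈ frontier K) : r ≤ diam K := by
  have h1 : x + r • ν x ∈ K := B.ball_sub x hx (mem_closedBall_self B.rpos.le)
  have := B.dist_le h1 (B.frontier_sub hx)
  simpa [norm_smul, B.norm_normal x hx, abs_of_pos B.rpos] using this

/-- The conductance bound for the unnormalised kernel. -/
lemma flow (B : Body K ν r) (hm : Measurable ν) (ho : o ∈ interior K) (hn : 1 ≤ n)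
    [IsFiniteMeasure (sig K ν o)] {X : Set (Euc n)} (hX : MeasurableSet X) (hXK : X ⊆ frontier K)
    (hle : sig K ν o X ≤ sig K ν o (frontier K \ X)) :
    ENNReal.ofReal (dβ n) * sig K ν o X ≤ ENNReal.ofReal (240000000 * (n * diam K / r)) *
      ∫⁻ u in X, bQ K ν o u (frontier K \ X) ∂(sig K ν o) := by
  rcases X.eq_empty_or_nonempty with rfl | ⟨x₀, hx₀⟩
  · simp
  have hrD := B.r_le_diam (hXK hx₀)
  have hn' : (1 : ℝ) ≤ n := by exact_mod_cast hn
  have hr := B.rpos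
  have hβ := dβ_pos hn
  set σ := sig K ν o with hσ
  set β := dβ n with hβd
  have hfm : MeasurableSet (frontier K) := isClosed_frontier.measurableSet
  set Y := frontier K \ X with hYd
  have hY : MeasurableSet Y := hfm.diff hX
  have hcov : frontier K ⊆ X ∪ Y := by rw [hYd, Set.union_sdiff_self]; exact Set.subset_union_right
  set q := ∫⁻ u in X, bQ K ν o u Y ∂σ with hq
  have hq' : q = ∫⁻ u in Y, bQ K ν o u X ∂σ := bQ_symm hm X Y
  have mQX := measurable_bQ (K := K) (o := o) hm X
  have mQY := measurable_bQ (K := K) (o := o) hm Y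
  -- The threshold satisfies `12 * t + t = β / 4`, the constant in `overlap`.
  set t := ENNReal.ofReal (β / 52) with ht
  set G := {u | t ≤ bQ K ν o u Y} with hG
  set H := {u | t ≤ bQ K ν o u X} with hH
  have mG : MeasurableSet G := measurableSet_le measurable_const mQY
  have mH : MeasurableSet H := measurableSet_le measurable_const mQX
  have markX : t * σ (X ∩ G) ≤ q := by
    have := mul_meas_ge_le_lintegral (μ := σ.restrict X) mQY t
    rwa [Measure.restrict_apply mG, Set.inter_comm] at this
  have markY : t * σ (Y ∩ H) ≤ q := by
    have := mul_meas_ge_le_lintegral (μ := σ.restrict Y) mQX t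
    rwa [Measure.restrict_apply mH, Set.inter_comm, ← hq'] at this
  set S := X \ G with hSd
  set T := Y \ H with hTd
  have mS : MeasurableSet S := hX.diff mG
  have mT : MeasurableSet T := hY.diff mH
  have hδ : 0 < r / (4096 * n) := by positivity
  have hfar : ∀ a ∈ S, ∀ b ∈ T, r / (4096 * n) ≤ ‖a - b‖ := by
    intro a ha b hb
    by_contra hlt
    push Not at hlt
    have hov := B.overlap hm ho hn (u := a) (v := b) (hXK ha.1) hb.1.1
      (by rw [norm_sub_rev]; exact hlt.le) hX hcov
    have h1 : bQ K ν o a Y < t := not_le.1 ha.2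
    have h2 : bQ K ν o b X < t := not_le.1 hb.2
    have h3 : 12 * bQ K ν o b X + bQ K ν o a Y < 12 * t + t :=
      ENNReal.add_lt_add_of_le_of_lt (ENNReal.mul_ne_top (by simp) h2.ne_top)
        (mul_le_mul_right h2.le _) h1
    have h4 : 12 * t + t = ENNReal.ofReal (β / 4) := by
      rw [ht, show (12 : ℝ≥0∞) = ENNReal.ofReal 12 by simp, ← ENNReal.ofReal_mul (by norm_num),
        ← ENNReal.ofReal_add (by positivity) (by positivity)]
      congr 1; ring
    exact absurd (hov.trans_lt h3) (by rw [h4]; exact lt_irrefl _)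
  have iso := B.isoperimetry hm ho mS mT
    (fun w hw => B.frontier_sub hw.1.1) hδ hfar
  have hnull : σ (frontier K)ᶜ = 0 := B.sig_compl hm ho
  have hUc : (S ∪ T)ᶜ ⊆ (X ∩ G) ∪ (Y ∩ H) ∪ (frontier K)ᶜ := by
    intro w hw
    by_cases hwf : w ∈ frontier K
    · simp only [hSd, hTd, Set.mem_compl_iff, Set.mem_union, Set.mem_sdiff, Set.mem_inter_iff] at hw ⊢
      have := hcov hwf
      simp only [Set.mem_union] at this
      tauto
    · exact Or.inr hwf
  have hz : σ (S ∪ T)ᶜ ≤ σ (X ∩ G) + σ (Y ∩ H) :=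
    calc _ ≤ σ ((X ∩ G) ∪ (Y ∩ H)) + σ (frontier K)ᶜ :=
          (measure_mono hUc).trans (measure_union_le _ _)
      _ ≤ _ := by rw [hnull, add_zero]; exact measure_union_le _ _
  have he : ∫⁻ u in T, bQ K ν o u Tᶜ ∂σ ≤ q + ENNReal.ofReal (β / 2) * σ (S ∪ T)ᶜ := by
    have hsub : Tᶜ ⊆ X ∪ (S ∪ T)ᶜ := by
      intro w hw
      simp only [hSd, Set.mem_compl_iff, Set.mem_union, Set.mem_sdiff] at hw ⊢
      tauto
    calc _ ≤ ∫⁻ u in T, (bQ K ν o u X + bQ K ν o u (S ∪ T)ᶜ) ∂σ :=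
          lintegral_mono fun u => (lintegral_mono_set hsub).trans (lintegral_union_le _ _ _)
      _ = (∫⁻ u in T, bQ K ν o u X ∂σ) + ∫⁻ u in T, bQ K ν o u (S ∪ T)ᶜ ∂σ :=
          lintegral_add_left mQX _
      _ ≤ q + ∫⁻ u in (S ∪ T)ᶜ, ENNReal.ofReal (β / 2) ∂σ := by
          refine add_le_add ?_ ?_
          · rw [hq']; exact lintegral_mono_set Set.sdiff_subset
          · rw [bQ_symm hm]
            refine lintegral_mono_ae ((ae_restrict_of_ae (B.ae_frontier hm ho)).mono fun u hu => ?_)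
            rw [← B.bQ_univ hm ho hu]
            exact lintegral_mono_set (Set.subset_univ _)
      _ = _ := by rw [setLIntegral_const]
  have hqfin : q ≠ ⊤ := by
    refine ne_top_of_le_ne_top (b := ENNReal.ofReal (β / 2) * σ X)
      (ENNReal.mul_ne_top (by simp) (measure_ne_top _ _)) ?_
    rw [← setLIntegral_const]
    refine lintegral_mono_ae ((ae_restrict_of_ae (B.ae_frontier hm ho)).mono fun u hu => ?_)
    rw [← B.bQ_univ hm ho hu]
    exact lintegral_mono_set (Set.subset_univ _)
  have hefin : ∫⁻ u in T, bQ K ν o u Tᶜ ∂σ ≠ ⊤ :=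
    ne_top_of_le_ne_top (ENNReal.add_ne_top.2 ⟨hqfin, ENNReal.mul_ne_top (by simp)
      (measure_ne_top _ _)⟩) he
  have hsX : σ X = σ S + σ (X ∩ G) := by rw [add_comm, measure_inter_add_sdiff X mG]
  have hsY : σ Y = σ T + σ (Y ∩ H) := by rw [add_comm, measure_inter_add_sdiff Y mH]
  have hV : σ Set.univ = σ X + σ Y := by
    have h1 : σ Set.univ = σ (frontier K) := by
      rw [← measure_add_measure_compl hfm, hnull, add_zero]
    rw [h1, hYd, ← measure_inter_add_sdiff (frontier K) hX, Set.inter_eq_right.2 hXK]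
  rw [hV] at iso
  generalize ∫⁻ u in T, bQ K ν o u Tᶜ ∂σ = e at *
  have fx := measure_ne_top σ S
  have fy := measure_ne_top σ T
  have fz := measure_ne_top σ (S ∪ T)ᶜ
  have fx1 := measure_ne_top σ (X ∩ G)
  have fy1 := measure_ne_top σ (Y ∩ H)
  have fX := measure_ne_top σ X
  have fY := measure_ne_top σ Y
  clear_value q
  clear hnull hUc
  generalize σ S = x at *
  generalize σ T = y at *
  generalize σ (S ∪ T)ᶜ = z at *
  generalize σ (X ∩ G) = x1 at *
  generalize σ (Y ∩ H) = y1 at *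
  generalize σ X = a at *
  generalize σ Y = b at *
  lift x to ℝ≥0 using fx
  lift y to ℝ≥0 using fy
  lift z to ℝ≥0 using fz
  lift x1 to ℝ≥0 using fx1
  lift y1 to ℝ≥0 using fy1
  lift a to ℝ≥0 using fX
  lift b to ℝ≥0 using fY
  lift q to ℝ≥0 using hqfin
  lift e to ℝ≥0 using hefin
  have hD : 0 ≤ diam K := diam_nonneg
  have hZ : 1 ≤ n * diam K / r := by
    rw [le_div_iff₀ hr]; nlinarith
  have hδ' : 16 * diam K / (r / (4096 * n)) + 1 = 16 * (4096 * (n * diam K / r)) + 1 := by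
    field_simp
  rw [hδ'] at iso
  generalize n * diam K / r = Z at *
  have toR : ∀ {c : ℝ} {p s : ℝ≥0}, 0 ≤ c → ENNReal.ofReal c * p ≤ s → c * p ≤ s := by
    intro c p s hc h
    rw [← ENNReal.ofReal_coe_nnreal, ← ENNReal.ofReal_mul hc, ← ENNReal.ofReal_coe_nnreal] at h
    exact (ENNReal.ofReal_le_ofReal_iff s.2).1 h
  have hβ2 : ENNReal.ofReal (β / 2) = ((β / 2).toNNReal : ℝ≥0∞) := rfl
  have r1 : (a : ℝ) = x + x1 := by exact_mod_cast hsX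
  have r2 : (b : ℝ) = y + y1 := by exact_mod_cast hsY
  have r3 : (a : ℝ) ≤ b := by exact_mod_cast hle
  have r4 : (z : ℝ) ≤ x1 + y1 := by exact_mod_cast hz
  have r5 : (e : ℝ) ≤ q + β / 2 * z := by
    rw [hβ2] at he
    have : (e : ℝ) ≤ q + (β / 2).toNNReal * z := by exact_mod_cast he
    rwa [Real.coe_toNNReal _ (by positivity)] at this
  have r6 : β / 4 * (x * y) ≤ (a + b) * ((16 * (4096 * Z) + 1) * (β * z) + 2 * e) := by
    rw [show ENNReal.ofReal (β / 4) = ((β / 4).toNNReal : ℝ≥0∞) from rfl,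
      show ENNReal.ofReal β = (β.toNNReal : ℝ≥0∞) from rfl,
      show ENNReal.ofReal (16 * (4096 * Z) + 1) = ((16 * (4096 * Z) + 1).toNNReal : ℝ≥0∞) from rfl]
      at iso
    have : ((β / 4).toNNReal : ℝ) * (x * y) ≤
      (a + b) * (((16 * (4096 * Z) + 1).toNNReal : ℝ) * (β.toNNReal * z) + 2 * e) := by
      exact_mod_cast iso
    rwa [Real.coe_toNNReal _ (by positivity), Real.coe_toNNReal _ (by positivity),
      Real.coe_toNNReal _ (by positivity)] at this
  have fin := flow_arith hβ x.2 x1.2 y1.2 q.2 hZ r1 r2 r3 (toR (by positivity) markX)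
    (toR (by positivity) markY) r4 r5 r6
  rw [← ENNReal.ofReal_coe_nnreal, ← ENNReal.ofReal_mul hβ.le, ← ENNReal.ofReal_coe_nnreal,
    ← ENNReal.ofReal_mul (by positivity)]
  exact ENNReal.ofReal_le_ofReal fin

end Body

/-! ### The stochastic billiard chain -/

/-- The density in terms of angles agrees with `bker`; both sides vanish for `u = v`. -/
lemma cosAngle_eq_bker {n : ℕ} (hn : 1 ≤ n) (ν : Euc n → Euc n) (u v : Euc n) :
    cosAngle ν u v * cosAngle ν v u / ‖u - v‖ ^ (n - 1) = bker ν u v := by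
  obtain ⟨m, rfl⟩ : ∃ m, n = m + 1 := ⟨n - 1, by omega⟩
  rw [cosAngle, cosAngle, bker, norm_sub_rev v u, div_mul_div_comm, div_div]
  congr 1
  simp only [Nat.add_sub_cancel]
  ring

/-- Up to the factor `w` fixed by the normalisation, the transition kernel is `bQ`, the kernel
computed with the measure `sig`. -/
lemma kernel_eq {n : ℕ} {K : Set (Euc n)} {ν : Euc n → Euc n} {r : ℝ} {o : Euc n} (hn : 1 ≤ n)
    (B : Body K ν r) (ho : o ∈ interior K) {P : Euc n → Measure (Euc n)}
    (hP : IsBilliardKernel K ν P) (hne : (frontier K).Nonempty) {κ : ℝ≥0∞}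
    (hκ : surf K = κ • sig K ((frontier K).indicator ν) o) :
    ∃ w : ℝ≥0∞, w * ENNReal.ofReal (dβ n / 2) = 1 ∧
      ∀ u ∈ frontier K, ∀ T, MeasurableSet T →
        P u T = w * bQ K ((frontier K).indicator ν) o u T := by
  set ν' := (frontier K).indicator ν with hν'
  have B' : Body K ν' r := B.indicator
  have hm : Measurable ν' := B.measurable_indicator
  set k := Real.pi ^ (((n : ℝ) - 1) / 2) /
    (Real.Gamma (((n : ℝ) + 1) / 2) * (surf K Set.univ).toReal) with hk
  have hk0 : 0 ≤ k := by
    have : 0 < Real.Gamma (((n : ℝ) + 1) / 2) := Real.Gamma_pos_of_pos (by positivity)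
    positivity
  have main : ∀ u ∈ frontier K, ∀ T, MeasurableSet T →
      P u T = ENNReal.ofReal k * κ * bQ K ν' o u T := by
    intro u hu T hT
    rw [(hP u hu).2 T hT, ← hk, hκ, Measure.restrict_smul, lintegral_smul_measure, bQ, smul_eq_mul,
      mul_comm (ENNReal.ofReal k), mul_assoc,
      ← lintegral_const_mul _ (Measurable.ennreal_ofReal (measurable_bker hm u))]
    congr 1
    refine lintegral_congr_ae ((ae_restrict_of_ae (B'.ae_frontier hm ho)).mono fun v hv => ?_)
    simp only
    rw [cosAngle_eq_bker hn, ENNReal.ofReal_mul hk0]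
    simp only [bker, hν', Set.indicator_of_mem hu, Set.indicator_of_mem hv]
  obtain ⟨u, hu⟩ := hne
  refine ⟨ENNReal.ofReal k * κ, ?_, main⟩
  have := (hP u hu).1
  rw [← B'.bQ_univ hm ho hu, ← main u hu _ MeasurableSet.univ, measure_univ]

/-- **Conductance lower bound.** There is a universal constant `c > 0` such that the
conductance of the stochastic billiard chain on the boundary of a convex body with
diameter `D` and curvature bound `C` is at least `c/(C n D)`: for every measurable
`A ⊆ ∂K` with `0 < π(A) < 1/2`, one has `∫_A P_u(∂K∖A) dπ(u) ≥ (c/(C n D)) π(A)`. -/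
theorem billiard_conductance_lower_bound :
    ∃ c : ℝ, 0 < c ∧
      ∀ (n : ℕ) (K : Set (Euc n)) (C D : ℝ) (ν : Euc n → Euc n)
        (P : Euc n → Measure (Euc n)),
        IsConvexBody K →
        0 < C → CurvatureBoundedBy K C →
        D = Metric.diam K →
        IsInwardNormal K ν →
        IsBilliardKernel K ν P →
        ∀ A : Set (Euc n), A ⊆ frontier K → MeasurableSet A →
          0 < unifBoundary K A → unifBoundary K A < 1 / 2 →
          ENNReal.ofReal (c / (C * n * D)) * unifBoundary K A ≤
            ∫⁻ u in A, P u (frontier K \ A) ∂(unifBoundary K) := by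
  refine ⟨1 / 120000000, by norm_num, ?_⟩
  intro n K C D ν P hK hC hcurv hD hν hP A hA hAm hpos hhalf
  have hAne : A.Nonempty := by
    rw [Set.nonempty_iff_ne_empty]; rintro rfl; simp at hpos
  obtain ⟨x₀, hx₀⟩ := hAne
  have hx₀f := hA hx₀
  -- In dimension `0` the boundary is empty.
  rcases Nat.eq_zero_or_pos n with rfl | hn
  · have h1 : K = Set.univ := Subsingleton.eq_univ_of_nonempty (hK.2.2.mono interior_subset)
    rw [h1, frontier_univ] at hx₀f
    exact hx₀f.elim
  have B := Body.of_hyp hK hC hcurv hν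
  obtain ⟨o, ho⟩ := hK.2.2
  set ν' := (frontier K).indicator ν with hν'
  have B' : Body K ν' (1 / C) := B.indicator
  have hm : Measurable ν' := B.measurable_indicator
  obtain ⟨κ, hκ0, hκt, hκ⟩ := B'.surf_eq hn hm ho
  set σ := sig K ν' o with hσ
  -- An infinite boundary measure would make the normalising factor, hence the kernel, vanish.
  have hMt : surf K Set.univ ≠ ⊤ := by
    intro h
    obtain ⟨hp, hf⟩ := hP x₀ hx₀f
    have := hf Set.univ MeasurableSet.univ
    rw [h, measure_univ] at this
    simp at this
  have hσfin : IsFiniteMeasure σ := by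
    refine ⟨lt_top_iff_ne_top.2 fun h => hMt ?_⟩
    rw [hκ, Measure.smul_apply, h, smul_eq_mul, ENNReal.mul_top hκ0]
  obtain ⟨w, hw, hPw⟩ := kernel_eq hn B ho hP ⟨x₀, hx₀f⟩ hκ
  have hfm : MeasurableSet (frontier K) := isClosed_frontier.measurableSet
  have hYm : MeasurableSet (frontier K \ A) := hfm.diff hAm
  set M := surf K Set.univ with hM
  have hM0 : M ≠ 0 := fun h => hpos.ne' (by
    have : surf K A = 0 := measure_mono_null (Set.subset_univ _) h
    rw [unifBoundary, Measure.smul_apply, this, smul_zero])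
  have hsum : surf K A + surf K (frontier K \ A) = M := by
    have h1 : M = surf K (frontier K) := by
      rw [hM, surf, Measure.restrict_apply_univ, Measure.restrict_apply_self]
    rw [h1, ← measure_inter_add_sdiff (frontier K) hAm, Set.inter_eq_right.2 hA]
  have hsA : surf K A ≠ ⊤ := ne_top_of_le_ne_top hMt (measure_mono (Set.subset_univ _))
  have hle : σ A ≤ σ (frontier K \ A) := by
    have h1 : surf K A ≤ M * (1 / 2) := by
      have : surf K A = M * (M⁻¹ * surf K A) := by
        rw [← mul_assoc, ENNReal.mul_inv_cancel hM0 hMt, one_mul]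
      rw [this]
      exact mul_le_mul_right hhalf.le M
    have h2 : surf K A + surf K A ≤ surf K A + surf K (frontier K \ A) := by
      rw [hsum]
      refine (add_le_add h1 h1).trans_eq ?_
      rw [← mul_add, one_div, ENNReal.inv_two_add_inv_two, mul_one]
    have h3 := (ENNReal.add_le_add_iff_left hsA).1 h2
    rw [hκ, Measure.smul_apply, Measure.smul_apply, smul_eq_mul, smul_eq_mul] at h3
    exact (ENNReal.mul_le_mul_iff_right hκ0 hκt).1 h3
  have hflow := B'.flow hm ho hn hAm hA hle
  set q := ∫⁻ u in A, bQ K ν' o u (frontier K \ A) ∂σ with hq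
  have hr : ∫⁻ u in A, P u (frontier K \ A) ∂(unifBoundary K) = M⁻¹ * (κ * (w * q)) := by
    rw [unifBoundary, hκ, Measure.restrict_smul, Measure.restrict_smul, lintegral_smul_measure,
      lintegral_smul_measure, hq, ← lintegral_const_mul _ (Body.measurable_bQ hm _), smul_eq_mul,
      smul_eq_mul, ← hκ]
    congr 2
    exact setLIntegral_congr_fun hAm fun u hu => hPw u (hA hu) _ hYm
  have hl : unifBoundary K A = M⁻¹ * (κ * σ A) := by
    rw [unifBoundary, Measure.smul_apply, smul_eq_mul, ← hM, hκ, Measure.smul_apply, smul_eq_mul]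
  rw [hr, hl]
  have hDr := B'.r_le_diam hx₀f
  rw [← hD] at hDr hflow
  have hDpos : 0 < D := (by positivity : 0 < 1 / C).trans_le hDr
  have hn' : (0 : ℝ) < n := by exact_mod_cast hn
  have hβ := dβ_pos hn
  have key : ENNReal.ofReal (1 / 120000000 / (C * n * D)) * σ A ≤ w * q := by
    set Z := 240000000 * (n * D / (1 / C)) with hZ
    have hZ0 : 0 < Z := by positivity
    have e1 : 1 / 120000000 / (C * n * D) = 2 * Z⁻¹ := by rw [hZ]; field_simp; norm_num
    calc ENNReal.ofReal (1 / 120000000 / (C * n * D)) * σ A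
        = (w * ENNReal.ofReal (dβ n / 2)) * (ENNReal.ofReal (2 * Z⁻¹) * σ A) := by
          rw [hw, one_mul, e1]
      _ = w * (ENNReal.ofReal Z⁻¹ * (ENNReal.ofReal (dβ n) * σ A)) := by
          have : ENNReal.ofReal (dβ n / 2) * ENNReal.ofReal (2 * Z⁻¹) =
              ENNReal.ofReal Z⁻¹ * ENNReal.ofReal (dβ n) := by
            rw [← ENNReal.ofReal_mul (by positivity), ← ENNReal.ofReal_mul (by positivity)]
            congr 1; ring
          rw [mul_assoc, ← mul_assoc (ENNReal.ofReal (dβ n / 2)), this, mul_assoc]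
      _ ≤ w * (ENNReal.ofReal Z⁻¹ * (ENNReal.ofReal Z * q)) :=
          mul_le_mul_right (mul_le_mul_right hflow _) _
      _ = w * q := by
          rw [← mul_assoc (ENNReal.ofReal Z⁻¹), ← ENNReal.ofReal_mul (by positivity),
            inv_mul_cancel₀ hZ0.ne', ENNReal.ofReal_one, one_mul]
  calc _ = M⁻¹ * (κ * (ENNReal.ofReal (1 / 120000000 / (C * n * D)) * σ A)) := by ring
    _ ≤ _ := mul_le_mul_right (mul_le_mul_right key _) _

end
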